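/- For any permutation w, the Schubert polynomial satisfies 𝔖_w = Σ_{ρ ∈ YR(w)} κ_{des(ρ)}, where YR(w) is the set of Yamanouchi reduced words for w. -/

import Mathlib

open List

namespace EG

/-! ## Words, permutations, and reduced words.

A word is a list of positive natural numbers `(ρ_ℓ, …, ρ_1)`, read left to right,
representing the product of simple transpositions `s_{ρ_ℓ} ⋯ s_{ρ_1}`. -/

/-- The permutation of `ℕ` represented by a word. -/
def toPerm (ρ : List ℕ) : Equiv.Perm ℕ :=
  (ρ.map fun i => Equiv.swap i (i + 1)).prod

/-- `ρ` is a reduced word: its letters are positive, and no shorter word represents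
the same permutation. -/
def IsReducedWord (ρ : List ℕ) : Prop :=
  (∀ i ∈ ρ, 1 ≤ i) ∧
    ∀ σ : List ℕ, (∀ i ∈ σ, 1 ≤ i) → toPerm σ = toPerm ρ → ρ.length ≤ σ.length

/-- `ρ` is a reduced word for the permutation `w`. -/
def ReducedWordFor (ρ : List ℕ) (w : Equiv.Perm ℕ) : Prop :=
  IsReducedWord ρ ∧ toPerm ρ = w

/-! ## Elementary Coxeter–Knuth relations. -/

/-- The elementary Coxeter–Knuth move on a consecutive triple
`(a, b, c) = (ρ_{i+1}, ρ_i, ρ_{i−1})`. -/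
def ckTriple (a b c : ℕ) : ℕ × ℕ × ℕ :=
  if a = c then (b, a, b)
  else if (c > a ∧ a > b) ∨ (c < a ∧ a < b) then (a, c, b)
  else if (a > c ∧ c > b) ∨ (a < c ∧ c < b) then (b, a, c)
  else (a, b, c)

/-- The elementary Coxeter–Knuth relation `𝔡_i`, acting on the letters
`ρ_{i+1} ρ_i ρ_{i−1}` of a word `ρ = (ρ_ℓ, …, ρ_1)` (indexed from the right). -/
def ckMove (i : ℕ) (ρ : List ℕ) : List ℕ :=
  if 2 ≤ i ∧ i + 1 ≤ ρ.length then
    let p := ρ.length - i - 1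
    let t := ckTriple (ρ.getD p 0) (ρ.getD (p + 1) 0) (ρ.getD (p + 2) 0)
    ((ρ.set p t.1).set (p + 1) t.2.1).set (p + 2) t.2.2
  else ρ

/-- Two words are Coxeter–Knuth equivalent if one is obtained from the other by a
finite sequence of elementary Coxeter–Knuth relations. -/
def CKEquiv (ρ σ : List ℕ) : Prop :=
  ∃ ms : List ℕ, σ = ms.foldl (fun w i => ckMove i w) ρ

/-! ## Run decompositions and descent tableaux. -/

/-- Split a list into maximal blocks, breaking between consecutive letters `a`, `b`
whenever `brk a b` holds. -/
def splitWhen (brk : ℕ → ℕ → Bool) : List ℕ → List (List ℕ)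
  | [] => []
  | [a] => [[a]]
  | a :: b :: rest =>
    match splitWhen brk (b :: rest) with
    | r :: rs => if brk a b then [a] :: r :: rs else (a :: r) :: rs
    | [] => [[a]]

/-- The run decomposition of a word into maximal strictly increasing runs, listed
left to right (so the list is `[ρ⁽ᵏ⁾, …, ρ⁽¹⁾]`, with `ρ⁽¹⁾` the final run). -/
def runs (ρ : List ℕ) : List (List ℕ) := splitWhen (fun a b => decide (b ≤ a)) ρ

/-- The rows of the descent tableau `𝔻(ρ)`, listed bottom to top:
`[ρ⁽¹⁾, …, ρ⁽ᵏ⁾]`. -/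
def rowsOf (ρ : List ℕ) : List (List ℕ) := (runs ρ).reverse

/-- The row reading word of a tableau whose rows are listed bottom to top:
read rows left to right, starting with the top row. -/
def wordOf (R : List (List ℕ)) : List ℕ := R.reverse.flatten

/-- The descent composition `Des(ρ) = (|ρ⁽¹⁾|, …, |ρ⁽ᵏ⁾|)`. -/
def DesComp (ρ : List ℕ) : List ℕ := (rowsOf ρ).map List.length

/-- A list of rows (bottom to top) is an increasing Young tableau of partition shape:
rows strictly increase left to right, shape is a partition, and columns strictly
increase bottom to top. -/
def IsIncreasingYoungRows (R : List (List ℕ)) : Prop :=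
  (∀ r ∈ R, r.Chain' (· < ·)) ∧
    R.Chain' (fun lo hi => hi.length ≤ lo.length ∧
      ∀ j < hi.length, lo.getD j 0 < hi.getD j 0)

/-! ## The drop map on a pair of increasing rows. -/

/-- Increment the first `n` letters of a list by `1`. -/
def incFirst : ℕ → List ℕ → List ℕ
  | 0, l => l
  | _ + 1, [] => []
  | n + 1, a :: l => (a + 1) :: incFirst n l

/-- Decrement the first `n` letters of a list by `1`. -/
def decFirst : ℕ → List ℕ → List ℕ
  | 0, l => l
  | _ + 1, [] => []
  | n + 1, a :: l => (a - 1) :: decFirst n l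

/-- `bCount t1 i [s_i, s_{i+1}, …]` is the largest `b` with `t1 = s_j + j` for all
`i ≤ j < i + b`. -/
def bCount (t1 : ℕ) : ℕ → List ℕ → ℕ
  | _, [] => 0
  | i, s :: rest => if t1 = s + i then bCount t1 (i + 1) rest + 1 else 0

/-- Index of the first failure `τ_j ≤ σ_j` in the drop alignment of `σ` below `τ`. -/
def failIdx (τ σ : List ℕ) : Option ℕ :=
  (τ.zip σ).findIdx? (fun p => decide (p.1 ≤ p.2))

/-- Fueled computation of the drop of the row `σ` below the row `τ`, returning the
new pair (top row, bottom row). -/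
def dropPairAux : ℕ → List ℕ → List ℕ → List ℕ × List ℕ
  | 0, τ, σ => (τ, σ)
  | fuel + 1, τ, σ =>
    match failIdx τ σ with
    | none =>
      if σ.length < τ.length then (τ.take σ.length, σ ++ τ.drop σ.length)
      else (τ, σ)
    | some j =>
      let x := τ.getD j 0
      let τr := τ.drop (j + 1)
      let σr := σ.drop j
      let res := dropPairAux fuel τr σr
      let l1 := (failIdx τr σr).getD τr.length
      let b := if l1 = 0 then 0
               else if x + 1 = τr.headD 0 then bCount (τr.headD 0) 1 (σr.take l1) else 0
      (τ.take j ++ res.1, σ.take j ++ x :: incFirst b res.2)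

/-- The drop of the row `σ` below the row `τ`: the pair (new top row, new bottom row). -/
def dropPair (τ σ : List ℕ) : List ℕ × List ℕ := dropPairAux (τ.length + 1) τ σ

/-- The word `drop(τσ)`. -/
def dropW (τ σ : List ℕ) : List ℕ := (dropPair τ σ).1 ++ (dropPair τ σ).2

/-- Apply `drop` to rows `i` and `i+1` (1-indexed from the bottom) of a list of rows. -/
def dropAt : ℕ → List (List ℕ) → List (List ℕ)
  | 1, σr :: τr :: rest => (dropPair τr σr).2 :: (dropPair τr σr).1 :: rest
  | n + 2, r :: R => r :: dropAt (n + 1) R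
  | _, R => R

/-- The map `drop_i` on words: replace the runs `ρ⁽ⁱ⁺¹⁾ ρ⁽ⁱ⁾` of the run
decomposition by `drop(ρ⁽ⁱ⁺¹⁾ ρ⁽ⁱ⁾)`. -/
def dropWordAt (i : ℕ) (ρ : List ℕ) : List ℕ := wordOf (dropAt i (rowsOf ρ))

/-- One sweep of all the maps `drop_i`. -/
def sweepDrop (ρ : List ℕ) : List ℕ :=
  (List.range (runs ρ).length).foldl (fun w i => dropWordAt (i + 1) w) ρ

/-- The drop `drop(ρ)` of a word: repeatedly apply the maps `drop_i` until reaching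
the fixed point (an increasing Young tableau). -/
def dropFull (ρ : List ℕ) : List ℕ := sweepDrop^[ρ.length * ρ.length + 1] ρ

/-! ## The lift map on a pair of increasing rows. -/

/-- `bCount2 x i τblk σblk` is the largest `b` with `τ_j = σ_j = x + j` for all
`i ≤ j < i + b`. -/
def bCount2 (x : ℕ) : ℕ → List ℕ → List ℕ → ℕ
  | i, t :: ts, s :: ss =>
      if t = x + i ∧ s = x + i then bCount2 x (i + 1) ts ss + 1 else 0
  | _, _, _ => 0

/-- Index of the first failure (from the right) in the lift alignment of `τ` above
`σ`: here both rows are given reversed. -/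
def liftFailIdx (τR σR : List ℕ) : Option ℕ :=
  (τR.zip σR).findIdx? (fun p => decide (p.1 < p.2))

/-- Fueled computation of the lift of the row `τ` above the row `σ`, on reversed
rows; returns the new (top row, bottom row), reversed. -/
def liftPairAuxR : ℕ → List ℕ → List ℕ → List ℕ × List ℕ
  | 0, τR, σR => (τR, σR)
  | fuel + 1, τR, σR =>
    match liftFailIdx τR σR with
    | none => (τR, σR)
    | some j =>
      let x := σR.getD j 0
      let τr := τR.drop j
      let σr := σR.drop (j + 1)
      let res := liftPairAuxR fuel τr σr
      let τblk := (τR.take j).reverse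
      let σblk := (σR.take j).reverse
      let b := if σblk.headD 0 = x + 1 then bCount2 x 1 τblk σblk else 0
      (τR.take j ++ x :: res.1, (decFirst b σblk).reverse ++ res.2)

/-- Check that the lift alignment leaves no unmatched letters of `σ` (no letter of
`σ` other than the `x_j`'s lacks a letter of `τ` above it); when some letter is
left over, the lift acts trivially. -/
def liftOkAux : ℕ → List ℕ → List ℕ → Bool
  | 0, _, _ => true
  | fuel + 1, τR, σR =>
    match liftFailIdx τR σR with
    | none => σR.length ≤ τR.length
    | some j => liftOkAux fuel (τR.drop j) (σR.drop (j + 1))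

/-- The lift of the row `τ` above the row `σ`: the pair (new top row, new bottom row). -/
def liftPair (τ σ : List ℕ) : List ℕ × List ℕ :=
  if liftOkAux (σ.length + 1) τ.reverse σ.reverse then
    let r := liftPairAuxR (σ.length + 1) τ.reverse σ.reverse
    (r.1.reverse, r.2.reverse)
  else (τ, σ)

/-- The word `lift(τσ)`. -/
def liftW (τ σ : List ℕ) : List ℕ := (liftPair τ σ).1 ++ (liftPair τ σ).2

/-- Apply `lift` to rows `i` and `i+1` (1-indexed from the bottom) of a list of rows. -/
def liftAt : ℕ → List (List ℕ) → List (List ℕ)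
  | 1, σr :: τr :: rest => (liftPair τr σr).2 :: (liftPair τr σr).1 :: rest
  | n + 2, r :: R => r :: liftAt (n + 1) R
  | _, R => R

/-- The lifting sequence `lift_{[i,j]} = lift_j ∘ ⋯ ∘ lift_i`. -/
def liftSeq (i j : ℕ) (T : List (List ℕ)) : List (List ℕ) :=
  (List.range' i (j + 1 - i)).foldl (fun t k => liftAt k t) T

/-- Fueled check that `lift_i, lift_{i+1}, …` all act faithfully, for `n` steps. -/
def faithfulAux : ℕ → ℕ → List (List ℕ) → Bool
  | 0, _, _ => false
  | n + 1, i, T =>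
    let T' := liftAt i T
    if T' = T then false
    else if n = 0 then true
    else faithfulAux n (i + 1) T'

/-- The lifting sequence `lift_{[i,j]}` acts faithfully on `T`. -/
def faithfulSeq (i j : ℕ) (T : List (List ℕ)) : Bool :=
  if i ≤ j then faithfulAux (j + 1 - i) i T else false

/-- Find the canonical move: the maximal `j` admitting some `i ≤ j` with
`lift_{[i,j]}` faithful, together with the minimal such `i`. -/
def findMove (T : List (List ℕ)) : Option (ℕ × ℕ) :=
  (List.range (T.length + 1)).reverse.findSome? (fun j =>
    ((List.range' 1 j).find? (fun i => faithfulSeq i j T)).map (fun i => (i, j)))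

/-- Fueled canonical lifting loop. -/
def liftCanonAux : ℕ → List (List ℕ) → List (List ℕ)
  | 0, T => T
  | fuel + 1, T =>
    match findMove T with
    | none => T
    | some ij => liftCanonAux fuel (liftSeq ij.1 ij.2 T)

/-- The canonical lifting algorithm applied to a tableau (rows bottom to top). -/
def liftCanon (T : List (List ℕ)) : List (List ℕ) :=
  liftCanonAux (T.flatten.length * T.length + 1) T

/-- The word `lift(ρ)`: the row reading word of the canonical lift of `𝔻(ρ)`. -/
def liftWord (ρ : List ℕ) : List ℕ := wordOf (liftCanon (rowsOf ρ))

/-! ## Weak descent compositions. -/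

/-- From the list of minima `[r_k, …, r_1]` of the runs (topmost first), compute
`[r̂_k, …, r̂_1]` where `r̂_k = r_k` and `r̂_i = min (r_i, r̂_{i+1} − 1)`. -/
def hatMins (L : List ℤ) : List ℤ :=
  (L.foldl (fun (acc : List ℤ × Option ℤ) r =>
    let v := match acc.2 with
      | none => r
      | some p => min r (p - 1)
    (acc.1 ++ [v], some v)) ([], none)).1

/-- Build the weak composition with value `lens_i` in position `hs_i` and `0`
elsewhere. -/
def buildWeakComp (hs : List ℤ) (lens : List ℕ) : List ℕ :=
  (List.range (hs.headD 0).toNat).map (fun p =>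
    match (hs.zip lens).find? (fun q => decide (q.1 = (p : ℤ) + 1)) with
    | some q => q.2
    | none => 0)

/-- The weak descent composition determined by the minima and lengths of the runs
(topmost run first); `none` means virtual. -/
def desFromBlocks (mins : List ℤ) (lens : List ℕ) : Option (List ℕ) :=
  let hs := hatMins mins
  if hs = [] then some []
  else if hs.getLastD 0 ≤ 0 then none
  else some (buildWeakComp hs lens)

/-- The weak descent composition `des(ρ)` of a word; `none` means `ρ` is virtual. -/
def desWord (ρ : List ℕ) : Option (List ℕ) :=
  desFromBlocks ((runs ρ).map (fun r => ((r.headD 0 : ℕ) : ℤ)))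
    ((runs ρ).map List.length)

/-- Prefix-sum dominance of weak compositions: `domLe a b` means
`a_1 + ⋯ + a_k ≤ b_1 + ⋯ + b_k` for all `k` (i.e. `b ≥ a`). -/
def domLe (a b : List ℕ) : Prop := ∀ k, ((a.take k).sum ≤ (b.take k).sum)

/-- A reduced word is Yamanouchi if it is non-virtual and its weak descent
composition is dominated by that of every non-virtual Coxeter–Knuth equivalent word. -/
def IsYam (ρ : List ℕ) : Prop :=
  IsReducedWord ρ ∧ ∃ d, desWord ρ = some d ∧
    ∀ σ e, CKEquiv ρ σ → desWord σ = some e → domLe d e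

/-! ## Quasisymmetric functions, slide polynomials, and generating functions.

We model formal power series in variables `x_1, x_2, …` (indexed by `ℕ`, with
variable `i` standing for `x_{i+1}`) as functions `(ℕ →₀ ℕ) → ℤ` recording
coefficients of monomials. -/

/-- `β` refines `α`: `β` splits into consecutive blocks with sums the parts of `α`. -/
def Refines (β α : List ℕ) : Prop :=
  ∃ blocks : List (List ℕ), blocks.flatten = β ∧
    List.Forall₂ (fun blk a => blk.sum = a) blocks α

/-- The flattening of a weak composition given as a finitely supported exponent
vector: the list of its nonzero values, in order. -/
def flatOf (b : ℕ →₀ ℕ) : List ℕ :=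
  ((List.range (b.support.sup id + 1)).map b).filter (fun x => decide (x ≠ 0))

open Classical in
/-- The fundamental quasisymmetric function `F_α`. -/
noncomputable def Fqs (α : List ℕ) : (ℕ →₀ ℕ) → ℤ :=
  fun b => if Refines (flatOf b) α then 1 else 0

open Classical in
/-- The fundamental slide polynomial `𝔉_a` of a weak composition `a`. -/
noncomputable def FSlide (a : List ℕ) : (ℕ →₀ ℕ) → ℤ :=
  fun b =>
    if (∀ i, a.length ≤ i → b i = 0) ∧
       (∀ k, (a.take k).sum ≤ ∑ i ∈ Finset.range k, b i) ∧
       Refines (flatOf b) (a.filter (fun x => decide (x ≠ 0))) then 1 else 0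

/-- `𝔉` extended to virtual indices by `𝔉_∅ = 0`. -/
noncomputable def FSlideO : Option (List ℕ) → (ℕ →₀ ℕ) → ℤ
  | none => 0
  | some a => FSlide a

/-- The Stanley symmetric function `S_w`. -/
noncomputable def StanleySym (w : Equiv.Perm ℕ) : (ℕ →₀ ℕ) → ℤ :=
  ∑ᶠ ρ ∈ {ρ : List ℕ | ReducedWordFor ρ w}, Fqs (DesComp ρ)

/-- The Schubert polynomial `𝔖_w`. -/
noncomputable def Schubert (w : Equiv.Perm ℕ) : (ℕ →₀ ℕ) → ℤ :=
  ∑ᶠ ρ ∈ {ρ : List ℕ | ReducedWordFor ρ w}, FSlideO (desWord ρ)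

/-! ## Standard Young tableaux and Schur functions. -/

/-- The (bottom-to-top) row index of the row of `T` containing the entry `e`. -/
def rowOf (T : List (List ℕ)) (e : ℕ) : ℕ := T.findIdx (fun r => r.contains e)

/-- The column index of the entry `e` in `T`. -/
def colOf (T : List (List ℕ)) (e : ℕ) : ℕ :=
  (T.getD (rowOf T e) []).findIdx (fun z => z == e)

/-- `T` (rows listed bottom to top) is a standard Young tableau. -/
def IsSYT (T : List (List ℕ)) : Prop :=
  (∀ r ∈ T, r.Chain' (· < ·)) ∧
    T.Chain' (fun lo hi => hi.length ≤ lo.length ∧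
      ∀ j < hi.length, lo.getD j 0 < hi.getD j 0) ∧
    [] ∉ T ∧
    T.flatten.Perm (List.range' 1 T.flatten.length)

/-- The descent composition of a standard Young tableau: `i` is a descent when
`i+1` lies weakly left of `i`. -/
def sytDes (T : List (List ℕ)) : List ℕ :=
  (splitWhen (fun a _ => decide (colOf T (a + 1) ≤ colOf T a))
    (List.range' 1 T.flatten.length)).map List.length

/-- The Schur function `s_λ`, for a partition `λ` given as the list of row lengths
bottom to top. -/
noncomputable def Schur (lam : List ℕ) : (ℕ →₀ ℕ) → ℤ :=
  ∑ᶠ T ∈ {T : List (List ℕ) | IsSYT T ∧ T.map List.length = lam}, Fqs (sytDes T)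

/-! ## Standard key tableaux and Demazure characters. -/

/-- `T` is a standard key tableau of shape the weak composition `a`: rows (listed
bottom to top, with row `i` of length `a_i`, possibly `0`) strictly decrease left to
right, the entries are `1, …, |a|`, and whenever an entry `i` lies above an entry
`k` in the same column with `i < k`, some entry `j` right of `k` satisfies `i < j`. -/
def IsSKT (a : List ℕ) (T : List (List ℕ)) : Prop :=
  T.map List.length = a ∧
    (∀ r ∈ T, r.Chain' (· > ·)) ∧
    T.flatten.Perm (List.range' 1 a.sum) ∧
    ∀ lo hi, lo < hi → hi < T.length →
      ∀ c, c < (T.getD hi []).length → c < (T.getD lo []).length →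
        (T.getD hi []).getD c 0 < (T.getD lo []).getD c 0 →
        ∃ c', c < c' ∧ c' < (T.getD lo []).length ∧
          (T.getD hi []).getD c 0 < (T.getD lo []).getD c' 0

/-- The runs of the word `n ⋯ 2 1` determined by the descents of a standard key
tableau `T` (where `i` is a descent when `i+1` lies weakly right of `i`). -/
def sktRuns (T : List (List ℕ)) : List (List ℕ) :=
  splitWhen (fun _ b => decide (colOf T b ≤ colOf T (b + 1)))
    ((List.range' 1 T.flatten.length).reverse)

/-- The minimal row (1-indexed from the bottom) among the cells of the entries of
`r` in `T`. -/
def minRow (T : List (List ℕ)) (r : List ℕ) : ℕ :=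
  ((r.map (fun e => rowOf T e + 1)).min?).getD 0

/-- The weak descent composition `des(T)` of a standard key tableau; `none` means
`T` is virtual. -/
def desSKT (T : List (List ℕ)) : Option (List ℕ) :=
  (desFromBlocks ((sktRuns T).map (fun r => ((minRow T r : ℕ) : ℤ)))
    ((sktRuns T).map List.length)).map
      (fun d => d ++ List.replicate (T.length - d.length) 0)

/-- The Demazure character (key polynomial) `κ_a`. -/
noncomputable def KeyPoly (a : List ℕ) : (ℕ →₀ ℕ) → ℤ :=
  ∑ᶠ T ∈ {T : List (List ℕ) | IsSKT a T}, FSlideO (desSKT T)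

/-- `κ` extended to virtual indices by `κ_∅ = 0`. -/
noncomputable def KeyPolyO : Option (List ℕ) → (ℕ →₀ ℕ) → ℤ
  | none => 0
  | some a => KeyPoly a

/-! ## Edelman–Greene insertion and weak insertion. -/

/-- Edelman–Greene insertion of `x` into a single row: either append `x`, or bump
the smallest entry exceeding `x` (suppressing the replacement when that entry is
`x+1` and `x` already occurs in the row). -/
def eginsRow (x : ℕ) (row : List ℕ) : List ℕ × Option ℕ :=
  match row.findIdx? (fun z => decide (x < z)) with
  | none => (row ++ [x], none)
  | some j =>
    let y := row.getD j 0
    (if y = x + 1 ∧ row.contains x then row else row.set j x, some y)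

/-- Edelman–Greene insertion of `x` into a tableau (rows bottom to top). -/
def egins : ℕ → List (List ℕ) → List (List ℕ)
  | x, [] => [[x]]
  | x, row :: rest =>
    match eginsRow x row with
    | (r, none) => r :: rest
    | (r, some y) => r :: egins y rest

/-- The Edelman–Greene insertion tableau `P(ρ)` of a word. -/
def PEG (ρ : List ℕ) : List (List ℕ) := ρ.foldl (fun P x => egins x P) []

/-- One sweep of all the maps `drop_i` on a tableau (rows bottom to top). -/
def sweepDropT (T : List (List ℕ)) : List (List ℕ) :=
  (List.range T.length).foldl (fun t i => dropAt (i + 1) t) T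

/-- The drop of a tableau: repeatedly drop until reaching the increasing Young
tableau of the class. -/
def dropCanon (T : List (List ℕ)) : List (List ℕ) :=
  sweepDropT^[T.flatten.length * T.length + 1] T

/-- Weak insertion of the letter `x` into a Yamanouchi key tableau `P`:
`lift (drop P ← x)`. -/
def winsert (x : ℕ) (P : List (List ℕ)) : List (List ℕ) :=
  liftCanon (egins x (dropCanon P))

/-- The weak insertion tableau `P̃(ρ)` (rows bottom to top). -/
def Pweak (ρ : List ℕ) : List (List ℕ) := ρ.foldl (fun P x => winsert x P) []

/-- The Yamanouchi word of the Coxeter–Knuth class of `ρ`: the row reading word of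
`P̃(ρ)`. -/
def yamWord (ρ : List ℕ) : List ℕ := wordOf (Pweak ρ)

/-- The shape (weak composition) of the weak insertion tableau of the first `m`
letters of `ρ`. -/
def shapeAt (ρ : List ℕ) (m : ℕ) : List ℕ :=
  (desWord (wordOf (Pweak (ρ.take m)))).getD []

/-- Append the entry `e` at the end of row `j` (0-indexed from the bottom),
extending with empty rows as needed. -/
def placeEntry (Q : List (List ℕ)) (j e : ℕ) : List (List ℕ) :=
  let Q' := Q ++ List.replicate (j + 1 - Q.length) []
  Q'.set j (Q'.getD j [] ++ [e])

/-- The (0-indexed) row in which the shape grows from `aold` to `anew`. -/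
def growRow (aold anew : List ℕ) : ℕ :=
  ((List.range anew.length).find?
    (fun j => decide (aold.getD j 0 ≠ anew.getD j 0))).getD 0

/-- The weak recording tableau `Q̃(ρ)`: entry `i` is placed in the cell where the
shape grows at the step inserting `ρ_i` (entries are placed in decreasing order). -/
def Qweak (ρ : List ℕ) : List (List ℕ) :=
  (List.range ρ.length).foldl (fun Q m =>
    placeEntry Q (growRow (shapeAt ρ m) (shapeAt ρ (m + 1))) (ρ.length - m)) []

/-! ## Elementary weak dual equivalence involutions. -/

/-- Column reading order on entries: by column, and bottom to top within a column. -/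
def colKeyLe (T : List (List ℕ)) (x y : ℕ) : Bool :=
  decide (colOf T x < colOf T y ∨ (colOf T x = colOf T y ∧ rowOf T x ≤ rowOf T y))

/-- Sort three values by a boolean order. -/
def sort3 (le : ℕ → ℕ → Bool) (a b c : ℕ) : ℕ × ℕ × ℕ :=
  if le a b then
    if le b c then (a, b, c) else if le a c then (a, c, b) else (c, a, b)
  else
    if le a c then (b, a, c) else if le b c then (b, c, a) else (c, b, a)

/-- Relabel the entries `x, y, z` of `T` as `x', y', z'` respectively. -/
def relabel3 (T : List (List ℕ)) (x y z x' y' z' : ℕ) : List (List ℕ) :=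
  T.map (List.map (fun t =>
    if t = x then x' else if t = y then y' else if t = z then z' else t))

/-- The elementary weak dual equivalence involution `d̃_i` on standard key tableaux:
with `u, v, w` the cells of `i−1, i, i+1` in column reading order, if `u` and `w`
share a row and `v` does not, cycle the three entries so that `i` shares a row with
`i ± 1`; else if `v` holds `i+1` swap `i−1, i`; else if `v` holds `i−1` swap
`i, i+1`; otherwise fix `T`. -/
def wde (i : ℕ) (T : List (List ℕ)) : List (List ℕ) :=
  let s := sort3 (colKeyLe T) (i - 1) i (i + 1)
  let u := s.1
  let v := s.2.1
  let w := s.2.2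
  if rowOf T u = rowOf T w ∧ rowOf T v ≠ rowOf T u then
    let T1 := relabel3 T u v w w u v
    let T2 := relabel3 T u v w v w u
    if rowOf T1 i = rowOf T1 (i - 1) ∨ rowOf T1 i = rowOf T1 (i + 1) then T1 else T2
  else if v = i + 1 then relabel3 T (i - 1) i (i + 1) i (i - 1) (i + 1)
  else if v = i - 1 then relabel3 T (i - 1) i (i + 1) (i - 1) (i + 1) i
  else T

/-- Remove trailing zero parts of a weak composition (two weak compositions are
identified when they differ only in trailing zeros). -/
def trimZeros (a : List ℕ) : List ℕ :=
  (a.reverse.dropWhile (fun x => x == 0)).reverse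

/-- The transposition `s_i` acting on compositions by interchanging the parts in
positions `i` and `i+1` (1-indexed). -/
def swapParts (i : ℕ) (c : List ℕ) : List ℕ :=
  if 1 ≤ i ∧ i < c.length then
    (c.set (i - 1) (c.getD i 0)).set i (c.getD (i - 1) 0)
  else c

end EG

namespace EG

/-!
Read a reduced word as an integer word and Coxeter–Knuth-insert it column by column. Inserting into
the first column bumps out a shorter word, which feeds the next column. The mirror image of each of
these words has a first column of its own, and the sizes of those mirror columns give the lengths of
the rows of the weak insertion tableau; they depend only on the Coxeter–Knuth class.

Recording which row grows with each letter is a bijection from a class onto the words with given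
letter counts in which a row never grows while a lower row is exactly one cell longer. Naming the
rows that receive the entries `n, …, 2, 1`, such a word is a standard key tableau with those row
lengths, and its weak descent composition is that of the reduced word up to trailing zeros, which
slide polynomials do not see. So each class sums to a Demazure character.

The letter counts of a recording word are dominated by its weak descent composition, with equality
exactly when the recording word is weakly decreasing. Hence each class contains exactly one
Yamanouchi word `ρ`, the class sums to `κ_{des(ρ)}`, and the theorem is the sum over classes.
-/

/-! ## Coxeter–Knuth equivalence of integer words -/

/-- The elementary Coxeter–Knuth relations between words of length three. Letters are integers,
not naturals, so that the relations are stable under `mirror`. -/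
inductive CKTriple : List ℤ → List ℤ → Prop
  | swapLast {x y z : ℤ} (hxy : x < y) (hyz : y < z) : CKTriple [y, x, z] [y, z, x]
  | swapFirst {x y z : ℤ} (hxy : x < y) (hyz : y < z) : CKTriple [z, x, y] [x, z, y]
  | braid {a b : ℤ} (hab : b = a + 1) : CKTriple [a, b, a] [b, a, b]

/-- A Coxeter–Knuth relation applied to three consecutive letters of a word. -/
def CKStep (ρ σ : List ℤ) : Prop :=
  ∃ p q l m, CKTriple l m ∧ ρ = p ++ l ++ q ∧ σ = p ++ m ++ q

/-- Coxeter–Knuth equivalence of integer words. -/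
def CK : List ℤ → List ℤ → Prop := Relation.EqvGen CKStep

theorem CK.refl (ρ : List ℤ) : CK ρ ρ := Relation.EqvGen.refl ρ

theorem CK.symm {ρ σ : List ℤ} (h : CK ρ σ) : CK σ ρ := Relation.EqvGen.symm _ _ h

theorem CK.trans {ρ σ τ : List ℤ} (h : CK ρ σ) (h' : CK σ τ) : CK ρ τ :=
  Relation.EqvGen.trans _ _ _ h h'

theorem CKStep.ck {ρ σ : List ℤ} (h : CKStep ρ σ) : CK ρ σ := Relation.EqvGen.rel _ _ h

theorem CKTriple.ck {l m : List ℤ} (h : CKTriple l m) : CK l m :=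
  CKStep.ck ⟨[], [], l, m, h, by simp, by simp⟩

theorem CK.map {f : List ℤ → List ℤ} (hf : ∀ ρ σ, CKStep ρ σ → CK (f ρ) (f σ)) {ρ σ : List ℤ}
    (h : CK ρ σ) : CK (f ρ) (f σ) := by
  induction h with
  | rel _ _ h => exact hf _ _ h
  | refl _ => exact CK.refl _
  | symm _ _ _ ih => exact ih.symm
  | trans _ _ _ _ _ ih₁ ih₂ => exact ih₁.trans ih₂

theorem CK.append_append (p q : List ℤ) {ρ σ : List ℤ} (h : CK ρ σ) :
    CK (p ++ ρ ++ q) (p ++ σ ++ q) := by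
  refine CK.map (f := fun ρ ↦ p ++ ρ ++ q) ?_ h
  rintro _ _ ⟨p', q', l, m, h, rfl, rfl⟩
  exact CKStep.ck ⟨p ++ p', q' ++ q, l, m, h, by simp, by simp⟩

theorem CK.append_left (p : List ℤ) {ρ σ : List ℤ} (h : CK ρ σ) : CK (p ++ ρ) (p ++ σ) := by
  simpa using h.append_append p []

theorem CK.append_right (q : List ℤ) {ρ σ : List ℤ} (h : CK ρ σ) : CK (ρ ++ q) (σ ++ q) := by
  simpa using h.append_append [] q

theorem CK.cons (a : ℤ) {ρ σ : List ℤ} (h : CK ρ σ) : CK (a :: ρ) (a :: σ) := h.append_left [a]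

theorem CKTriple.mem_iff {l m : List ℤ} (h : CKTriple l m) (x : ℤ) : x ∈ l ↔ x ∈ m := by
  cases h <;> simp only [mem_cons] <;> tauto

theorem CK.mem_iff {ρ σ : List ℤ} (h : CK ρ σ) (x : ℤ) : x ∈ ρ ↔ x ∈ σ := by
  induction h with
  | rel _ _ h => obtain ⟨p, q, l, m, h, rfl, rfl⟩ := h; simp [h.mem_iff]
  | refl _ => rfl
  | symm _ _ _ ih => exact ih.symm
  | trans _ _ _ _ _ ih₁ ih₂ => exact ih₁.trans ih₂

theorem CKTriple.length_eq {l m : List ℤ} (h : CKTriple l m) : l.length = m.length := by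
  cases h <;> rfl

theorem CK.length_eq {ρ σ : List ℤ} (h : CK ρ σ) : ρ.length = σ.length := by
  induction h with
  | rel _ _ h => obtain ⟨p, q, l, m, h, rfl, rfl⟩ := h; simp [h.length_eq]
  | refl _ => rfl
  | symm _ _ _ ih => exact ih.symm
  | trans _ _ _ _ _ ih₁ ih₂ => exact ih₁.trans ih₂

/-- The word read backwards with all letters negated. This symmetry of the Coxeter–Knuth relations
exchanges inserting from the left and inserting from the right. -/
def mirror (ρ : List ℤ) : List ℤ := (ρ.map fun x ↦ -x).reverse

theorem mirror_append (ρ σ : List ℤ) : mirror (ρ ++ σ) = mirror σ ++ mirror ρ := by simp [mirror]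

theorem mirror_mirror (ρ : List ℤ) : mirror (mirror ρ) = ρ := by simp [mirror]

theorem mem_mirror (ρ : List ℤ) (x : ℤ) : x ∈ mirror ρ ↔ -x ∈ ρ := by
  simp [mirror, neg_eq_iff_eq_neg]

theorem CKTriple.mirror {l m : List ℤ} (h : CKTriple l m) : CKTriple (mirror m) (mirror l) := by
  cases h with
  | swapLast hxy hyz => exact .swapFirst (neg_lt_neg hyz) (neg_lt_neg hxy)
  | swapFirst hxy hyz => exact .swapLast (neg_lt_neg hyz) (neg_lt_neg hxy)
  | @braid a b hab => exact CKTriple.braid (a := -b) (b := -a) (by omega)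

theorem CK.mirror {ρ σ : List ℤ} (h : CK ρ σ) : CK (mirror ρ) (mirror σ) := by
  refine CK.map (f := EG.mirror) ?_ h
  rintro _ _ ⟨p, q, l, m, h, rfl, rfl⟩
  simp only [mirror_append, ← append_assoc]
  exact (h.mirror.ck.append_append _ _).symm

/-! ## Admissible words -/

/-- The word has a factor `a a`, or a factor `a b a` with `|a - b| ≥ 2`. No reduced word has. -/
def HasRepeat (σ : List ℤ) : Prop :=
  (∃ p q a, σ = p ++ [a, a] ++ q) ∨
    ∃ p q a b, (b + 1 < a ∨ a + 1 < b) ∧ σ = p ++ [a, b, a] ++ q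

/-- No word of the Coxeter–Knuth class has a forbidden repetition. This is all that insertion needs
to know about reduced words. -/
def Admissible (ρ : List ℤ) : Prop := ∀ σ, CK ρ σ → ¬ HasRepeat σ

theorem HasRepeat.append_append {σ : List ℤ} (p q : List ℤ) (h : HasRepeat σ) :
    HasRepeat (p ++ σ ++ q) := by
  rcases h with ⟨p', q', a, rfl⟩ | ⟨p', q', a, b, h, rfl⟩
  · exact Or.inl ⟨p ++ p', q' ++ q, a, by simp⟩
  · exact Or.inr ⟨p ++ p', q' ++ q, a, b, h, by simp⟩

theorem HasRepeat.mirror {σ : List ℤ} (h : HasRepeat σ) : HasRepeat (mirror σ) := by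
  rcases h with ⟨p, q, a, rfl⟩ | ⟨p, q, a, b, h, rfl⟩
  · exact Or.inl ⟨EG.mirror q, EG.mirror p, -a, by simp [EG.mirror]⟩
  · exact Or.inr ⟨EG.mirror q, EG.mirror p, -a, -b, by omega, by simp [EG.mirror]⟩

theorem Admissible.ck {ρ σ : List ℤ} (h : Admissible ρ) (h' : CK ρ σ) : Admissible σ :=
  fun _ hτ ↦ h _ (h'.trans hτ)

theorem Admissible.of_append_append {p ρ q : List ℤ} (h : Admissible (p ++ ρ ++ q)) :
    Admissible ρ :=
  fun _ hτ hr ↦ h _ (hτ.append_append p q) (hr.append_append p q)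

theorem Admissible.left {ρ q : List ℤ} (h : Admissible (ρ ++ q)) : Admissible ρ :=
  of_append_append (p := []) (q := q) h

theorem Admissible.right {p ρ : List ℤ} (h : Admissible (p ++ ρ)) : Admissible ρ :=
  of_append_append (p := p) (q := []) (by simpa using h)

theorem Admissible.mirror {ρ : List ℤ} (h : Admissible ρ) : Admissible (mirror ρ) :=
  fun _ hτ hr ↦ h _ (by simpa [mirror_mirror] using hτ.mirror) hr.mirror

/-! ## Strictly decreasing words -/

theorem CK.move_right_past {u v : ℤ} {L : List ℤ} (hL : (u :: L).Pairwise (· > ·)) (huv : u < v) :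
    CK (u :: (L ++ [v])) (u :: v :: L) := by
  induction L generalizing u with
  | nil => exact CK.refl _
  | cons l L ih =>
    have hlu : l < u := by grind
    have hl : CK (u :: l :: (L ++ [v])) (u :: l :: v :: L) := (ih hL.of_cons (hlu.trans huv)).cons u
    exact hl.trans ((CKTriple.swapLast hlu huv).ck.append_right L)

theorem CK.move_left_past {u v : ℤ} {L : List ℤ} (hL : (L ++ [v]).Pairwise (· > ·)) (huv : u < v) :
    CK (L ++ [u, v]) (u :: (L ++ [v])) := by
  induction L with
  | nil => exact CK.refl _
  | cons l L ih =>
    have hl : CK (l :: (L ++ [u, v])) (l :: u :: (L ++ [v])) := (ih hL.of_cons).cons l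
    refine hl.trans ?_
    cases L with
    | nil => exact (CKTriple.swapFirst huv (by grind)).ck
    | cons m L =>
      have hum : u < m := huv.trans (rel_of_pairwise_cons hL.of_cons (by simp))
      have hml : m < l := rel_of_pairwise_cons hL (by simp)
      exact (CKTriple.swapFirst hum hml).ck.append_right (L ++ [v])

/-- The elements of a finite set in decreasing order: the reading word of a column. -/
def decWord (A : Finset ℤ) : List ℤ := A.sort (· ≥ ·)

theorem decWord_pairwise (A : Finset ℤ) : (decWord A).Pairwise (· > ·) :=
  (Finset.sortedGT_sort A).pairwise

theorem mem_decWord {A : Finset ℤ} {x : ℤ} : x ∈ decWord A ↔ x ∈ A := by simp [decWord]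

theorem length_decWord (A : Finset ℤ) : (decWord A).length = A.card := by simp [decWord]

theorem eq_of_pairwise_gt {α : Type*} [Preorder α] {L M : List α} (hL : L.Pairwise (· > ·))
    (hM : M.Pairwise (· > ·)) (h : ∀ x, x ∈ L ↔ x ∈ M) : L = M :=
  ((perm_ext_iff_of_nodup (hL.imp ne_of_gt) (hM.imp ne_of_gt)).2 h).eq_of_pairwise
    (fun _ _ _ _ h₁ h₂ ↦ (lt_asymm h₁ h₂).elim) hL hM

theorem decWord_eq {L : List ℤ} {A : Finset ℤ} (hL : L.Pairwise (· > ·))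
    (h : ∀ x, x ∈ L ↔ x ∈ A) : decWord A = L :=
  eq_of_pairwise_gt (decWord_pairwise A) hL fun x ↦ by rw [mem_decWord, h]

theorem decWord_union {A B : Finset ℤ} (h : ∀ a ∈ A, ∀ b ∈ B, b < a) :
    decWord (A ∪ B) = decWord A ++ decWord B := by
  refine decWord_eq (pairwise_append.2 ⟨decWord_pairwise A, decWord_pairwise B, ?_⟩) ?_
  · simpa only [mem_decWord] using h
  · simp [mem_decWord]

theorem decWord_singleton (v : ℤ) : decWord {v} = [v] := decWord_eq (by simp) (by simp)

theorem decWord_insert_of_lt {A : Finset ℤ} {v : ℤ} (h : ∀ a ∈ A, a < v) :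
    decWord (insert v A) = v :: decWord A := by
  rw [Finset.insert_eq, decWord_union (by simpa using h), decWord_singleton, singleton_append]

theorem decWord_insert_of_gt {A : Finset ℤ} {v : ℤ} (h : ∀ a ∈ A, v < a) :
    decWord (insert v A) = decWord A ++ [v] := by
  rw [Finset.insert_eq, Finset.union_comm, decWord_union (by simpa using h), decWord_singleton]

/-! ## Column insertion -/

/-- The letter bumped out of the column `A` when `v` is inserted: `v - 1` if `v` already occurs,
otherwise the largest element of `A` below `v`, if there is one. -/
def colBump (A : Finset ℤ) (v : ℤ) : Option ℤ :=
  if v ∈ A then some (v - 1)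
  else if h : (A.filter (· < v)).Nonempty then some ((A.filter (· < v)).max' h) else none

/-- The column obtained from `A` by inserting `v`. -/
def colInsert (A : Finset ℤ) (v : ℤ) : Finset ℤ :=
  if v ∈ A then A else insert v (A.filter fun a ↦ colBump A v ≠ some a)

theorem colBump_of_mem {A : Finset ℤ} {v : ℤ} (h : v ∈ A) : colBump A v = some (v - 1) := if_pos h

theorem colInsert_of_mem {A : Finset ℤ} {v : ℤ} (h : v ∈ A) : colInsert A v = A := if_pos h

theorem mem_colInsert {A : Finset ℤ} {v a : ℤ} :
    a ∈ colInsert A v ↔ a = v ∨ a ∈ A ∧ (v ∈ A ∨ colBump A v ≠ some a) := by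
  by_cases hv : v ∈ A
  · rw [colInsert_of_mem hv]
    grind
  · simp [colInsert, hv]

theorem self_mem_colInsert (A : Finset ℤ) (v : ℤ) : v ∈ colInsert A v :=
  mem_colInsert.2 (Or.inl rfl)

theorem colBump_eq_some_iff {A : Finset ℤ} {v u : ℤ} :
    colBump A v = some u ↔
      v ∈ A ∧ u = v - 1 ∨ u ∈ A ∧ u < v ∧ ∀ w ∈ A, w ≤ u ∨ v < w := by
  by_cases hv : v ∈ A
  · rw [colBump_of_mem hv]
    grind
  by_cases hne : (A.filter (· < v)).Nonempty
  · simp only [colBump, hv, hne, if_false, dif_pos, Option.some.injEq, Finset.max'_eq_iff,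
      Finset.mem_filter]
    grind
  · simp only [Finset.not_nonempty_iff_eq_empty, Finset.filter_eq_empty_iff] at hne
    simp only [colBump, hv]
    grind

theorem colBump_eq_none_iff {A : Finset ℤ} {v : ℤ} : colBump A v = none ↔ ∀ w ∈ A, v < w := by
  by_cases hv : v ∈ A
  · rw [colBump_of_mem hv]
    grind
  · simp only [colBump, hv, if_false, dite_eq_right_iff, reduceCtorEq, imp_false,
      Finset.not_nonempty_iff_eq_empty, Finset.filter_eq_empty_iff]
    grind

theorem colBump_lt {A : Finset ℤ} {v u : ℤ} (h : colBump A v = some u) : u < v := by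
  rw [colBump_eq_some_iff] at h
  omega

theorem colInsert_of_colBump_eq_none {A : Finset ℤ} {v : ℤ} (h : colBump A v = none) :
    colInsert A v = insert v A := by
  ext
  simp [mem_colInsert, h]

theorem colInsert_of_colBump_eq_some {A : Finset ℤ} {u v : ℤ} (hv : v ∉ A)
    (h : colBump A v = some u) : colInsert A v = insert v (A.erase u) := by
  ext
  simp only [mem_colInsert, h, hv, Finset.mem_insert, Finset.mem_erase]
  grind

/-- The column obtained from `A` by inserting the letters of a word one after another. -/
def colInsertWord : Finset ℤ → List ℤ → Finset ℤ
  | A, [] => A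
  | A, v :: ρ => colInsertWord (colInsert A v) ρ

/-- The word of letters bumped out while a word is inserted into `A`. -/
def colBumpWord : Finset ℤ → List ℤ → List ℤ
  | _, [] => []
  | A, v :: ρ => (colBump A v).toList ++ colBumpWord (colInsert A v) ρ

theorem colInsertWord_append (A : Finset ℤ) (ρ σ : List ℤ) :
    colInsertWord A (ρ ++ σ) = colInsertWord (colInsertWord A ρ) σ := by
  induction ρ generalizing A with
  | nil => rfl
  | cons v ρ ih => simp [colInsertWord, ih]

theorem colBumpWord_append (A : Finset ℤ) (ρ σ : List ℤ) :
    colBumpWord A (ρ ++ σ) = colBumpWord A ρ ++ colBumpWord (colInsertWord A ρ) σ := by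
  induction ρ generalizing A with
  | nil => rfl
  | cons v ρ ih => simp [colInsertWord, colBumpWord, ih]

/-- The first column of the insertion tableau of a word. -/
def firstCol (ρ : List ℤ) : Finset ℤ := colInsertWord ∅ ρ

/-- The letters bumped out of the first column, that is, the word inserted into the second. -/
def bumped (ρ : List ℤ) : List ℤ := colBumpWord ∅ ρ

theorem firstCol_append_singleton (ρ : List ℤ) (x : ℤ) :
    firstCol (ρ ++ [x]) = colInsert (firstCol ρ) x := by
  simp [firstCol, colInsertWord_append, colInsertWord]

theorem bumped_append_singleton (ρ : List ℤ) (x : ℤ) :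
    bumped (ρ ++ [x]) = bumped ρ ++ (colBump (firstCol ρ) x).toList := by
  simp [firstCol, bumped, colBumpWord_append, colBumpWord]

theorem decWord_split {A : Finset ℤ} {u : ℤ} (h : u ∈ A) :
    decWord A = decWord (A.filter (u < ·)) ++ u :: decWord (A.filter (· < u)) := by
  rw [← decWord_insert_of_lt (by simp), ← decWord_union (by grind)]
  congr 1
  grind

theorem decWord_append_singleton_pairwise {A : Finset ℤ} {v : ℤ} (h : ∀ a ∈ A, v < a) :
    (decWord A ++ [v]).Pairwise (· > ·) :=
  decWord_insert_of_gt h ▸ decWord_pairwise _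

theorem cons_decWord_pairwise {A : Finset ℤ} {v : ℤ} (h : ∀ a ∈ A, a < v) :
    (v :: decWord A).Pairwise (· > ·) :=
  decWord_insert_of_lt h ▸ decWord_pairwise _

/-- Inserting an element `v` already present is harmless only next to `v - 1`: otherwise `v` can be
moved to the left until a factor `v v` or `v l v` with `l < v - 1` appears. -/
theorem Admissible.sub_one_mem {A : Finset ℤ} {v : ℤ} (h : Admissible (decWord A ++ [v]))
    (hv : v ∈ A) : v - 1 ∈ A := by
  by_contra hv'
  have hlow : ∀ a ∈ A.filter (· < v), a + 1 < v := by grind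
  rw [decWord_split hv, append_assoc] at h
  have hpair := decWord_pairwise (A.filter (· < v))
  have hmem : ∀ a ∈ decWord (A.filter (· < v)), a + 1 < v := fun a ha ↦ hlow a (mem_decWord.1 ha)
  replace h := h.right
  generalize decWord (A.filter (· < v)) = L at h hpair hmem
  cases L with
  | nil => exact h _ (CK.refl _) (Or.inl ⟨[], [], v, rfl⟩)
  | cons l L =>
    have hl : l + 1 < v := hmem l (by simp)
    have hmove := (CK.move_right_past hpair (by omega : l < v)).cons v
    exact h _ (by simpa using hmove) (Or.inr ⟨[], L, v, l, Or.inl hl, by simp⟩)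

theorem decWord_append_ck_of_mem {A : Finset ℤ} {v : ℤ} (hv : v ∈ A) (hv' : v - 1 ∈ A) :
    CK (decWord A ++ [v]) ((v - 1) :: decWord A) := by
  set H := A.filter (v < ·)
  set L := (A.filter (· < v)).filter (· < v - 1)
  have hA : decWord A = decWord H ++ v :: (v - 1) :: decWord L := by
    rw [decWord_split hv, decWord_split (A := A.filter (· < v)) (u := v - 1) (by simp [hv'])]
    have hempty : (A.filter (· < v)).filter (v - 1 < ·) = ∅ := by grind
    simp only [hempty, decWord, Finset.sort_empty, nil_append, H, L]
  have hright := CK.move_right_past (u := v - 1) (v := v) (L := decWord L)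
    (cons_decWord_pairwise (by grind)) (by omega)
  have hbraid : CK [v, v - 1, v] [v - 1, v, v - 1] := (CKTriple.braid (by omega)).ck.symm
  have hleft := CK.move_left_past (u := v - 1) (v := v) (L := decWord H)
    (decWord_append_singleton_pairwise (by grind)) (by omega)
  rw [hA]
  have h₁ := (hright.cons v).append_left (decWord H)
  have h₂ := hbraid.append_append (decWord H) (decWord L)
  have h₃ := hleft.append_right ((v - 1) :: decWord L)
  simp only [append_assoc, cons_append, nil_append] at h₁ h₂ h₃ ⊢
  exact h₁.trans (h₂.trans h₃)

theorem decWord_append_ck_of_pred {A : Finset ℤ} {u v : ℤ} (hu : u ∈ A) (huv : u < v)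
    (hA : ∀ w ∈ A, w ≤ u ∨ v < w) :
    CK (decWord A ++ [v]) (u :: decWord (insert v (A.erase u))) := by
  set H := A.filter (u < ·)
  set L := A.filter (· < u)
  have hins : decWord (insert v (A.erase u)) = decWord H ++ v :: decWord L := by
    rw [← decWord_insert_of_lt (by grind), ← decWord_union (by grind)]
    congr 1
    grind
  have hright := CK.move_right_past (u := u) (v := v) (L := decWord L)
    (cons_decWord_pairwise (by grind)) huv
  have hleft := CK.move_left_past (u := u) (v := v) (L := decWord H)
    (decWord_append_singleton_pairwise (by grind)) huv
  rw [decWord_split hu, hins]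
  have h₁ := hright.append_left (decWord H)
  have h₂ := hleft.append_right (decWord L)
  simp only [append_assoc, cons_append, nil_append] at h₁ h₂ ⊢
  exact h₁.trans h₂

theorem decWord_append_ck {A : Finset ℤ} {v : ℤ} (hv : v ∈ A → v - 1 ∈ A) :
    CK (decWord A ++ [v]) ((colBump A v).toList ++ decWord (colInsert A v)) := by
  by_cases hvA : v ∈ A
  · rw [colBump_of_mem hvA, colInsert_of_mem hvA]
    exact decWord_append_ck_of_mem hvA (hv hvA)
  rcases hb : colBump A v with _ | u
  · rw [colInsert_of_colBump_eq_none hb, decWord_insert_of_gt (colBump_eq_none_iff.1 hb)]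
    exact CK.refl _
  · obtain ⟨hu, huv, hA⟩ := (colBump_eq_some_iff.1 hb).resolve_left (fun h ↦ hvA h.1)
    rw [colInsert_of_colBump_eq_some hvA hb]
    exact decWord_append_ck_of_pred hu huv hA

theorem ck_bumped_append_firstCol {ρ : List ℤ} (h : Admissible ρ) :
    CK ρ (bumped ρ ++ decWord (firstCol ρ)) := by
  induction ρ using List.reverseRecOn with
  | nil => simpa [bumped, colBumpWord, firstCol, colInsertWord, decWord] using CK.refl []
  | append_singleton ρ v ih =>
    have hck : CK (ρ ++ [v]) (bumped ρ ++ (decWord (firstCol ρ) ++ [v])) := by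
      simpa using (ih h.left).append_right [v]
    rw [firstCol_append_singleton, bumped_append_singleton, append_assoc]
    exact hck.trans ((decWord_append_ck (h.ck hck).right.sub_one_mem).append_left _)

theorem Admissible.sub_one_mem_firstCol {ρ : List ℤ} {v : ℤ} (h : Admissible (ρ ++ [v])) :
    v ∈ firstCol ρ → v - 1 ∈ firstCol ρ := by
  have hck := (ck_bumped_append_firstCol h.left).append_right [v]
  rw [append_assoc] at hck
  exact (h.ck hck).right.sub_one_mem

/-! ## Invariance of the first column -/

/-- Whenever a letter `v` of the word is inserted into a column containing `v`, the column also
contains `v - 1`. -/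
def RegularInsertion : Finset ℤ → List ℤ → Prop
  | _, [] => True
  | A, v :: ρ => (v ∈ A → v - 1 ∈ A) ∧ RegularInsertion (colInsert A v) ρ

theorem regularInsertion_append {A : Finset ℤ} {ρ σ : List ℤ} :
    RegularInsertion A (ρ ++ σ) ↔
      RegularInsertion A ρ ∧ RegularInsertion (colInsertWord A ρ) σ := by
  induction ρ generalizing A with
  | nil => simp [RegularInsertion, colInsertWord]
  | cons v ρ ih => simp [RegularInsertion, colInsertWord, ih, and_assoc]

theorem Admissible.regularInsertion {ρ : List ℤ} (h : Admissible ρ) : RegularInsertion ∅ ρ := by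
  induction ρ using List.reverseRecOn with
  | nil => trivial
  | append_singleton ρ v ih =>
    exact regularInsertion_append.2 ⟨ih h.left, h.sub_one_mem_firstCol, trivial⟩

/-- Inserting either word into `A` gives the same column and Coxeter–Knuth equivalent bumped
words. -/
def SameInsertion (A : Finset ℤ) (l m : List ℤ) : Prop :=
  colInsertWord A l = colInsertWord A m ∧ CK (colBumpWord A l) (colBumpWord A m)

theorem colBump_congr_of_mem {A B : Finset ℤ} {y z : ℤ} (hy : y ∈ A) (hyz : y < z)
    (h : ∀ w, y ≤ w → (w ∈ A ↔ w ∈ B)) : colBump A z = colBump B z := by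
  rcases hA : colBump A z with _ | u
  · exact absurd (colBump_eq_none_iff.1 hA y hy) (by omega)
  · symm
    rw [colBump_eq_some_iff] at hA ⊢
    grind

theorem colBump_congr_of_le {A B : Finset ℤ} {x : ℤ} (h : ∀ w, w ≤ x → (w ∈ A ↔ w ∈ B)) :
    colBump A x = colBump B x := by
  ext u
  simp only [colBump_eq_some_iff]
  grind

theorem exists_colBump_ge {A : Finset ℤ} {y z : ℤ} (hy : y ∈ A) (hyz : y < z) :
    ∃ u, y ≤ u ∧ colBump A z = some u := by
  rcases hA : colBump A z with _ | u
  · exact absurd (colBump_eq_none_iff.1 hA y hy) (by omega)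
  · exact ⟨u, by grind [colBump_eq_some_iff], rfl⟩

theorem mem_colInsert_of_gt {A : Finset ℤ} {x w : ℤ} (h : x < w) : w ∈ colInsert A x ↔ w ∈ A := by
  have := fun h ↦ colBump_lt (A := A) (v := x) (u := w) h
  grind [mem_colInsert]

theorem mem_colInsert_of_lt {A : Finset ℤ} {y z w : ℤ} (hy : y ∈ A) (hyz : y < z) (h : w < y) :
    w ∈ colInsert A z ↔ w ∈ A := by
  obtain ⟨u, hu, hA⟩ := exists_colBump_ge hy hyz
  grind [mem_colInsert]

theorem colBump_colInsert_of_lt {A : Finset ℤ} {x y z : ℤ} (hy : y ∈ A) (hxy : x < y)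
    (hyz : y < z) : colBump (colInsert A x) z = colBump A z :=
  (colBump_congr_of_mem hy hyz fun _ hw ↦ (mem_colInsert_of_gt (hxy.trans_le hw)).symm).symm

theorem colBump_colInsert_of_gt {A : Finset ℤ} {x y z : ℤ} (hy : y ∈ A) (hxy : x < y)
    (hyz : y < z) : colBump (colInsert A z) x = colBump A x :=
  colBump_congr_of_le fun _ hw ↦ mem_colInsert_of_lt hy hyz (hw.trans_lt hxy)

theorem colInsert_comm {A : Finset ℤ} {x y z : ℤ} (hy : y ∈ A) (hxy : x < y) (hyz : y < z) :
    colInsert (colInsert A x) z = colInsert (colInsert A z) x := by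
  ext a
  obtain ⟨u, hu, hA⟩ := exists_colBump_ge hy hyz
  have hzx := mem_colInsert_of_gt (A := A) (hxy.trans hyz)
  have hxz := mem_colInsert_of_lt hy hyz hxy
  have hx := fun h ↦ colBump_lt (A := A) (v := x) (u := a) h
  simp only [mem_colInsert (A := colInsert A x), mem_colInsert (A := colInsert A z), hzx, hxz,
    colBump_colInsert_of_lt hy hxy hyz, colBump_colInsert_of_gt hy hxy hyz]
  simp only [mem_colInsert]
  grind

theorem sameInsertion_swapLast {A : Finset ℤ} {x y z : ℤ} (hxy : x < y) (hyz : y < z) :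
    SameInsertion A [y, x, z] [y, z, x] := by
  have hy := self_mem_colInsert A y
  obtain ⟨z', hz', hz⟩ := exists_colBump_ge hy hyz
  refine ⟨colInsert_comm hy hxy hyz, ?_⟩
  simp only [colBumpWord, colBump_colInsert_of_lt hy hxy hyz,
    colBump_colInsert_of_gt hy hxy hyz, hz]
  rcases hx : colBump (colInsert A y) x with _ | x'
  · exact CK.refl _
  have hx' := colBump_lt hx
  rcases hb : colBump A y with _ | y'
  · rw [colBump_eq_none_iff] at hb
    have hnone : colBump (colInsert A y) x = none :=
      colBump_eq_none_iff.2 (by grind [mem_colInsert])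
    simp [hnone] at hx
  · have hy' := colBump_lt hb
    have hxy' : x' < y' := by
      rw [colBump_eq_some_iff] at hx
      have := colBump_eq_some_iff.1 hb
      grind [mem_colInsert]
    exact (CKTriple.swapLast hxy' (by omega)).ck

theorem sameInsertion_swapFirst_of_between {A : Finset ℤ} {w x y z : ℤ} (hw : w ∈ A) (hxw : x < w)
    (hwz : w < z) (hxy : x < y) (hyz : y < z) : SameInsertion A [z, x, y] [x, z, y] := by
  obtain ⟨z', hz', hz⟩ := exists_colBump_ge hw hwz
  refine ⟨congrArg (colInsert · y) (colInsert_comm hw hxw hwz).symm, ?_⟩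
  simp only [colBumpWord, colBump_colInsert_of_lt hw hxw hwz, colBump_colInsert_of_gt hw hxw hwz,
    colInsert_comm hw hxw hwz, hz]
  rcases hx : colBump A x with _ | x'
  · exact CK.refl _
  have hx' := colBump_lt hx
  obtain ⟨y', hy', hy⟩ :=
    exists_colBump_ge (self_mem_colInsert (colInsert A z) x) hxy
  have hyz' : y' < z' := by
    rw [colBump_eq_some_iff] at hy
    have := colBump_eq_some_iff.1 hz
    grind [mem_colInsert]
  simpa [hy] using (CKTriple.swapFirst (by omega : x' < y') hyz').ck

section Gap

variable {A : Finset ℤ} {x z : ℤ}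

theorem colBump_eq_of_gap (hxz : x ≤ z) (hA : ∀ w ∈ A, w < x ∨ z < w) :
    colBump A z = colBump A x := by
  ext u
  simp only [colBump_eq_some_iff]
  grind

theorem colBump_colInsert_of_gap (hxz : x < z) (hA : ∀ w ∈ A, w ≤ x ∨ z < w) :
    colBump (colInsert A x) z = some x :=
  colBump_eq_some_iff.2 (Or.inr (by grind [mem_colInsert]))

theorem colInsert_colInsert_of_gap (hxz : x < z) (hA : ∀ w ∈ A, w ≤ x ∨ z < w) :
    colInsert (colInsert A x) z = colInsert A z := by
  ext a
  have hb := colBump_colInsert_of_gap hxz hA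
  by_cases hx : x ∈ A
  · rw [colInsert_of_mem hx]
  · have hzx : colBump A z = colBump A x := colBump_eq_of_gap hxz.le (by grind)
    simp only [mem_colInsert (A := colInsert A x), hb, mem_colInsert (A := A), hzx]
    grind

theorem lt_or_lt_of_mem_colInsert_of_gap (hxz : x < z) (hA : ∀ w ∈ A, w ≤ x ∨ z < w) :
    ∀ w ∈ colInsert A z, w < x ∨ z ≤ w := by
  have hx : x ∈ A → colBump A z = some x := fun hx ↦
    colBump_eq_some_iff.2 (Or.inr ⟨hx, hxz, hA⟩)
  grind [mem_colInsert]

theorem ck_colBump_of_gap (hxz : x < z) (hA : ∀ w ∈ A, w ≤ x ∨ z < w) (hx : x ∈ A → x - 1 ∈ A) :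
    CK ((colBump A z).toList ++ ((colBump (colInsert A z) x).toList ++ [x]))
      ((colBump A x).toList ++ (x :: (colBump (colInsert A z) x).toList)) := by
  have hgap := lt_or_lt_of_mem_colInsert_of_gap hxz hA
  by_cases hxA : x ∈ A
  · have hz : colBump A z = some x := colBump_eq_some_iff.2 (Or.inr ⟨hxA, hxz, hA⟩)
    have hq : colBump (colInsert A z) x = some (x - 1) :=
      colBump_eq_some_iff.2 (Or.inr (by grind [mem_colInsert]))
    rw [hz, hq, colBump_of_mem hxA]
    exact (CKTriple.braid (by omega)).ck.symm
  · rw [colBump_eq_of_gap hxz.le (by grind)]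
    rcases hq : colBump (colInsert A z) x with _ | q
    · exact CK.refl _
    have hqx := colBump_lt hq
    rcases hp : colBump A x with _ | p
    · rw [colBump_eq_none_iff] at hp
      grind [colBump_eq_some_iff, mem_colInsert]
    · have hpz : colBump A z = some p := by rw [← hp]; exact colBump_eq_of_gap hxz.le (by grind)
      have hqp : q < p := by
        rw [colBump_eq_some_iff] at hp hq
        grind [mem_colInsert]
      exact (CKTriple.swapLast hqp (colBump_lt hp)).ck

theorem sameInsertion_swapFirst_of_gap {y : ℤ} (hxy : x < y) (hyz : y < z)
    (hA : ∀ w ∈ A, w ≤ x ∨ z < w) (hx : x ∈ A → x - 1 ∈ A) :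
    SameInsertion A [z, x, y] [x, z, y] := by
  have hxz := hxy.trans hyz
  have hgap := lt_or_lt_of_mem_colInsert_of_gap hxz hA
  have hgap' : ∀ w ∈ colInsert A z, w ≤ x ∨ y < w := by grind
  simp only [SameInsertion, colInsertWord, colBumpWord, colInsert_colInsert_of_gap hxy hgap',
    colInsert_colInsert_of_gap hxz hA, colBump_colInsert_of_gap hxy hgap',
    colBump_colInsert_of_gap hxz hA,
    colBump_eq_of_gap hxy.le (fun w hw ↦ (hgap w hw).imp_right hyz.trans_le)]
  simpa using ck_colBump_of_gap hxz hA hx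

end Gap

theorem sameInsertion_swapFirst {A : Finset ℤ} {x y z : ℤ} (hxy : x < y) (hyz : y < z)
    (hz : z ∈ A → z - 1 ∈ A) (hx : x ∈ A → x - 1 ∈ A) : SameInsertion A [z, x, y] [x, z, y] := by
  by_cases h : ∃ w ∈ A, x < w ∧ w < z
  · obtain ⟨w, hw, hxw, hwz⟩ := h
    exact sameInsertion_swapFirst_of_between hw hxw hwz hxy hyz
  · exact sameInsertion_swapFirst_of_gap hxy hyz (by grind) hx

theorem sameInsertion_braid {A : Finset ℤ} {a b : ℤ} (hab : b = a + 1)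
    (ha : a ∈ A → a - 1 ∈ A) (hb : b ∈ A → b - 1 ∈ A) : SameInsertion A [a, b, a] [b, a, b] := by
  have hlt : a < b := by omega
  have hb' : b - 1 = a := by omega
  by_cases hbA : b ∈ A
  · have haA : a ∈ A := hb' ▸ hb hbA
    refine ⟨by simp only [colInsertWord, colInsert_of_mem haA, colInsert_of_mem hbA], ?_⟩
    simp only [colBumpWord, colInsert_of_mem haA, colInsert_of_mem hbA, colBump_of_mem haA,
      colBump_of_mem hbA]
    exact (CKTriple.braid (by omega)).ck
  · have hA : ∀ w ∈ A, w ≤ a ∨ b < w := by grind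
    have hbC : b ∈ colInsert (colInsert A b) a :=
      (mem_colInsert_of_gt hlt).2 (self_mem_colInsert A b)
    simp only [SameInsertion, colInsertWord, colBumpWord, colInsert_colInsert_of_gap hlt hA,
      colBump_colInsert_of_gap hlt hA, colInsert_of_mem hbC, colBump_of_mem hbC, hb']
    simpa using (ck_colBump_of_gap hlt hA ha).symm

theorem CKTriple.sameInsertion {A : Finset ℤ} {l m : List ℤ} (h : CKTriple l m)
    (hl : RegularInsertion A l) (hm : RegularInsertion A m) : SameInsertion A l m := by
  cases h with
  | swapLast hxy hyz => exact sameInsertion_swapLast hxy hyz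
  | swapFirst hxy hyz => exact sameInsertion_swapFirst hxy hyz hl.1 hm.1
  | braid hab => exact sameInsertion_braid hab hl.1 hm.1

theorem CKStep.firstCol_eq_and_bumped_ck {ρ σ : List ℤ} (h : CKStep ρ σ) (hρ : Admissible ρ) :
    firstCol ρ = firstCol σ ∧ CK (bumped ρ) (bumped σ) := by
  have hσ : Admissible σ := hρ.ck h.ck
  obtain ⟨p, q, l, m, h, rfl, rfl⟩ := h
  have hl := (regularInsertion_append.1 hρ.left.regularInsertion).2
  have hm := (regularInsertion_append.1 hσ.left.regularInsertion).2
  obtain ⟨hcol, hck⟩ := h.sameInsertion hl hm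
  refine ⟨by simp only [firstCol, colInsertWord_append, hcol], ?_⟩
  simp only [bumped, colBumpWord_append, colInsertWord_append, hcol]
  exact hck.append_append _ _

theorem CK.firstCol_eq_and_bumped_ck {ρ σ : List ℤ} (h : CK ρ σ) (hρ : Admissible ρ) :
    firstCol ρ = firstCol σ ∧ CK (bumped ρ) (bumped σ) := by
  induction h with
  | rel _ _ h => exact h.firstCol_eq_and_bumped_ck hρ
  | refl _ => exact ⟨rfl, CK.refl _⟩
  | symm _ _ h ih =>
    obtain ⟨hcol, hck⟩ := ih (hρ.ck (CK.symm h))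
    exact ⟨hcol.symm, hck.symm⟩
  | trans _ _ _ h _ ih₁ ih₂ =>
    obtain ⟨hcol₁, hck₁⟩ := ih₁ hρ
    obtain ⟨hcol₂, hck₂⟩ := ih₂ (hρ.ck h)
    exact ⟨hcol₁.trans hcol₂, hck₁.trans hck₂⟩

/-! ## The mirror column -/

theorem card_colInsert (A : Finset ℤ) (v : ℤ) :
    (colInsert A v).card + (colBump A v).toList.length = A.card + 1 := by
  by_cases hv : v ∈ A
  · simp [colBump_of_mem hv, colInsert_of_mem hv]
  rcases hu : colBump A v with _ | u
  · rw [colInsert_of_colBump_eq_none hu, Finset.card_insert_of_notMem hv]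
    simp
  · have huA : u ∈ A := by grind [colBump_eq_some_iff]
    rw [colInsert_of_colBump_eq_some hv hu, Finset.card_insert_of_notMem (by grind),
      Finset.card_erase_add_one huA]
    simp

theorem card_colInsertWord (A : Finset ℤ) (ρ : List ℤ) :
    (colInsertWord A ρ).card + (colBumpWord A ρ).length = A.card + ρ.length := by
  induction ρ generalizing A with
  | nil => simp [colInsertWord, colBumpWord]
  | cons v ρ ih =>
    have h := ih (colInsert A v)
    have h' := card_colInsert A v
    simp only [colInsertWord, colBumpWord, length_append, length_cons]
    omega

theorem card_le_card_colInsertWord (A : Finset ℤ) (ρ : List ℤ) :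
    A.card ≤ (colInsertWord A ρ).card := by
  induction ρ generalizing A with
  | nil => exact le_rfl
  | cons v ρ ih =>
    have h := card_colInsert A v
    have h' : (colBump A v).toList.length ≤ 1 := by cases colBump A v <;> simp
    exact le_trans (by omega) (ih (colInsert A v))

theorem length_bumped_lt {ρ : List ℤ} (h : ρ ≠ []) : (bumped ρ).length < ρ.length := by
  have hcard := card_colInsertWord ∅ ρ
  have hpos : 0 < (colInsertWord ∅ ρ).card := by
    obtain ⟨v, ρ, rfl⟩ := exists_cons_of_ne_nil h
    exact (Finset.card_pos.2 ⟨v, self_mem_colInsert ∅ v⟩).trans_le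
      (card_le_card_colInsertWord _ ρ)
  rw [Finset.card_empty, zero_add] at hcard
  rw [bumped]
  omega

theorem colInsertWord_eq_union {A : Finset ℤ} {L : List ℤ} (hL : L.Pairwise (· > ·))
    (hA : ∀ l ∈ L, ∀ a ∈ A, l < a) : colInsertWord A L = A ∪ L.toFinset := by
  induction L generalizing A with
  | nil => simp [colInsertWord]
  | cons l L ih =>
    have hl : colBump A l = none := colBump_eq_none_iff.2 (hA l mem_cons_self)
    rw [colInsertWord, colInsert_of_colBump_eq_none hl, ih hL.of_cons fun l' hl' a ha ↦ ?_]
    · ext a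
      simp
    · rcases Finset.mem_insert.1 ha with rfl | ha
      · exact rel_of_pairwise_cons hL hl'
      · exact hA l' (mem_cons_of_mem _ hl') a ha

theorem firstCol_eq_toFinset {L : List ℤ} (hL : L.Pairwise (· > ·)) :
    firstCol L = L.toFinset := by
  rw [firstCol, colInsertWord_eq_union hL (by simp), Finset.empty_union]

theorem mirror_pairwise_gt {L : List ℤ} (hL : L.Pairwise (· > ·)) :
    (mirror L).Pairwise (· > ·) := by
  rw [mirror, pairwise_reverse, pairwise_map]
  exact hL.imp neg_lt_neg

/-- The first column of the mirrored word. By evacuation it is as large as the first column of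
the word; its negated entries index the rows that meet the first column. -/
def mirrorCol (ρ : List ℤ) : Finset ℤ := firstCol (mirror ρ)

theorem CK.mirrorCol_eq {ρ σ : List ℤ} (h : CK ρ σ) (hρ : Admissible ρ) :
    mirrorCol ρ = mirrorCol σ :=
  (h.mirror.firstCol_eq_and_bumped_ck hρ.mirror).1

theorem mirrorCol_append (ρ σ : List ℤ) :
    mirrorCol (ρ ++ σ) = colInsertWord (mirrorCol σ) (mirror ρ) := by
  rw [mirrorCol, mirror_append, firstCol, colInsertWord_append, mirrorCol, firstCol]

theorem length_le_card_mirrorCol (p : List ℤ) {L : List ℤ} (hL : L.Pairwise (· > ·)) :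
    L.length ≤ (mirrorCol (p ++ L)).card := by
  have hL' := mirror_pairwise_gt hL
  calc L.length = (mirrorCol L).card := by
        rw [mirrorCol, firstCol_eq_toFinset hL', toFinset_card_of_nodup (hL'.imp ne_of_gt)]
        simp [mirror]
    _ ≤ (mirrorCol (p ++ L)).card := mirrorCol_append p L ▸ card_le_card_colInsertWord _ _

theorem Admissible.card_mirrorCol {ρ : List ℤ} (h : Admissible ρ) :
    (mirrorCol ρ).card = (firstCol ρ).card := by
  have hle {σ} (h : Admissible σ) : (firstCol σ).card ≤ (mirrorCol σ).card := by
    rw [(ck_bumped_append_firstCol h).mirrorCol_eq h, ← length_decWord]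
    exact length_le_card_mirrorCol _ (decWord_pairwise _)
  refine le_antisymm ?_ (hle h)
  simpa only [mirrorCol, mirror_mirror] using hle h.mirror

theorem Admissible.length_le_card_firstCol {p L : List ℤ} (h : Admissible (p ++ L))
    (hL : L.Pairwise (· > ·)) : L.length ≤ (firstCol (p ++ L)).card :=
  h.card_mirrorCol ▸ length_le_card_mirrorCol p hL

/-- `A'` is `A` or arises from it by adding one element that exceeds all elements of `A` missing
from the subset `A₀`. This relation between three columns survives simultaneous insertion. -/
def Nested (A₀ A A' : Finset ℤ) : Prop :=
  A₀ ⊆ A ∧ (A' = A ∨ ∃ r ∉ A, A' = insert r A ∧ ∀ s ∈ A, s ∉ A₀ → s < r)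

theorem colInsert_subset_colInsert {A₀ A : Finset ℤ} (h : A₀ ⊆ A) (v : ℤ) :
    colInsert A₀ v ⊆ colInsert A v := by
  intro s
  grind [mem_colInsert, colBump_eq_some_iff]

theorem colInsertWord_subset_colInsertWord {A₀ A : Finset ℤ} (h : A₀ ⊆ A) (ρ : List ℤ) :
    colInsertWord A₀ ρ ⊆ colInsertWord A ρ := by
  induction ρ generalizing A₀ A with
  | nil => exact h
  | cons v _ ih => exact ih (colInsert_subset_colInsert h v)

theorem Nested.colInsert {A₀ A A' : Finset ℤ} {v : ℤ} (h : Nested A₀ A A')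
    (hv : v ∈ A' → v - 1 ∈ A') : Nested (colInsert A₀ v) (colInsert A v) (colInsert A' v) := by
  obtain ⟨hsub, rfl | ⟨r, hr, rfl, hlt⟩⟩ := h
  · exact ⟨colInsert_subset_colInsert hsub v, Or.inl rfl⟩
  refine ⟨colInsert_subset_colInsert hsub v, ?_⟩
  by_cases hvA : v ∈ A
  · refine Or.inr ⟨r, ?_, ?_, ?_⟩ <;> try ext
    all_goals grind [mem_colInsert, colBump_eq_some_iff]
  by_cases hvr : v = r
  · subst hvr
    have hb : colBump A v = some (v - 1) := by grind [colBump_eq_some_iff]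
    refine Or.inr ⟨v - 1, ?_, ?_, ?_⟩ <;> try ext
    all_goals grind [mem_colInsert, colBump_eq_some_iff]
  rcases hu : colBump A v with _ | u
  · rw [colBump_eq_none_iff] at hu
    by_cases hrv : r < v
    · left
      ext
      grind [mem_colInsert, colBump_eq_some_iff]
    · refine Or.inr ⟨r, ?_, ?_, ?_⟩ <;> try ext
      all_goals grind [mem_colInsert, colBump_eq_some_iff]
  · have hA := (colBump_eq_some_iff.1 hu).resolve_left fun h ↦ hvA h.1
    by_cases hrv : u < r ∧ r < v
    · refine Or.inr ⟨u, ?_, ?_, ?_⟩ <;> try ext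
      all_goals grind [mem_colInsert, colBump_eq_some_iff]
    · have hu' : colBump (insert r A) v = some u := by grind [colBump_eq_some_iff]
      refine Or.inr ⟨r, ?_, ?_, ?_⟩ <;> try ext
      all_goals grind [mem_colInsert, colBump_eq_some_iff]

theorem Nested.colInsertWord {A₀ A A' : Finset ℤ} {ρ : List ℤ} (h : Nested A₀ A A')
    (hρ : RegularInsertion A' ρ) :
    Nested (colInsertWord A₀ ρ) (colInsertWord A ρ) (colInsertWord A' ρ) := by
  induction ρ generalizing A₀ A A' with
  | nil => exact h
  | cons v ρ ih => exact ih (h.colInsert hρ.1) hρ.2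

theorem nested_empty {L : List ℤ} (hL : L.Pairwise (· > ·)) (y : ℤ) :
    Nested ∅ (firstCol L) (colInsertWord {y} L) := by
  refine ⟨Finset.empty_subset _, ?_⟩
  rw [firstCol_eq_toFinset hL]
  rcases L with _ | ⟨l, L⟩
  · exact Or.inr ⟨y, by simp [EG.colInsertWord]⟩
  have hlt : ∀ l' ∈ L, l' < l := fun l' ↦ rel_of_pairwise_cons hL
  by_cases hy : y ≤ l
  · left
    have hl : EG.colInsert {y} l = {l} := by
      ext
      grind [mem_colInsert, colBump_eq_some_iff]
    rw [EG.colInsertWord, hl, colInsertWord_eq_union hL.of_cons (by simpa using hlt),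
      toFinset_cons, Finset.insert_eq]
  · refine Or.inr ⟨y, by simp; grind, ?_, by simp; grind⟩
    rw [colInsertWord_eq_union hL (by grind), Finset.insert_eq]

theorem Admissible.bumped {ρ : List ℤ} (h : Admissible ρ) : Admissible (bumped ρ) :=
  (h.ck (ck_bumped_append_firstCol h)).left

theorem Admissible.mirrorCol_bumped_subset {ρ : List ℤ} (h : Admissible ρ) :
    mirrorCol (EG.bumped ρ) ⊆ mirrorCol ρ := by
  rw [(ck_bumped_append_firstCol h).mirrorCol_eq h, mirrorCol_append]
  exact colInsertWord_subset_colInsertWord (Finset.empty_subset _) _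

theorem Admissible.nested_mirrorCol {ρ : List ℤ} {x : ℤ} (h : Admissible (ρ ++ [x])) :
    Nested (mirrorCol (EG.bumped ρ)) (mirrorCol ρ) (mirrorCol (ρ ++ [x])) := by
  have hck := ck_bumped_append_firstCol h.left
  have hckx := hck.append_right [x]
  have hx : mirrorCol [x] = {-x} := rfl
  have hreg := (h.ck hckx).mirror.regularInsertion
  simp only [mirror_append, regularInsertion_append] at hreg
  rw [hck.mirrorCol_eq h.left, hckx.mirrorCol_eq h, mirrorCol_append,
    mirrorCol_append, mirror_append, colInsertWord_append, hx]
  exact (nested_empty (mirror_pairwise_gt (decWord_pairwise _)) (-x)).colInsertWord hreg.2.2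

theorem Admissible.mirrorCol_append_of_bump {ρ : List ℤ} {x : ℤ} (h : Admissible (ρ ++ [x]))
    (hx : colBump (firstCol ρ) x ≠ none) : mirrorCol (ρ ++ [x]) = mirrorCol ρ := by
  refine h.nested_mirrorCol.2.resolve_right ?_
  rintro ⟨r, hr, heq, -⟩
  have hcard := card_colInsert (firstCol ρ) x
  have hcard' := h.card_mirrorCol
  obtain ⟨y, hy⟩ := Option.ne_none_iff_exists'.1 hx
  rw [firstCol_append_singleton, heq, Finset.card_insert_of_notMem hr,
    h.left.card_mirrorCol] at hcard'
  simp only [hy, Option.toList_some, length_singleton] at hcard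
  omega

theorem Admissible.mirrorCol_append_of_join {ρ : List ℤ} {x : ℤ} (h : Admissible (ρ ++ [x]))
    (hx : colBump (firstCol ρ) x = none) :
    ∃ r ∉ mirrorCol ρ, mirrorCol (ρ ++ [x]) = insert r (mirrorCol ρ) ∧
      ∀ s ∈ mirrorCol ρ, s ∉ mirrorCol (EG.bumped ρ) → s < r := by
  refine h.nested_mirrorCol.2.resolve_left fun heq ↦ ?_
  have hcard := card_colInsert (firstCol ρ) x
  have hcard' := h.card_mirrorCol
  rw [firstCol_append_singleton, heq, h.left.card_mirrorCol] at hcard'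
  simp only [hx, Option.toList_none, length_nil] at hcard
  omega

/-! ## Row lengths and levels -/

theorem bumped_induction {P : List ℤ → Prop} (h : ∀ ρ, (ρ ≠ [] → P (bumped ρ)) → P ρ)
    (ρ : List ℤ) : P ρ :=
  h ρ fun _ ↦ bumped_induction h (bumped ρ)
termination_by ρ.length
decreasing_by exact length_bumped_lt ‹_›

/-- The number of cells in row `r` of the weak insertion tableau of `ρ`: the number of iterated
bumped words whose mirror column contains `-r`. -/
def rowLength (ρ : List ℤ) (r : ℤ) : ℕ :=
  if h : ρ = [] then 0 else (if -r ∈ mirrorCol ρ then 1 else 0) + rowLength (bumped ρ) r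
termination_by ρ.length
decreasing_by exact length_bumped_lt h

/-- The index of the column in which the insertion of `x` into the columns of `ρ` terminates. -/
def level (ρ : List ℤ) (x : ℤ) : ℕ :=
  if ρ = [] then 0 else
    match colBump (firstCol ρ) x with
    | none => 0
    | some y => level (bumped ρ) y + 1
termination_by ρ.length
decreasing_by exact length_bumped_lt ‹_›

theorem rowLength_nil (r : ℤ) : rowLength [] r = 0 := by rw [rowLength, dif_pos rfl]

theorem mirrorCol_nil : mirrorCol [] = ∅ := rfl

theorem rowLength_eq (ρ : List ℤ) (r : ℤ) :
    rowLength ρ r = (if -r ∈ mirrorCol ρ then 1 else 0) + rowLength (bumped ρ) r := by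
  by_cases h : ρ = []
  · subst h
    simp [bumped, colBumpWord, rowLength_nil, mirrorCol_nil]
  · rw [rowLength, dif_neg h]

theorem ne_nil_of_colBump_firstCol {ρ : List ℤ} {x y : ℤ} (h : colBump (firstCol ρ) x = some y) :
    ρ ≠ [] := by
  rintro rfl
  have hnone : colBump (firstCol []) x = none := colBump_eq_none_iff.2 fun _ hw ↦ by cases hw
  exact absurd (hnone.symm.trans h) (by simp)

theorem level_of_join {ρ : List ℤ} {x : ℤ} (h : colBump (firstCol ρ) x = none) :
    level ρ x = 0 := by
  rw [level, h, ite_self]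

theorem level_of_bump {ρ : List ℤ} {x y : ℤ} (h : colBump (firstCol ρ) x = some y) :
    level ρ x = level (bumped ρ) y + 1 := by
  rw [level, if_neg (ne_nil_of_colBump_firstCol h), h]

theorem bumped_append_of_join {ρ : List ℤ} {x : ℤ} (h : colBump (firstCol ρ) x = none) :
    bumped (ρ ++ [x]) = bumped ρ := by
  simp [bumped_append_singleton, h]

theorem bumped_append_of_bump {ρ : List ℤ} {x y : ℤ} (h : colBump (firstCol ρ) x = some y) :
    bumped (ρ ++ [x]) = bumped ρ ++ [y] := by
  simp [bumped_append_singleton, h]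

theorem Admissible.bumped_append {ρ : List ℤ} {x y : ℤ} (h : Admissible (ρ ++ [x]))
    (hx : colBump (firstCol ρ) x = some y) : Admissible (EG.bumped ρ ++ [y]) :=
  bumped_append_of_bump hx ▸ h.bumped

theorem Admissible.rowLength_pos {ρ : List ℤ} (h : Admissible ρ) (r : ℤ) :
    0 < rowLength ρ r ↔ -r ∈ mirrorCol ρ := by
  induction ρ using bumped_induction with
  | h ρ ih =>
    by_cases hρ : ρ = []
    · subst hρ
      simp [rowLength_nil, mirrorCol_nil]
    have hsub : -r ∈ mirrorCol (EG.bumped ρ) → -r ∈ mirrorCol ρ := (h.mirrorCol_bumped_subset ·)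
    have ih := ih hρ h.bumped
    rw [rowLength_eq]
    split_ifs <;> grind

theorem CK.rowLength_eq {ρ σ : List ℤ} (h : CK ρ σ) (hρ : Admissible ρ) :
    rowLength ρ = rowLength σ := by
  induction ρ using bumped_induction generalizing σ with
  | h ρ ih =>
    by_cases h0 : ρ = []
    · subst h0
      rw [length_eq_zero_iff.1 h.length_eq.symm]
    funext r
    rw [EG.rowLength_eq, EG.rowLength_eq σ, h.mirrorCol_eq hρ,
      ih h0 (h.firstCol_eq_and_bumped_ck hρ).2 hρ.bumped]

theorem CK.level_eq {ρ σ : List ℤ} (h : CK ρ σ) (hρ : Admissible ρ) (x : ℤ) :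
    level ρ x = level σ x := by
  induction ρ using bumped_induction generalizing σ x with
  | h ρ ih =>
    obtain ⟨hcol, hck⟩ := h.firstCol_eq_and_bumped_ck hρ
    rcases hx : colBump (firstCol ρ) x with _ | y <;> have hx' := hx <;> rw [hcol] at hx'
    · rw [level_of_join hx, level_of_join hx']
    · rw [level_of_bump hx, level_of_bump hx',
        ih (ne_nil_of_colBump_firstCol hx) hck hρ.bumped]

/-- Appending a letter of level `l` to `ρ` adds a cell to row `r`, which had length `l`; below `r`
no row of the new shape has length `l + 1`. -/
def AddsCell (ρ : List ℤ) (x r : ℤ) : Prop :=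
  (∀ r', rowLength (ρ ++ [x]) r' = rowLength ρ r' + if r' = r then 1 else 0) ∧
    rowLength ρ r = level ρ x ∧ ∀ r' < r, rowLength (ρ ++ [x]) r' ≠ level ρ x + 1

theorem Admissible.addsCell_of_bump {ρ : List ℤ} {x y r : ℤ} (h : Admissible (ρ ++ [x]))
    (hx : colBump (firstCol ρ) x = some y) (hr : AddsCell (EG.bumped ρ) y r) :
    AddsCell ρ x r := by
  obtain ⟨hadd, hlen, hlow⟩ := hr
  have hb := bumped_append_of_bump hx
  have hcol := h.mirrorCol_append_of_bump (by simp [hx])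
  have hmem r' (hr' : 0 < rowLength (EG.bumped (ρ ++ [x])) r') : -r' ∈ mirrorCol ρ :=
    hcol ▸ h.mirrorCol_bumped_subset ((h.bumped.rowLength_pos r').1 hr')
  rw [hb] at hmem
  have hrmem := hmem r (by rw [hadd, if_pos rfl]; omega)
  refine ⟨fun r' ↦ ?_, ?_, fun r' hr' ↦ ?_⟩
  · rw [rowLength_eq, rowLength_eq ρ, hb, hadd, hcol, add_assoc]
  · rw [rowLength_eq, if_pos hrmem, hlen, level_of_bump hx, add_comm]
  · rw [rowLength_eq, hb, hcol, level_of_bump hx]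
    grind

theorem Admissible.exists_addsCell_of_join {ρ : List ℤ} {x : ℤ} (h : Admissible (ρ ++ [x]))
    (hx : colBump (firstCol ρ) x = none) : ∃ r, AddsCell ρ x r := by
  obtain ⟨s, hs, hcol, hlt⟩ := h.mirrorCol_append_of_join hx
  have hadd r' : rowLength (ρ ++ [x]) r' = rowLength ρ r' + if r' = -s then 1 else 0 := by
    rw [rowLength_eq, rowLength_eq ρ, bumped_append_of_join hx, hcol]
    grind
  refine ⟨-s, hadd, ?_, fun r' hr' ↦ ?_⟩
  · rw [level_of_join hx]
    have := h.left.rowLength_pos (-s)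
    grind
  · rw [level_of_join hx, hadd, if_neg hr'.ne]
    have hpos := h.left.rowLength_pos r'
    have hpos' := h.left.bumped.rowLength_pos r'
    have heq := rowLength_eq ρ r'
    have := hlt (-r')
    grind

theorem Admissible.exists_addsCell {ρ : List ℤ} {x : ℤ} (h : Admissible (ρ ++ [x])) :
    ∃ r, AddsCell ρ x r := by
  induction ρ using bumped_induction generalizing x with
  | h ρ ih =>
    rcases hx : colBump (firstCol ρ) x with _ | y
    · exact h.exists_addsCell_of_join hx
    · obtain ⟨r, hr⟩ := ih (ne_nil_of_colBump_firstCol hx) (h.bumped_append hx)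
      exact ⟨r, h.addsCell_of_bump hx hr⟩

theorem exists_colBump_of_colBump_colInsert {A : Finset ℤ} {v u y : ℤ} (h : u < v)
    (hy : colBump (colInsert A v) u = some y) : ∃ v', colBump A v = some v' ∧ y < v' := by
  rcases hv : colBump A v with _ | v'
  · grind [mem_colInsert, colBump_eq_some_iff, colBump_eq_none_iff]
  · refine ⟨v', rfl, ?_⟩
    grind [mem_colInsert, colBump_eq_some_iff]

theorem level_lt_level_append {ρ : List ℤ} {v u : ℤ} (h : v < u) :
    level ρ v < level (ρ ++ [v]) u := by
  induction ρ using bumped_induction generalizing v u with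
  | h ρ ih =>
    obtain ⟨y, hvy, hy⟩ := exists_colBump_ge (self_mem_colInsert (firstCol ρ) v) h
    rw [← firstCol_append_singleton] at hy
    rw [level_of_bump hy]
    rcases hv : colBump (firstCol ρ) v with _ | v'
    · rw [level_of_join hv]
      omega
    · rw [level_of_bump hv, bumped_append_of_bump hv]
      exact Nat.succ_lt_succ
        (ih (ne_nil_of_colBump_firstCol hv) ((colBump_lt hv).trans_le hvy))

theorem level_append_le_level {ρ : List ℤ} {v u : ℤ} (h : u < v) :
    level (ρ ++ [v]) u ≤ level ρ v := by
  induction ρ using bumped_induction generalizing v u with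
  | h ρ ih =>
    rcases hu : colBump (firstCol (ρ ++ [v])) u with _ | y
    · rw [level_of_join hu]
      exact Nat.zero_le _
    · obtain ⟨v', hv, hyv⟩ := exists_colBump_of_colBump_colInsert h
        (firstCol_append_singleton ρ v ▸ hu)
      rw [level_of_bump hu, level_of_bump hv, bumped_append_of_bump hv]
      exact Nat.succ_le_succ (ih (ne_nil_of_colBump_firstCol hv) hyv)

theorem colInsert_injective_of_bump {A B : Finset ℤ} {x y z : ℤ} (hA : x ∈ A → x - 1 ∈ A)
    (hB : y ∈ B → y - 1 ∈ B) (h : colInsert A x = colInsert B y) (hx : colBump A x = some z)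
    (hy : colBump B y = some z) : x = y ∧ A = B := by
  have h' a : a ∈ colInsert A x ↔ a ∈ colInsert B y := by rw [h]
  simp only [mem_colInsert, hx, hy] at h'
  rw [colBump_eq_some_iff] at hx hy
  have hxy : x = y := by grind
  subst hxy
  refine ⟨rfl, ?_⟩
  ext a
  grind

theorem colInsert_injective_of_join {A B : Finset ℤ} {x y : ℤ}
    (h : colInsert A x = colInsert B y) (hx : colBump A x = none) (hy : colBump B y = none) :
    x = y ∧ A = B := by
  have h' a : a ∈ colInsert A x ↔ a ∈ colInsert B y := by rw [h]
  simp only [colInsert_of_colBump_eq_none hx, colInsert_of_colBump_eq_none hy,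
    Finset.mem_insert] at h'
  rw [colBump_eq_none_iff] at hx hy
  have hxy : x = y := by grind [(h' x).1 (Or.inl rfl), (h' y).2 (Or.inl rfl)]
  subst hxy
  refine ⟨rfl, ?_⟩
  ext a
  grind

theorem CK.of_firstCol_eq {ρ σ : List ℤ} (hρ : Admissible ρ) (hσ : Admissible σ)
    (hcol : firstCol ρ = firstCol σ) (h : CK (bumped ρ) (bumped σ)) : CK ρ σ := by
  refine (ck_bumped_append_firstCol hρ).trans (.trans ?_ (ck_bumped_append_firstCol hσ).symm)
  exact hcol ▸ h.append_right _

theorem Admissible.eq_and_ck_of_append {ρ σ : List ℤ} {x y : ℤ} (hρ : Admissible (ρ ++ [x]))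
    (h : CK (ρ ++ [x]) (σ ++ [y])) (hl : level ρ x = level σ y) : x = y ∧ CK ρ σ := by
  induction ρ using bumped_induction generalizing σ x y with
  | h ρ ih =>
    have hσ := hρ.ck h
    obtain ⟨hcol, hck⟩ := h.firstCol_eq_and_bumped_ck hρ
    rw [firstCol_append_singleton, firstCol_append_singleton] at hcol
    rcases hx : colBump (firstCol ρ) x with _ | x' <;>
      rcases hy : colBump (firstCol σ) y with _ | y'
    · obtain ⟨hxy, hcol⟩ := colInsert_injective_of_join hcol hx hy
      rw [bumped_append_of_join hx, bumped_append_of_join hy] at hck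
      exact ⟨hxy, .of_firstCol_eq hρ.left hσ.left hcol hck⟩
    · simp [level_of_join hx, level_of_bump hy] at hl
    · simp [level_of_bump hx, level_of_join hy] at hl
    · rw [level_of_bump hx, level_of_bump hy, Nat.add_right_cancel_iff] at hl
      rw [bumped_append_of_bump hx, bumped_append_of_bump hy] at hck
      obtain ⟨rfl, hck'⟩ := ih (ne_nil_of_colBump_firstCol hx) (hρ.bumped_append hx) hck hl
      obtain ⟨hxy, hcol⟩ := colInsert_injective_of_bump hρ.sub_one_mem_firstCol
        hσ.sub_one_mem_firstCol hcol hx hy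
      exact ⟨hxy, .of_firstCol_eq hρ.left hσ.left hcol hck'⟩

/-! ## Removing a corner -/

theorem colBump_eq_none_of_card_lt {A : Finset ℤ} {L : List ℤ} {x : ℤ}
    (hL : (L ++ [x]).Pairwise (· > ·)) (hcard : A.card < (colInsertWord A (L ++ [x])).card) :
    colBump (colInsertWord A L) x = none := by
  induction L using List.reverseRecOn generalizing x with
  | nil =>
    by_contra hx
    obtain ⟨y, hy⟩ := Option.ne_none_iff_exists'.1 hx
    have h := card_colInsert A x
    simp only [colInsertWord] at hy
    simp only [nil_append, colInsertWord, hy, Option.toList_some, length_singleton] at hcard h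
    omega
  | append_singleton L y ih =>
    obtain ⟨hL', -, hyx⟩ := pairwise_append.1 hL
    by_contra hx
    obtain ⟨z, hz⟩ := Option.ne_none_iff_exists'.1 hx
    have h := card_colInsert (colInsertWord A (L ++ [y])) x
    rw [colInsertWord_append _ (L ++ [y])] at hcard
    simp only [colInsertWord, hz, Option.toList_some, length_singleton] at hcard h
    have hy := ih hL' (by omega)
    have hxy : x < y := hyx y (by simp) x (by simp)
    rw [colInsertWord_append] at hz
    simp only [colInsertWord, colInsert_of_colBump_eq_none hy] at hz
    grind [colBump_eq_none_iff, colBump_eq_some_iff]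

theorem mem_colInsertWord_of_forall_le {A : Finset ℤ} {L : List ℤ} {s : ℤ} (hs : s ∈ A)
    (hL : ∀ l ∈ L, l ≤ s) : s ∈ colInsertWord A L := by
  induction L generalizing A with
  | nil => exact hs
  | cons v L ih =>
    refine ih ?_ fun l hl ↦ hL l (mem_cons_of_mem _ hl)
    have hv := hL v mem_cons_self
    grind [mem_colInsert, colBump_eq_some_iff]

theorem mem_colInsertWord_of_mem {L : List ℤ} (hL : L.Pairwise (· > ·)) (A : Finset ℤ) {s : ℤ}
    (hs : s ∈ L) : s ∈ colInsertWord A L := by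
  induction L generalizing A with
  | nil => cases hs
  | cons v L ih =>
    rcases mem_cons.1 hs with rfl | hs
    · exact mem_colInsertWord_of_forall_le (L := L) (self_mem_colInsert A s)
        fun l hl ↦ (rel_of_pairwise_cons hL hl).le
    · exact ih hL.of_cons _ hs

theorem RegularInsertion.exists_mem_colInsertWord_lt {A : Finset ℤ} {L : List ℤ} {b : ℤ}
    (h : RegularInsertion A L) (hL : L.Pairwise (· > ·)) (hb : ∀ l ∈ L, l < b) (hA : b - 1 ∈ A) :
    ∃ s ∈ colInsertWord A L, s < b ∧ s ∉ L := by
  induction L generalizing b with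
  | nil => exact ⟨b - 1, hA, by omega, by simp⟩
  | cons d L ih =>
    have hd := hb d mem_cons_self
    have hdL : ∀ l ∈ L, l < d := fun l hl ↦ rel_of_pairwise_cons hL hl
    by_cases hdb : d = b - 1
    · subst hdb
      have hreg := h.2
      rw [colInsert_of_mem hA] at hreg
      obtain ⟨s, hs, hsb, hsL⟩ := ih hreg hL.of_cons hdL (h.1 hA)
      refine ⟨s, ?_, by omega, by grind⟩
      rwa [colInsertWord, colInsert_of_mem hA]
    · exact ⟨b - 1, mem_colInsertWord_of_forall_le hA (by grind), by omega, by grind⟩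

theorem RegularInsertion.colBumpWord_eq_decWord {A : Finset ℤ} {L : List ℤ} {b : ℤ}
    (h : RegularInsertion A L) (hL : L.Pairwise (· > ·)) (hb : ∀ l ∈ L, l < b)
    (hA : ∀ s ∈ colInsertWord A L, s < b → s ∈ L) :
    colBumpWord A L = decWord (A.filter (· < b)) := by
  induction L generalizing A b with
  | nil => exact (decWord_eq .nil (by simpa [colInsertWord] using hA)).symm
  | cons d L ih =>
    have hd := hb d mem_cons_self
    have hdL : ∀ l ∈ L, l < d := fun l hl ↦ rel_of_pairwise_cons hL hl
    have hAd : ∀ s ∈ A, s < b → s ≤ d := fun s hs hsb ↦ by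
      by_contra! hds
      have := hA s (mem_colInsertWord_of_forall_le hs (by grind)) hsb
      grind
    have hrest : ∀ s ∈ colInsertWord (colInsert A d) L, s < d → s ∈ L := fun s hs hsd ↦
      (mem_cons.1 (hA s hs (hsd.trans hd))).resolve_left hsd.ne
    have hdA : d ∉ A := fun hdA ↦ by
      have hreg := h.2
      rw [colInsert_of_mem hdA] at hreg hrest
      obtain ⟨s, hs, hsd, hsL⟩ := hreg.exists_mem_colInsertWord_lt hL.of_cons hdL (h.1 hdA)
      exact hsL (hrest s hs hsd)
    rw [colBumpWord, ih h.2 hL.of_cons hdL hrest]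
    rcases hu : colBump A d with _ | u
    · rw [Option.toList_none, nil_append]
      congr 1
      ext a
      grind [mem_colInsert, colBump_eq_none_iff]
    · have hu' := (colBump_eq_some_iff.1 hu).resolve_left fun h ↦ hdA h.1
      rw [Option.toList_some, singleton_append, ← decWord_insert_of_lt]
      · congr 1
        ext a
        grind [mem_colInsert]
      · grind [mem_colInsert]

theorem Admissible.bumped_ck_of_firstCol_eq {ρ : List ℤ} {D : Finset ℤ}
    (h : Admissible (ρ ++ decWord D)) (hD : firstCol (ρ ++ decWord D) = D) :
    CK (EG.bumped (ρ ++ decWord D)) ρ := by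
  have hcol : colInsertWord (firstCol ρ) (decWord D) = D := by
    rw [firstCol, ← colInsertWord_append, ← firstCol, hD]
  obtain ⟨b, hb⟩ := (D ∪ firstCol ρ).exists_le
  have hb' : ∀ s ∈ D ∪ firstCol ρ, s < b + 1 := fun s hs ↦ Int.lt_add_one_of_le (hb s hs)
  have hreg : RegularInsertion (firstCol ρ) (decWord D) :=
    (regularInsertion_append.1 h.regularInsertion).2
  have hout := hreg.colBumpWord_eq_decWord (b := b + 1) (decWord_pairwise D)
    (fun l hl ↦ hb' l (Finset.mem_union_left _ (mem_decWord.1 hl)))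
    (fun s hs _ ↦ mem_decWord.2 (hcol ▸ hs))
  rw [Finset.filter_eq_self.2 fun s hs ↦ hb' s (Finset.mem_union_right _ hs)] at hout
  rw [EG.bumped, colBumpWord_append, ← firstCol, hout]
  exact (ck_bumped_append_firstCol h.left).symm

theorem Admissible.add_one_mem {A : Finset ℤ} {v : ℤ} (h : Admissible (v :: decWord A))
    (hv : v ∈ A) : v + 1 ∈ A := by
  have hmirror : EG.mirror (v :: decWord A) = decWord (A.image (-·)) ++ [-v] := by
    rw [← singleton_append, mirror_append,
      ← decWord_eq (A := A.image (-·)) (mirror_pairwise_gt (decWord_pairwise A))]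
    · rfl
    · simp [mem_mirror, mem_decWord, neg_eq_iff_eq_neg]
  have hmem := (hmirror ▸ h.mirror).sub_one_mem (Finset.mem_image_of_mem _ hv)
  grind

theorem exists_colInsert_eq_and_colBump_eq {A : Finset ℤ} {u : ℤ} (hu : u ∈ A → u + 1 ∈ A)
    (h : ∃ w ∈ A, u < w) :
    ∃ D x, (x ∈ D → x - 1 ∈ D) ∧ colBump D x = some u ∧ colInsert D x = A ∧ D.card = A.card := by
  by_cases huA : u ∈ A
  · exact ⟨A, u + 1, by simpa using fun _ ↦ huA, by simp [colBump_of_mem (hu huA)],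
      colInsert_of_mem (hu huA), rfl⟩
  have hne : (A.filter (u < ·)).Nonempty := by simpa [Finset.Nonempty] using h
  obtain ⟨x, hx, hmin⟩ := (A.filter (u < ·)).exists_min_image (fun w ↦ w) hne
  simp only [Finset.mem_filter] at hx hmin
  have hb : colBump (insert u (A.erase x)) x = some u := by grind [colBump_eq_some_iff]
  refine ⟨insert u (A.erase x), x, by grind, hb, ?_, ?_⟩
  · ext a
    grind [mem_colInsert]
  · rw [Finset.card_insert_of_notMem (by grind), Finset.card_erase_add_one (by grind)]

/-- If the first two columns of `τ` differ in height, the last letter of `decWord (firstCol τ)`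
joins the first column at its bottom. -/
theorem Admissible.exists_level_zero {τ : List ℤ} (h : Admissible τ)
    (hcard : (firstCol (EG.bumped τ)).card < (firstCol τ).card) :
    ∃ ρ x, CK τ (ρ ++ [x]) ∧ level ρ x = 0 := by
  have hck := ck_bumped_append_firstCol h
  have hne : decWord (firstCol τ) ≠ [] := fun h0 ↦ by
    have := length_decWord (firstCol τ)
    rw [h0, length_nil] at this
    omega
  obtain ⟨L, x, hL⟩ := (eq_nil_or_concat' _).resolve_left hne
  have hcol := (hck.firstCol_eq_and_bumped_ck h).1
  rw [hL] at hck hcol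
  refine ⟨EG.bumped τ ++ L, x, by simpa using hck, level_of_join ?_⟩
  rw [hcol.trans (colInsertWord_append ∅ (EG.bumped τ) (L ++ [x]))] at hcard
  rw [firstCol, colInsertWord_append]
  exact colBump_eq_none_of_card_lt (hL ▸ decWord_pairwise _) hcard

theorem Admissible.exists_level_succ {τ ρ : List ℤ} {x : ℤ} (h : Admissible τ)
    (hck : CK (EG.bumped τ) (ρ ++ [x])) :
    ∃ ρ' x', CK τ (ρ' ++ [x']) ∧ level ρ' x' = level ρ x + 1 := by
  have hck₁ : CK τ (ρ ++ x :: decWord (firstCol τ)) := by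
    simpa using (ck_bumped_append_firstCol h).trans (hck.append_right _)
  have h₁ := h.ck hck₁
  have hlt : ∃ w ∈ firstCol τ, x < w := by
    by_contra! hle
    have hx : x ∉ firstCol τ := fun hx ↦ by
      have := hle _ (h₁.right.add_one_mem hx)
      omega
    have hL : (x :: decWord (firstCol τ)).Pairwise (· > ·) := pairwise_cons.2
      ⟨fun w hw ↦ lt_of_le_of_ne (hle w (mem_decWord.1 hw)) fun h0 ↦
        hx (h0 ▸ mem_decWord.1 hw), decWord_pairwise _⟩
    have hlen := h₁.length_le_card_firstCol hL
    rw [← (hck₁.firstCol_eq_and_bumped_ck h).1, length_cons, length_decWord] at hlen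
    omega
  obtain ⟨D, y, hy, hbump, hins, hcard⟩ :=
    exists_colInsert_eq_and_colBump_eq h₁.right.add_one_mem hlt
  have hck₂ : CK τ (ρ ++ decWord D ++ [y]) := by
    have := (decWord_append_ck hy).append_left ρ
    rw [hbump, hins] at this
    rw [append_assoc]
    exact hck₁.trans this.symm
  have h₂ := h.ck hck₂
  have hD : firstCol (ρ ++ decWord D) = D := by
    refine (Finset.eq_of_subset_of_card_le (fun s hs ↦ ?_) ?_).symm
    · rw [firstCol, colInsertWord_append]
      exact mem_colInsertWord_of_mem (decWord_pairwise D) _ (mem_decWord.2 hs)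
    · rw [hcard, (hck₂.firstCol_eq_and_bumped_ck h).1, firstCol_append_singleton]
      exact card_le_card_colInsertWord _ [y]
  refine ⟨ρ ++ decWord D, y, hck₂, ?_⟩
  rw [level_of_bump (hD.symm ▸ hbump),
    (h₂.left.bumped_ck_of_firstCol_eq hD).level_eq h₂.left.bumped]

theorem Admissible.exists_level_eq {τ : List ℤ} (h : Admissible τ) {c : ℕ}
    (hcard : (firstCol (EG.bumped^[c + 1] τ)).card < (firstCol (EG.bumped^[c] τ)).card) :
    ∃ ρ x, CK τ (ρ ++ [x]) ∧ level ρ x = c := by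
  induction c generalizing τ with
  | zero => exact h.exists_level_zero hcard
  | succ c ih =>
    obtain ⟨ρ, x, hck, rfl⟩ := ih h.bumped hcard
    exact h.exists_level_succ hck

theorem Admissible.iterate_bumped {τ : List ℤ} (h : Admissible τ) (c : ℕ) :
    Admissible (EG.bumped^[c] τ) := by
  induction c generalizing τ with
  | zero => exact h
  | succ _ ih => exact ih h.bumped

theorem Admissible.lt_rowLength_iff {τ : List ℤ} (h : Admissible τ) {c : ℕ} {r : ℤ} :
    c < rowLength τ r ↔ -r ∈ mirrorCol (EG.bumped^[c] τ) := by
  induction c generalizing τ with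
  | zero => exact h.rowLength_pos r
  | succ c ih =>
    rw [Function.iterate_succ_apply, ← ih h.bumped, rowLength_eq τ]
    have hpos := h.bumped.rowLength_pos r
    have hsub : -r ∈ mirrorCol (EG.bumped τ) → -r ∈ mirrorCol τ := (h.mirrorCol_bumped_subset ·)
    grind

theorem Admissible.exists_removeCell {τ : List ℤ} (h : Admissible τ) {r : ℤ} {c : ℕ}
    (hr : rowLength τ r = c + 1) (hmin : ∀ r' < r, rowLength τ r' ≠ c + 1) :
    ∃ ρ x, CK τ (ρ ++ [x]) ∧ level ρ x = c ∧
      ∀ r', rowLength τ r' = rowLength ρ r' + if r' = r then 1 else 0 := by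
  have hmem : -r ∈ mirrorCol (EG.bumped^[c] τ) := h.lt_rowLength_iff.1 (by omega)
  have hnot : -r ∉ mirrorCol (EG.bumped^[c + 1] τ) := by
    rw [← h.lt_rowLength_iff]
    omega
  have hcard : (firstCol (EG.bumped^[c + 1] τ)).card < (firstCol (EG.bumped^[c] τ)).card := by
    rw [← (h.iterate_bumped _).card_mirrorCol, ← (h.iterate_bumped _).card_mirrorCol]
    refine Finset.card_lt_card ⟨?_, fun hsub ↦ hnot (hsub hmem)⟩
    rw [Function.iterate_succ_apply']
    exact (h.iterate_bumped c).mirrorCol_bumped_subset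
  obtain ⟨ρ, x, hck, rfl⟩ := h.exists_level_eq hcard
  obtain ⟨s, hadd, hlen, hlow⟩ := (h.ck hck).exists_addsCell
  rw [hck.rowLength_eq h] at hr hmin ⊢
  have hs : rowLength (ρ ++ [x]) s = level ρ x + 1 := by rw [hadd, if_pos rfl, hlen]
  obtain rfl : s = r := le_antisymm (not_lt.1 fun hlt ↦ hlow r hlt hr)
    (not_lt.1 fun hlt ↦ hmin s hlt hs)
  exact ⟨ρ, x, hck, rfl, hadd⟩

theorem mem_of_mem_colInsertWord {A : Finset ℤ} {ρ : List ℤ} {s : ℤ}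
    (h : s ∈ colInsertWord A ρ) : s ∈ A ∨ s ∈ ρ := by
  induction ρ generalizing A with
  | nil => exact Or.inl h
  | cons v ρ ih => grind [ih h, mem_colInsert]

theorem exists_mem_colInsert_ge {A : Finset ℤ} {v s : ℤ} (h : s ∈ A ∨ s = v) :
    ∃ s' ∈ colInsert A v, s ≤ s' := by
  by_cases hs : s ∈ colInsert A v
  · exact ⟨s, hs, le_rfl⟩
  · refine ⟨v, self_mem_colInsert A v, ?_⟩
    grind [mem_colInsert, colBump_eq_some_iff]

theorem exists_mem_colInsertWord_ge {A : Finset ℤ} {ρ : List ℤ} {s : ℤ} (h : s ∈ A ∨ s ∈ ρ) :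
    ∃ s' ∈ colInsertWord A ρ, s ≤ s' := by
  induction ρ generalizing A s with
  | nil => exact ⟨s, by simpa [colInsertWord] using h, le_rfl⟩
  | cons v ρ ih =>
    by_cases hs : s ∈ ρ
    · exact ih (Or.inr hs)
    obtain ⟨s', hs', hle⟩ := exists_mem_colInsert_ge (A := A) (v := v) (s := s) (by grind)
    obtain ⟨s'', hs'', hle'⟩ := ih (Or.inl hs')
    exact ⟨s'', hs'', hle.trans hle'⟩

theorem Admissible.mem_of_rowLength_pos {ρ : List ℤ} (h : Admissible ρ) {r : ℤ}
    (hr : 0 < rowLength ρ r) : r ∈ ρ := by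
  simpa [mem_mirror] using mem_of_mem_colInsertWord ((h.rowLength_pos r).1 hr)

theorem Admissible.exists_rowLength_pos_le {ρ : List ℤ} (h : Admissible ρ) {x : ℤ} (hx : x ∈ ρ) :
    ∃ r ≤ x, 0 < rowLength ρ r := by
  obtain ⟨s, hs, hle⟩ := exists_mem_colInsertWord_ge (A := ∅) (ρ := EG.mirror ρ) (s := -x)
    (Or.inr (by simpa [mem_mirror] using hx))
  exact ⟨-s, by omega, (h.rowLength_pos _).2 (by rwa [neg_neg])⟩

theorem Admissible.ne_of_append {ρ : List ℤ} {v u : ℤ} (h : Admissible (ρ ++ [v] ++ [u])) :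
    v ≠ u := by
  rintro rfl
  exact h _ (CK.refl _) (Or.inl ⟨ρ, [], v, by simp⟩)

/-! ## Reduced words as integer words -/

/-- A word in the naturals, read as a word in the integers. -/
def toInts (ρ : List ℕ) : List ℤ := ρ.map Nat.cast

/-- The inverse of `toInts` on words with positive letters; other letters become `0`. -/
def toNats (ρ : List ℤ) : List ℕ := ρ.map Int.toNat

/-- The integer words that behave like reduced words of permutations of the positive integers. -/
structure PosAdmissible (ρ : List ℤ) : Prop where
  admissible : Admissible ρ
  one_le : ∀ x ∈ ρ, 1 ≤ x

theorem PosAdmissible.ck {ρ σ : List ℤ} (h : PosAdmissible ρ) (h' : CK ρ σ) : PosAdmissible σ :=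
  ⟨h.admissible.ck h', fun x hx ↦ h.one_le x ((h'.mem_iff x).2 hx)⟩

theorem PosAdmissible.left {ρ q : List ℤ} (h : PosAdmissible (ρ ++ q)) : PosAdmissible ρ :=
  ⟨h.admissible.left, fun x hx ↦ h.one_le x (mem_append_left _ hx)⟩

theorem toNats_toInts (ρ : List ℕ) : toNats (toInts ρ) = ρ := by
  simp [toNats, toInts, Function.comp_def]

theorem toInts_toNats {ρ : List ℤ} (h : ∀ x ∈ ρ, 1 ≤ x) : toInts (toNats ρ) = ρ := by
  rw [toInts, toNats, map_map]
  refine map_congr_left (g := id) (fun x hx ↦ ?_) |>.trans (map_id ρ)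
  exact Int.toNat_of_nonneg (zero_le_one.trans (h x hx))

theorem toInts_append (ρ σ : List ℕ) : toInts (ρ ++ σ) = toInts ρ ++ toInts σ := map_append

theorem toNats_append (ρ σ : List ℤ) : toNats (ρ ++ σ) = toNats ρ ++ toNats σ := map_append

theorem one_le_toInts {ρ : List ℕ} (h : ∀ i ∈ ρ, 1 ≤ i) : ∀ x ∈ toInts ρ, 1 ≤ x := by
  simpa [toInts] using h

theorem one_le_toNats {ρ : List ℤ} (h : ∀ x ∈ ρ, 1 ≤ x) : ∀ i ∈ toNats ρ, 1 ≤ i := by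
  simp only [toNats, mem_map, forall_exists_index, and_imp, forall_apply_eq_imp_iff₂]
  intro x hx
  have := h x hx
  omega

theorem toPerm_append (ρ σ : List ℕ) : toPerm (ρ ++ σ) = toPerm ρ * toPerm σ := by simp [toPerm]

theorem swap_mul_swap_of_add_two_le {a b : ℕ} (h : a + 2 ≤ b) :
    Equiv.swap a (a + 1) * Equiv.swap b (b + 1) = Equiv.swap b (b + 1) * Equiv.swap a (a + 1) := by
  ext x
  simp only [Equiv.Perm.coe_mul, Function.comp, Equiv.swap_apply_def]
  grind

theorem swap_braid (a : ℕ) :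
    Equiv.swap a (a + 1) * Equiv.swap (a + 1) (a + 1 + 1) * Equiv.swap a (a + 1) =
      Equiv.swap (a + 1) (a + 1 + 1) * Equiv.swap a (a + 1) *
        Equiv.swap (a + 1) (a + 1 + 1) := by
  ext x
  simp only [Equiv.Perm.coe_mul, Function.comp, Equiv.swap_apply_def]
  grind

theorem CKTriple.toPerm_eq {l m : List ℤ} (h : CKTriple l m) (hl : ∀ x ∈ l, 1 ≤ x) :
    toPerm (toNats l) = toPerm (toNats m) := by
  cases h with
  | @swapLast x y z hxy hyz =>
    have hx := hl x (by simp)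
    simp [toPerm, toNats, swap_mul_swap_of_add_two_le (a := x.toNat) (b := z.toNat) (by omega)]
  | @swapFirst x y z hxy hyz =>
    have hx := hl x (by simp)
    simp [toPerm, toNats, ← mul_assoc,
      swap_mul_swap_of_add_two_le (a := x.toNat) (b := z.toNat) (by omega)]
  | @braid a b hab =>
    have ha := hl a (by simp)
    have hb : b.toNat = a.toNat + 1 := by omega
    simp [toPerm, toNats, ← mul_assoc, hb, swap_braid]

theorem CK.toPerm_eq {ρ σ : List ℤ} (h : CK ρ σ) (hρ : ∀ x ∈ ρ, 1 ≤ x) :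
    toPerm (toNats ρ) = toPerm (toNats σ) := by
  induction h with
  | rel _ _ h =>
    obtain ⟨p, q, l, m, h, rfl, rfl⟩ := h
    simp only [toNats_append, toPerm_append, h.toPerm_eq fun x hx ↦ hρ x (by simp [hx])]
  | refl _ => rfl
  | symm _ _ h ih => exact (ih fun x hx ↦ hρ x ((CK.mem_iff h x).1 hx)).symm
  | trans _ _ _ h _ ih₁ ih₂ =>
    exact (ih₁ hρ).trans (ih₂ fun x hx ↦ hρ x ((CK.mem_iff h x).2 hx))

theorem ReducedWordFor.toNats_of_ck {ρ : List ℕ} {w : Equiv.Perm ℕ} {σ : List ℤ}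
    (h : ReducedWordFor ρ w) (hck : CK (toInts ρ) σ) :
    toInts (toNats σ) = σ ∧ ReducedWordFor (toNats σ) w := by
  have hρ := one_le_toInts h.1.1
  have hσ : ∀ x ∈ σ, 1 ≤ x := fun x hx ↦ hρ x ((hck.mem_iff x).2 hx)
  have hperm := hck.toPerm_eq hρ
  have hlen : ρ.length = (toNats σ).length := by
    simpa [toInts, toNats] using hck.length_eq
  rw [toNats_toInts] at hperm
  refine ⟨toInts_toNats hσ, ⟨one_le_toNats hσ, fun τ hτ hτσ ↦ ?_⟩, hperm.symm.trans h.2⟩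
  exact hlen ▸ h.1.2 τ hτ (hτσ.trans hperm.symm)

theorem IsReducedWord.of_ck {ρ σ : List ℕ} (h : IsReducedWord ρ) (hck : CK (toInts ρ) (toInts σ)) :
    IsReducedWord σ :=
  toNats_toInts σ ▸ (ReducedWordFor.toNats_of_ck ⟨h, rfl⟩ hck).2.1

theorem IsReducedWord.not_hasRepeat {ρ : List ℕ} (h : IsReducedWord ρ) :
    ¬ HasRepeat (toInts ρ) := by
  rintro (⟨p, q, a, hρ⟩ | ⟨p, q, a, b, hab, hρ⟩)
  all_goals
    have hpos := hρ ▸ one_le_toInts h.1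
    have hρ := (toNats_toInts ρ).symm.trans (congrArg toNats hρ)
    simp only [toNats_append] at hρ
    subst hρ
  · have hshort := h.2 (toNats (p ++ q)) (one_le_toNats fun x hx ↦ hpos x (by simp at hx ⊢; tauto))
      (by simp [toNats, toPerm])
    simp [toNats] at hshort
  · have ha := hpos a (by simp)
    have hb := hpos b (by simp)
    have hcomm : Equiv.swap b.toNat (b.toNat + 1) * Equiv.swap a.toNat (a.toNat + 1) =
        Equiv.swap a.toNat (a.toNat + 1) * Equiv.swap b.toNat (b.toNat + 1) := by
      rcases hab with h | h
      · exact swap_mul_swap_of_add_two_le (by omega)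
      · exact (swap_mul_swap_of_add_two_le (by omega)).symm
    have hshort := h.2 (toNats (p ++ [b] ++ q))
      (one_le_toNats fun x hx ↦ hpos x (by simp at hx ⊢; tauto))
      (by
        simp only [toNats, toPerm, map_append, map_cons, map_nil, prod_append, prod_cons, prod_nil,
          mul_assoc, mul_one]
        rw [← mul_assoc (Equiv.swap b.toNat _) (Equiv.swap a.toNat _), hcomm]
        simp [mul_assoc])
    simp [toNats] at hshort

theorem IsReducedWord.posAdmissible {ρ : List ℕ} (h : IsReducedWord ρ) :
    PosAdmissible (toInts ρ) :=
  ⟨fun σ hck ↦ by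
    obtain ⟨hσ, hred⟩ := ReducedWordFor.toNats_of_ck ⟨h, rfl⟩ hck
    exact hσ ▸ hred.1.not_hasRepeat, one_le_toInts h.1⟩

theorem ckMove_append (p q : List ℕ) (a b c : ℕ) :
    ckMove (q.length + 2) (p ++ [a, b, c] ++ q) =
      p ++ [(ckTriple a b c).1, (ckTriple a b c).2.1, (ckTriple a b c).2.2] ++ q := by
  have hpos : (p ++ [a, b, c] ++ q).length - (q.length + 2) - 1 = p.length := by simp; omega
  have hlen : 2 ≤ q.length + 2 ∧ q.length + 2 + 1 ≤ (p ++ [a, b, c] ++ q).length := by simp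
  rw [ckMove, if_pos hlen]
  simp only [hpos]
  simp [getD_eq_getElem?_getD]

theorem exists_eq_append_triple {ρ : List ℕ} {i : ℕ} (h₂ : 2 ≤ i) (hi : i + 1 ≤ ρ.length) :
    ∃ p a b c q, ρ = p ++ [a, b, c] ++ q ∧ i = q.length + 2 := by
  have hlen : (ρ.drop (ρ.length - i - 1)).length = i + 1 := by simp; omega
  rcases hdrop : ρ.drop (ρ.length - i - 1) with _ | ⟨a, _ | ⟨b, _ | ⟨c, q⟩⟩⟩ <;>
    simp only [hdrop, length_nil, length_cons] at hlen
  any_goals omega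
  refine ⟨ρ.take (ρ.length - i - 1), a, b, c, q, ?_, by omega⟩
  rw [append_assoc, cons_append, cons_append, cons_append, nil_append, ← hdrop, take_append_drop]

theorem CKEquiv.refl (ρ : List ℕ) : CKEquiv ρ ρ := ⟨[], rfl⟩

theorem CKEquiv.trans {ρ σ τ : List ℕ} (h : CKEquiv ρ σ) (h' : CKEquiv σ τ) : CKEquiv ρ τ := by
  obtain ⟨m, rfl⟩ := h
  obtain ⟨m', rfl⟩ := h'
  exact ⟨m ++ m', by rw [foldl_append]⟩

theorem ckEquiv_of_ckTriple (p q : List ℕ) {a b c a' b' c' : ℕ}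
    (h : ckTriple a b c = (a', b', c')) :
    CKEquiv (p ++ [a, b, c] ++ q) (p ++ [a', b', c'] ++ q) :=
  ⟨[q.length + 2], by rw [foldl_cons, foldl_nil, ckMove_append, h]⟩

theorem CKTriple.ckEquiv {l m : List ℤ} (h : CKTriple l m) (hl : ∀ x ∈ l, 1 ≤ x) (p q : List ℕ) :
    CKEquiv (p ++ toNats l ++ q) (p ++ toNats m ++ q) ∧
      CKEquiv (p ++ toNats m ++ q) (p ++ toNats l ++ q) := by
  cases h with
  | @swapLast x y z hxy hyz =>
    have hx := hl x (by simp)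
    constructor <;> apply ckEquiv_of_ckTriple <;> grind [ckTriple]
  | @swapFirst x y z hxy hyz =>
    have hx := hl x (by simp)
    constructor <;> apply ckEquiv_of_ckTriple <;> grind [ckTriple]
  | braid hab => constructor <;> apply ckEquiv_of_ckTriple <;> simp [ckTriple]

theorem CK.ckEquiv {ρ σ : List ℤ} (h : CK ρ σ) (hρ : ∀ x ∈ ρ, 1 ≤ x) :
    CKEquiv (toNats ρ) (toNats σ) ∧ CKEquiv (toNats σ) (toNats ρ) := by
  induction h with
  | rel _ _ h =>
    obtain ⟨p, q, l, m, h, rfl, rfl⟩ := h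
    simp only [toNats_append]
    exact h.ckEquiv (fun x hx ↦ hρ x (by simp [hx])) _ _
  | refl _ => exact ⟨CKEquiv.refl _, CKEquiv.refl _⟩
  | symm _ _ h ih => exact (ih fun x hx ↦ hρ x ((CK.mem_iff h x).1 hx)).symm
  | trans _ _ _ h _ ih₁ ih₂ =>
    obtain ⟨h₁, h₁'⟩ := ih₁ hρ
    obtain ⟨h₂, h₂'⟩ := ih₂ fun x hx ↦ hρ x ((CK.mem_iff h x).2 hx)
    exact ⟨h₁.trans h₂, h₂'.trans h₁'⟩

theorem Admissible.ck_ckTriple {a b c : ℕ} (h : Admissible (toInts [a, b, c])) :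
    CK (toInts [a, b, c])
      (toInts [(ckTriple a b c).1, (ckTriple a b c).2.1, (ckTriple a b c).2.2]) := by
  unfold ckTriple
  split_ifs with hac hlast hfirst
  · subst hac
    have hab : b = a + 1 ∨ a = b + 1 := by
      by_contra hne
      refine h _ (CK.refl _) ?_
      rcases eq_or_ne a b with rfl | hab
      · exact Or.inl ⟨[], [(a : ℤ)], a, rfl⟩
      · exact Or.inr ⟨[], [], a, b, by omega, rfl⟩
    rcases hab with hab | hab
    · exact (CKTriple.braid (by omega)).ck
    · exact (CKTriple.braid (by omega)).ck.symm
  · rcases hlast with h | h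
    · exact (CKTriple.swapLast (by omega) (by omega)).ck
    · exact (CKTriple.swapLast (by omega) (by omega)).ck.symm
  · rcases hfirst with h | h
    · exact (CKTriple.swapFirst (by omega) (by omega)).ck
    · exact (CKTriple.swapFirst (by omega) (by omega)).ck.symm
  · exact CK.refl _

theorem IsReducedWord.ck_ckMove {ρ : List ℕ} (h : IsReducedWord ρ) (i : ℕ) :
    CK (toInts ρ) (toInts (ckMove i ρ)) := by
  by_cases hi : 2 ≤ i ∧ i + 1 ≤ ρ.length
  · obtain ⟨p, a, b, c, q, rfl, rfl⟩ := exists_eq_append_triple hi.1 hi.2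
    have hadm := h.posAdmissible.admissible
    rw [ckMove_append]
    simp only [toInts_append] at hadm ⊢
    exact hadm.of_append_append.ck_ckTriple.append_append _ _
  · rw [ckMove, if_neg hi]
    exact CK.refl _

theorem IsReducedWord.ckEquiv_iff {ρ σ : List ℕ} (h : IsReducedWord ρ) :
    CKEquiv ρ σ ↔ CK (toInts ρ) (toInts σ) := by
  constructor
  · rintro ⟨ms, rfl⟩
    induction ms generalizing ρ with
    | nil => exact CK.refl _
    | cons i ms ih =>
      have hi := h.ck_ckMove i
      exact hi.trans (ih (h.of_ck hi))
  · intro hck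
    simpa only [toNats_toInts] using (hck.ckEquiv (one_le_toInts h.1)).1

/-! ## Recording words -/

/-- The condition on the order in which the rows of a diagram (bottom row `0`) receive their cells
that characterises standard key tableaux: when row `r` receives a cell, no lower row is exactly one
cell longer than row `r`. -/
def KeyLattice (s : List ℕ) : Prop :=
  ∀ p r q, s = p ++ r :: q → ∀ r' < r, count r' p ≠ count r p + 1

theorem keyLattice_append_singleton {p : List ℕ} {r : ℕ} :
    KeyLattice (p ++ [r]) ↔ KeyLattice p ∧ ∀ r' < r, count r' p ≠ count r p + 1 := by
  refine ⟨fun h ↦ ⟨fun p' r' q hp ↦ h p' r' (q ++ [r]) (by simp [hp]), h p r [] rfl⟩, ?_⟩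
  rintro ⟨h, hr⟩ p' r' q hp
  rcases eq_nil_or_concat' q with rfl | ⟨q, z, rfl⟩
  · obtain ⟨rfl, heq⟩ := append_inj' hp rfl
    cases heq
    exact hr
  · rw [← cons_append, ← append_assoc] at hp
    exact h p' r' q (append_inj' hp rfl).1

/-- The row, counted from `0`, in which the tableau of `ρ` grows when the letter `x` is appended.
`rowLength` counts rows from `1`, hence the shift. -/
noncomputable def addedRow (ρ : List ℤ) (x : ℤ) : ℕ :=
  sInf {r : ℕ | rowLength ρ (r + 1) < rowLength (ρ ++ [x]) (r + 1)}

theorem addedRow_eq {ρ : List ℤ} {x : ℤ} {r : ℕ}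
    (h : ∀ r', rowLength (ρ ++ [x]) r' = rowLength ρ r' + if r' = (r : ℤ) + 1 then 1 else 0) :
    addedRow ρ x = r := by
  have hset : {r : ℕ | rowLength ρ (r + 1) < rowLength (ρ ++ [x]) (r + 1)} = {r} := by
    ext k
    rw [Set.mem_ofPred_eq, h, Set.mem_singleton_iff]
    split_ifs <;> omega
  rw [addedRow, hset, csInf_singleton]

theorem PosAdmissible.rowLength_eq_zero {ρ : List ℤ} (h : PosAdmissible ρ) {r : ℤ} (hr : r ≤ 0) :
    rowLength ρ r = 0 := by
  by_contra hne
  have := h.one_le r (h.admissible.mem_of_rowLength_pos (Nat.pos_of_ne_zero hne))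
  omega

theorem PosAdmissible.addsCell {ρ : List ℤ} {x : ℤ} (h : PosAdmissible (ρ ++ [x])) :
    AddsCell ρ x (addedRow ρ x + 1) := by
  obtain ⟨r, hr⟩ := h.admissible.exists_addsCell
  have hpos : 1 ≤ r := by
    by_contra hneg
    have hzero := h.rowLength_eq_zero (r := r) (by omega)
    rw [hr.1, if_pos rfl] at hzero
    omega
  obtain ⟨k, rfl⟩ : ∃ k : ℕ, r = (k : ℤ) + 1 := ⟨(r - 1).toNat, by omega⟩
  rwa [addedRow_eq hr.1]

/-- The recording word: the rows in which successive letters of `ρ` add a cell. -/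
noncomputable def recording (ρ : List ℤ) : List ℕ :=
  (range ρ.length).map fun i ↦ addedRow (ρ.take i) (ρ.getD i 0)

theorem recording_append_singleton (ρ : List ℤ) (x : ℤ) :
    recording (ρ ++ [x]) = recording ρ ++ [addedRow ρ x] := by
  simp only [recording, length_append, length_singleton, range_succ, map_append, map_singleton]
  congr 1
  · refine map_congr_left fun i hi ↦ ?_
    have hi := mem_range.1 hi
    rw [take_append_of_le_length hi.le, getD_append _ _ _ _ hi]
  · simp

theorem length_recording (ρ : List ℤ) : (recording ρ).length = ρ.length := by simp [recording]

theorem PosAdmissible.count_recording {ρ : List ℤ} (h : PosAdmissible ρ) (i : ℕ) :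
    count i (recording ρ) = rowLength ρ (i + 1) := by
  induction ρ using List.reverseRecOn with
  | nil => simp [recording, rowLength_nil]
  | append_singleton ρ x ih =>
    rw [recording_append_singleton, count_append, ih h.left, h.addsCell.1, count_singleton]
    grind

theorem PosAdmissible.level_eq_count {ρ : List ℤ} {x : ℤ} (h : PosAdmissible (ρ ++ [x])) :
    level ρ x = count (addedRow ρ x) (recording ρ) := by
  rw [h.left.count_recording, h.addsCell.2.1]

theorem PosAdmissible.keyLattice_recording {ρ : List ℤ} (h : PosAdmissible ρ) :
    KeyLattice (recording ρ) := by
  induction ρ using List.reverseRecOn with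
  | nil =>
    rintro p r q h
    simp [recording] at h
  | append_singleton ρ x ih =>
    obtain ⟨hadd, -, hlow⟩ := h.addsCell
    rw [recording_append_singleton, keyLattice_append_singleton]
    refine ⟨ih h.left, fun r' hr' ↦ ?_⟩
    have := hlow (r' + 1) (by omega)
    rwa [hadd, if_neg (by omega), add_zero, ← h.left.count_recording, h.level_eq_count] at this

theorem PosAdmissible.eq_of_recording_eq {σ σ' : List ℤ} (h : PosAdmissible σ) (hck : CK σ σ')
    (heq : recording σ = recording σ') : σ = σ' := by
  induction σ using List.reverseRecOn generalizing σ' with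
  | nil => exact (length_eq_zero_iff.1 hck.length_eq.symm).symm
  | append_singleton σ x ih =>
    rcases eq_nil_or_concat' σ' with rfl | ⟨σ', y, rfl⟩
    · simpa using hck.length_eq
    rw [recording_append_singleton, recording_append_singleton] at heq
    obtain ⟨hinit, hrow⟩ := append_inj' heq rfl
    obtain ⟨rfl, hck'⟩ := h.admissible.eq_and_ck_of_append hck (by
      rw [h.level_eq_count, (h.ck hck).level_eq_count, hinit, singleton_inj.1 hrow])
    rw [ih h.left hck' hinit]

theorem PosAdmissible.exists_recording_eq {τ : List ℤ} {s : List ℕ} (h : PosAdmissible τ)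
    (hs : KeyLattice s) (hcount : ∀ i, count i s = count i (recording τ)) :
    ∃ σ, CK τ σ ∧ recording σ = s := by
  induction s using List.reverseRecOn generalizing τ with
  | nil =>
    have hnil : recording τ = [] := (perm_iff_count.2 hcount).nil_eq.symm
    have hτ : τ = [] := by rw [← length_eq_zero_iff, ← length_recording, hnil, length_nil]
    exact ⟨[], hτ ▸ CK.refl _, rfl⟩
  | append_singleton s r ih =>
    obtain ⟨hs, hr⟩ := keyLattice_append_singleton.1 hs
    have hcount' (i : ℕ) : rowLength τ (i + 1) = count i s + if i = r then 1 else 0 := by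
      rw [← h.count_recording, ← hcount, count_append, count_singleton]
      grind
    obtain ⟨ρ, x, hck, -, hadd⟩ := h.admissible.exists_removeCell (r := r + 1) (c := count r s)
      (by rw [hcount', if_pos rfl]) fun r' hr' heq ↦ by
        have hpos : 0 < r' := by
          by_contra hneg
          rw [h.rowLength_eq_zero (not_lt.1 hneg)] at heq
          omega
        obtain ⟨k, rfl⟩ : ∃ k : ℕ, r' = (k : ℤ) + 1 := ⟨(r' - 1).toNat, by omega⟩
        rw [hcount', if_neg (by omega), add_zero] at heq
        exact hr k (by omega) heq
    have hρ := h.ck hck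
    obtain ⟨σ, hckσ, rfl⟩ := ih hρ.left hs fun i ↦ by
      have hi := hcount' i
      rw [hadd, ← hρ.left.count_recording] at hi
      split_ifs at hi <;> omega
    have hckσ' := hck.trans (hckσ.append_right [x])
    refine ⟨σ ++ [x], hckσ', ?_⟩
    rw [recording_append_singleton, addedRow_eq (r := r) fun r' ↦ ?_]
    rw [← hckσ'.rowLength_eq h.admissible, hadd, hckσ.rowLength_eq hρ.left.admissible]

/-! ## Standard key tableaux as recording words -/

/-- The entries of row `r` of the filling in which the letters of a word, read from left to right,
name the rows receiving the entries `n, …, 2, 1`. -/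
def entriesOf (r : ℕ) : List ℕ → List ℕ
  | [] => []
  | x :: s => if x = r then (s.length + 1) :: entriesOf r s else entriesOf r s

/-- The filling, with `N` rows, whose entries `n, …, 2, 1` lie in the rows named by the successive
letters of `s`. -/
def fill (N : ℕ) (s : List ℕ) : List (List ℕ) := (range N).map fun r ↦ entriesOf r s

theorem length_entriesOf (r : ℕ) (s : List ℕ) : (entriesOf r s).length = count r s := by
  induction s with
  | nil => rfl
  | cons x s ih => grind [entriesOf]

theorem entriesOf_append (r : ℕ) (p q : List ℕ) :
    entriesOf r (p ++ q) = (entriesOf r p).map (· + q.length) ++ entriesOf r q := by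
  induction p with
  | nil => rfl
  | cons x p ih => grind [entriesOf]

theorem pos_and_le_length_of_mem_entriesOf {r e : ℕ} {s : List ℕ} (h : e ∈ entriesOf r s) :
    0 < e ∧ e ≤ s.length := by
  induction s with
  | nil => simp [entriesOf] at h
  | cons x s ih => grind [entriesOf]

theorem pairwise_entriesOf (r : ℕ) (s : List ℕ) : (entriesOf r s).Pairwise (· > ·) := by
  induction s with
  | nil => exact Pairwise.nil
  | cons x s ih =>
    have hle (e) (h : e ∈ entriesOf r s) := (pos_and_le_length_of_mem_entriesOf h).2
    rw [entriesOf]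
    split_ifs
    · exact ih.cons fun e he ↦ Nat.lt_succ_of_le (hle e he)
    · exact ih

theorem lt_getD_entriesOf {r c : ℕ} (p q : List ℕ) :
    q.length < (entriesOf r (p ++ q)).getD c 0 ↔ c < count r p := by
  rw [entriesOf_append, ← length_entriesOf]
  have hp (e) (h : e ∈ entriesOf r p) := (pos_and_le_length_of_mem_entriesOf h).1
  have hq (e) (h : e ∈ entriesOf r q) := (pos_and_le_length_of_mem_entriesOf h).2
  by_cases hc : c < (entriesOf r p).length
  · have := hp _ (getElem_mem hc)
    grind
  · by_cases hc' : c - (entriesOf r p).length < (entriesOf r q).length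
    · have := hq _ (getElem_mem hc')
      grind
    · grind

theorem getD_entriesOf (r : ℕ) (p q : List ℕ) :
    (entriesOf r (p ++ r :: q)).getD (count r p) 0 = q.length + 1 := by
  simp [entriesOf_append, ← length_entriesOf, entriesOf]

theorem exists_eq_append_of_lt_count {r c : ℕ} {s : List ℕ} (hc : c < count r s) :
    ∃ p q, s = p ++ r :: q ∧ count r p = c := by
  induction s generalizing c with
  | nil => simp at hc
  | cons x s ih =>
    by_cases hx : x = r
    · rcases c with _ | c
      · exact ⟨[], s, by rw [hx, nil_append], count_nil⟩
      · obtain ⟨p, q, rfl, hp⟩ := ih (c := c) (by grind)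
        exact ⟨x :: p, q, rfl, by grind⟩
    · obtain ⟨p, q, rfl, hp⟩ := ih (c := c) (by grind)
      exact ⟨x :: p, q, rfl, by grind⟩

theorem length_fill (N : ℕ) (s : List ℕ) : (fill N s).length = N := by simp [fill]

theorem getD_fill {N r : ℕ} (s : List ℕ) (hr : r < N) : (fill N s).getD r [] = entriesOf r s := by
  simp [fill, hr]

theorem map_length_fill (N : ℕ) (s : List ℕ) :
    (fill N s).map length = (range N).map fun r ↦ count r s := by
  simp [fill, length_entriesOf]

theorem mem_entriesOf_append_cons {r r' : ℕ} {p q : List ℕ} :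
    q.length + 1 ∈ entriesOf r' (p ++ r :: q) ↔ r' = r := by
  have hp (e) (h : e ∈ entriesOf r' p) := (pos_and_le_length_of_mem_entriesOf h).1
  have hq (e) (h : e ∈ entriesOf r' q) := (pos_and_le_length_of_mem_entriesOf h).2
  rw [entriesOf_append]
  grind [entriesOf]

theorem rowOf_fill_append_cons {N r : ℕ} (p q : List ℕ) (hr : r < N) :
    rowOf (fill N (p ++ r :: q)) (q.length + 1) = r := by
  rw [rowOf, findIdx_eq (by simpa [length_fill])]
  simp only [fill, getElem_map, getElem_range, contains_eq_mem, mem_entriesOf_append_cons]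
  grind

theorem colOf_fill_append_cons {N r : ℕ} (p q : List ℕ) (hr : r < N) :
    colOf (fill N (p ++ r :: q)) (q.length + 1) = count r p := by
  have hp (e) (h : e ∈ entriesOf r p) := (pos_and_le_length_of_mem_entriesOf h).1
  rw [colOf, rowOf_fill_append_cons p q hr, getD_fill _ hr, entriesOf_append, ← length_entriesOf,
    findIdx_append]
  grind [entriesOf, findIdx_eq_length]

theorem eq_take_append_getD_cons_drop {s : List ℕ} {i : ℕ} (hi : i < s.length) :
    s = s.take i ++ s.getD i 0 :: s.drop (i + 1) := by
  rw [getD_eq_getElem _ _ hi, ← drop_eq_getElem_cons hi, take_append_drop]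

theorem rowOf_fill {N i : ℕ} {s : List ℕ} (hs : ∀ r ∈ s, r < N) (hi : i < s.length) :
    rowOf (fill N s) (s.length - i) = s.getD i 0 := by
  have h := rowOf_fill_append_cons (s.take i) (s.drop (i + 1))
    (hs (s.getD i 0) (by grind))
  rwa [← eq_take_append_getD_cons_drop hi, length_drop,
    show s.length - (i + 1) + 1 = s.length - i by omega] at h

theorem colOf_fill {N i : ℕ} {s : List ℕ} (hs : ∀ r ∈ s, r < N) (hi : i < s.length) :
    colOf (fill N s) (s.length - i) = count (s.getD i 0) (s.take i) := by
  have h := colOf_fill_append_cons (s.take i) (s.drop (i + 1))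
    (hs (s.getD i 0) (by grind))
  rwa [← eq_take_append_getD_cons_drop hi, length_drop,
    show s.length - (i + 1) + 1 = s.length - i by omega] at h

theorem fill_cons (N x : ℕ) (s : List ℕ) :
    fill N (x :: s) = (fill N s).modify x (cons (s.length + 1)) := by
  refine ext_getElem (by simp [length_fill]) fun r h₁ h₂ ↦ ?_
  simp only [fill, getElem_map, getElem_range, getElem_modify, entriesOf]

theorem flatten_modify_cons_perm {T : List (List ℕ)} {x : ℕ} (e : ℕ) (hx : x < T.length) :
    (T.modify x (cons e)).flatten.Perm (e :: T.flatten) := by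
  obtain ⟨A, R, B, rfl, rfl, hmod⟩ := exists_of_modify (cons e) hx
  rw [hmod, flatten_append, flatten_append, flatten_cons, flatten_cons, cons_append]
  exact perm_middle

theorem flatten_fill_perm {N : ℕ} {s : List ℕ} (hs : ∀ r ∈ s, r < N) :
    (fill N s).flatten.Perm (range' 1 s.length) := by
  induction s with
  | nil => simp [fill, entriesOf]
  | cons x s ih =>
    obtain ⟨hx, hs⟩ := forall_mem_cons.1 hs
    rw [fill_cons, length_cons, range'_concat, one_mul, add_comm 1]
    exact (flatten_modify_cons_perm _ (by rwa [length_fill])).trans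
      (((ih hs).cons _).trans (perm_append_singleton _ _).symm)

theorem exists_eq_modify_cons {n : ℕ} {T : List (List ℕ)} (hrow : ∀ R ∈ T, R.Pairwise (· > ·))
    (hle : ∀ e ∈ T.flatten, e ≤ n) (hn : n ∈ T.flatten) :
    ∃ (x : ℕ) (T' : List (List ℕ)), T = T'.modify x (cons n) ∧ x < T'.length ∧
      ∀ R ∈ T', R.Pairwise (· > ·) := by
  obtain ⟨R, hRT, hnR⟩ := mem_flatten.1 hn
  obtain ⟨A, B, rfl⟩ := append_of_mem hRT
  rcases R with _ | ⟨m, R⟩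
  · simp at hnR
  have hR := pairwise_cons.1 (hrow _ hRT)
  obtain rfl : m = n := by
    have := hle m (mem_flatten.2 ⟨_, hRT, mem_cons_self⟩)
    grind
  refine ⟨A.length, A ++ R :: B, ?_, by simp, by grind⟩
  simp [modify_eq_take_cons_drop]

theorem exists_fill_eq {n : ℕ} {T : List (List ℕ)} (hrow : ∀ R ∈ T, R.Pairwise (· > ·))
    (hperm : T.flatten.Perm (range' 1 n)) :
    ∃ s : List ℕ, s.length = n ∧ (∀ r ∈ s, r < T.length) ∧ fill T.length s = T := by
  induction n generalizing T with
  | zero =>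
    refine ⟨[], rfl, by simp, ?_⟩
    have hnil := flatten_eq_nil_iff.1 hperm.eq_nil
    refine ext_getElem (length_fill _ _) fun r _ hr ↦ ?_
    simp [fill, entriesOf, hnil _ (getElem_mem hr)]
  | succ n ih =>
    obtain ⟨x, T, rfl, hx, hrow'⟩ := exists_eq_modify_cons (n := n + 1) hrow
      (fun e he ↦ by have := hperm.mem_iff.1 he; grind) (hperm.mem_iff.2 (by grind))
    have hcons := (flatten_modify_cons_perm (n + 1) hx).symm.trans hperm
    rw [range'_concat, one_mul, add_comm 1] at hcons
    obtain ⟨s, rfl, hlt, hfill⟩ := ih hrow' (hcons.trans (perm_append_singleton _ _)).cons_inv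
    rw [length_modify]
    exact ⟨x :: s, rfl, forall_mem_cons.2 ⟨hx, hlt⟩, by rw [fill_cons, hfill]⟩

theorem fill_injOn (N : ℕ) : Set.InjOn (fill N) {s | ∀ r ∈ s, r < N} := by
  intro s hs s' hs' h
  have hlen : s.length = s'.length := by
    simpa [h, (flatten_fill_perm hs').length_eq] using (flatten_fill_perm hs).length_eq.symm
  refine ext_getElem hlen fun i hi hi' ↦ ?_
  rw [← getD_eq_getElem _ 0 hi, ← getD_eq_getElem _ 0 hi', ← rowOf_fill hs hi,
    ← rowOf_fill hs' hi', h, hlen]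

/-- The condition on equal columns in the definition of a standard key tableau: an entry below a
smaller one has an even larger entry than the latter to its right. -/
def ColumnCondition (T : List (List ℕ)) : Prop :=
  ∀ lo hi, lo < hi → hi < T.length →
    ∀ c, c < (T.getD hi []).length → c < (T.getD lo []).length →
      (T.getD hi []).getD c 0 < (T.getD lo []).getD c 0 →
      ∃ c', c < c' ∧ c' < (T.getD lo []).length ∧
        (T.getD hi []).getD c 0 < (T.getD lo []).getD c' 0

theorem isSKT_iff {a : List ℕ} {T : List (List ℕ)} :
    IsSKT a T ↔ T.map length = a ∧ (∀ R ∈ T, R.Pairwise (· > ·)) ∧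
      T.flatten.Perm (range' 1 a.sum) ∧ ColumnCondition T := by
  have : (∀ R ∈ T, IsChain (· > ·) R) ↔ ∀ R ∈ T, R.Pairwise (· > ·) :=
    forall₂_congr fun _ _ ↦ isChain_iff_pairwise
  rw [← this]
  rfl

theorem columnCondition_fill_iff {N : ℕ} {s : List ℕ} (hs : ∀ r ∈ s, r < N) :
    ColumnCondition (fill N s) ↔ KeyLattice s := by
  constructor
  · rintro h p r q rfl r' hr' hcount
    have hrN : r < N := hs r (by simp)
    have hlt := lt_getD_entriesOf (r := r') (c := count r p) p (r :: q)
    have hc' : count r p < count r' (p ++ r :: q) := by grind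
    obtain ⟨c', hcc', -, hlt'⟩ := h r' r hr' (by rwa [length_fill]) (count r p)
      (by rw [getD_fill _ hrN, length_entriesOf]; grind)
      (by rwa [getD_fill _ (hr'.trans hrN), length_entriesOf])
      (by rw [getD_fill _ hrN, getD_fill _ (hr'.trans hrN), getD_entriesOf]; grind)
    rw [getD_fill _ hrN, getD_fill _ (hr'.trans hrN), getD_entriesOf] at hlt'
    have := (lt_getD_entriesOf (r := r') p (r :: q)).1 hlt'
    omega
  · intro h lo hi hlt hhi c hc hc' hv
    rw [length_fill] at hhi
    have hlo := hlt.trans hhi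
    rw [getD_fill _ hhi, length_entriesOf] at hc
    rw [getD_fill _ hlo, length_entriesOf] at hc'
    rw [getD_fill _ hhi, getD_fill _ hlo] at hv ⊢
    obtain ⟨p, q, rfl, rfl⟩ := exists_eq_append_of_lt_count hc
    have hne := h p hi q rfl lo hlt
    have hcol (c : ℕ) := lt_getD_entriesOf (r := lo) (c := c) p (hi :: q)
    rw [getD_entriesOf, ← length_cons (a := hi)] at hv ⊢
    rw [hcol] at hv
    refine ⟨count hi p + 1, by omega, ?_, ?_⟩
    · rw [length_entriesOf]
      grind
    · rw [hcol]
      omega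

theorem bijOn_fill_isSKT (a : List ℕ) : Set.BijOn (fill a.length)
    {s | KeyLattice s ∧ ∀ i, count i s = a.getD i 0} {T | IsSKT a T} := by
  have hlt {s : List ℕ} (h : ∀ i, count i s = a.getD i 0) : ∀ r ∈ s, r < a.length := by
    intro r hr
    by_contra hra
    have := h r
    grind
  have hshape (s : List ℕ) : (fill a.length s).map length = a ↔
      ∀ i < a.length, count i s = a.getD i 0 := by
    rw [map_length_fill, ext_getElem_iff]
    simp +contextual
  refine ⟨?_, fun s hs s' hs' ↦ fill_injOn _ (hlt hs.2) (hlt hs'.2), ?_⟩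
  · rintro s ⟨hkey, hcount⟩
    have hfill := (hshape s).2 fun i _ ↦ hcount i
    have hperm := flatten_fill_perm (hlt hcount)
    have hsum : a.sum = s.length := by
      rw [← hfill, ← length_flatten, hperm.length_eq, length_range']
    refine isSKT_iff.2 ⟨hfill, ?_, hsum ▸ hperm, (columnCondition_fill_iff (hlt hcount)).2 hkey⟩
    simp only [fill, mem_map]
    rintro _ ⟨r, -, rfl⟩
    exact pairwise_entriesOf r s
  · intro T hT
    obtain ⟨rfl, hrow, hperm, hcol⟩ := isSKT_iff.1 hT
    obtain ⟨s, -, hs, hfill⟩ := exists_fill_eq hrow hperm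
    rw [← length_map (f := length)] at hfill hs
    refine ⟨s, ⟨(columnCondition_fill_iff hs).1 (by rwa [hfill]), fun i ↦ ?_⟩, hfill⟩
    by_cases hi : i < (T.map length).length
    · exact (hshape s).1 (by rw [hfill]) i hi
    · rw [getD_eq_default _ _ (by omega), count_eq_zero]
      exact fun hmem ↦ hi (hs i hmem)

/-! ## Runs and hatted minima -/

theorem splitWhen_congr {brk brk' : ℕ → ℕ → Bool} {L : List ℕ}
    (h : L.IsChain fun a b ↦ brk a b = brk' a b) : splitWhen brk L = splitWhen brk' L := by
  induction L with
  | nil => rfl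
  | cons a L ih =>
    rcases L with _ | ⟨b, L⟩
    · rfl
    · rw [isChain_cons_cons] at h
      rw [splitWhen, splitWhen, ih h.2, h.1]

theorem splitWhen_eq_splitBy (brk : ℕ → ℕ → Bool) (L : List ℕ) :
    splitWhen brk L = L.splitBy fun a b ↦ !brk a b := by
  induction L with
  | nil => rfl
  | cons a L ih =>
    rcases L with _ | ⟨b, L⟩
    · rfl
    obtain ⟨g, gs, hg⟩ : ∃ g gs, (b :: L).splitBy (fun a b ↦ !brk a b) = g :: gs :=
      exists_cons_of_ne_nil (splitBy_ne_nil.2 (cons_ne_nil _ _))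
    obtain ⟨hflat, hne, hchain, hbreak⟩ := splitBy_eq_iff.1 hg
    obtain ⟨g, rfl⟩ : ∃ g', g = b :: g' := by
      rcases g with _ | ⟨x, g⟩ <;> simp_all
    simp only [splitWhen, ih, hg]
    by_cases hab : brk a b = true
    · rw [if_pos hab, ← hg]
      exact (splitBy_append_cons (l := [a]) L (by simpa)).symm
    · rw [if_neg hab, eq_comm, splitBy_eq_iff]
      refine ⟨by rw [hflat]; rfl, by simp_all, ?_, ?_⟩
      · simp_all
      · rcases gs with _ | ⟨m, gs⟩
        · exact isChain_singleton _
        · simpa [isChain_cons_cons, getLast_cons_cons] using hbreak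

theorem splitBy_map (r : ℕ → ℕ → Bool) (f : ℕ → ℕ) (L : List ℕ) :
    (L.map f).splitBy r = (L.splitBy fun a b ↦ r (f a) (f b)).map (map f) := by
  obtain ⟨hflat, -, hchain, hbreak⟩ :=
    splitBy_eq_iff.1 (Eq.refl (L.splitBy fun a b ↦ r (f a) (f b)))
  refine splitBy_eq_iff.2 ⟨by rw [← map_flatten, ← hflat], by simp, ?_, ?_⟩
  · simpa [isChain_map] using hchain
  · simpa [isChain_map, getLast_map, head_map] using hbreak

theorem hatMins_append_singleton (L : List ℤ) (r : ℤ) :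
    hatMins (L ++ [r]) =
      hatMins L ++ [(hatMins L).getLast?.elim r fun p ↦ min r (p - 1)] := by
  obtain ⟨step, hfold, hstep⟩ : ∃ step : List ℤ × Option ℤ → ℤ → List ℤ × Option ℤ,
      (∀ L, hatMins L = (L.foldl step ([], none)).1) ∧
      ∀ acc r, step acc r = (acc.1 ++ [acc.2.elim r fun p ↦ min r (p - 1)],
        some (acc.2.elim r fun p ↦ min r (p - 1))) :=
    ⟨_, fun _ ↦ rfl, fun acc r ↦ by rcases acc.2 <;> rfl⟩
  have hlast (L : List ℤ) : (L.foldl step ([], none)).2 = (hatMins L).getLast? := by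
    rw [hfold]
    induction L using List.reverseRecOn with
    | nil => rfl
    | append_singleton L r _ => simp [foldl_append, hstep]
  rw [hfold (L ++ [r]), foldl_append, foldl_cons, foldl_nil, hstep, hlast, ← hfold]

theorem length_hatMins (L : List ℤ) : (hatMins L).length = L.length := by
  induction L using List.reverseRecOn with
  | nil => rfl
  | append_singleton L r ih => simp [hatMins_append_singleton, ih]

theorem getLast?_hatMins_le {L : List ℤ} {p x : ℤ} (hp : p ∈ (hatMins L).getLast?) (hx : x ∈ L) :
    p ≤ x := by
  induction L using List.reverseRecOn generalizing p with
  | nil => simp at hx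
  | append_singleton L r ih =>
    rw [hatMins_append_singleton, getLast?_concat] at hp
    have hlen := length_hatMins L
    rcases h : (hatMins L).getLast? with _ | q
    · obtain rfl : L = [] := by
        rw [← length_eq_zero_iff, ← hlen, getLast?_eq_none_iff.1 h, length_nil]
      simp_all
    · rw [h, Option.elim_some, Option.mem_some_iff] at hp
      rcases mem_append.1 hx with hx | hx
      · have := ih h hx
        omega
      · rw [mem_singleton] at hx
        omega

theorem hatMins_map_congr {α : Type*} {B : List α} {f g : α → ℤ}
    (h : ∀ B', B' <+: B → ∀ z, (∃ b ∈ B', f b ≤ z) ↔ ∃ b ∈ B', g b ≤ z) :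
    hatMins (B.map f) = hatMins (B.map g) := by
  induction B using List.reverseRecOn with
  | nil => rfl
  | append_singleton B b ih =>
    have ih := ih fun B' hB' ↦ h B' (hB'.trans (prefix_append _ _))
    have hlen := length_hatMins (B.map g)
    obtain ⟨c, hc, hcb⟩ := (h _ prefix_rfl (f b)).1 ⟨b, by simp, le_rfl⟩
    obtain ⟨d, hd, hdb⟩ := (h _ prefix_rfl (g b)).2 ⟨b, by simp, le_rfl⟩
    simp only [map_append, map_cons, map_nil, hatMins_append_singleton, ih]
    rcases hlast : (hatMins (B.map g)).getLast? with _ | p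
    · obtain rfl : B = [] := by
        rwa [← map_eq_nil_iff (f := g), ← length_eq_zero_iff, ← hlen, length_eq_zero_iff,
          ← getLast?_eq_none_iff]
      simp_all
      omega
    · have hf (c) (hc : c ∈ B) : p ≤ f c :=
        getLast?_hatMins_le (L := B.map f) (ih ▸ hlast) (mem_map_of_mem hc)
      have hg (c) (hc : c ∈ B) : p ≤ g c := getLast?_hatMins_le hlast (mem_map_of_mem hc)
      grind

theorem isChain_of_mem_splitWhen {brk : ℕ → ℕ → Bool} {R : ℕ → ℕ → Prop} {L b : List ℕ}
    (h : L.IsChain R) (hb : b ∈ splitWhen brk L) : b.IsChain fun x y ↦ R x y ∧ brk x y = false := by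
  rw [splitWhen_eq_splitBy] at hb
  have hbrk := isChain_of_mem_splitBy hb
  rw [← flatten_splitBy (fun x y ↦ !brk x y) L, isChain_flatten (nil_notMem_splitBy _ _)] at h
  have hR := h.1 b hb
  rw [isChain_iff_getElem] at hbrk hR ⊢
  exact fun i hi ↦ ⟨hR i hi, by simpa using hbrk i hi⟩

theorem isChain_splitWhen {brk : ℕ → ℕ → Bool} {R : ℕ → ℕ → Prop} {L : List ℕ}
    (h : L.IsChain R) : (splitWhen brk L).IsChain fun b b' ↦
      ∃ x ∈ b, ∃ y ∈ b', R x y ∧ brk x y = true := by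
  rw [splitWhen_eq_splitBy]
  have hbrk := isChain_getLast_head_splitBy (fun x y ↦ !brk x y) L
  rw [← flatten_splitBy (fun x y ↦ !brk x y) L, isChain_flatten (nil_notMem_splitBy _ _)] at h
  have hR := h.2
  rw [isChain_iff_getElem] at hbrk hR ⊢
  intro i hi
  obtain ⟨hb, hb', hbrk⟩ := hbrk i hi
  exact ⟨_, getLast_mem hb, _, head_mem hb',
    hR i hi _ (getLast_mem_getLast? hb) _ (head_mem_head? hb'), by simpa using hbrk⟩

theorem map_getD_range {p : ℕ} {s : List ℕ} (hp : p ≤ s.length) :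
    ((range p).map fun i ↦ s.getD i 0) = s.take p := by
  refine ext_getElem (by simpa) fun i h₁ h₂ ↦ ?_
  rw [getElem_map, getElem_range, getElem_take, getD_eq_getElem]

/-! ## Weak descent compositions of recording words -/

/-- The column, counted from `0`, in which the `i`-th letter of a recording word places its cell. -/
def columnAt (s : List ℕ) (i : ℕ) : ℕ := count (s.getD i 0) (s.take i)

/-- The maximal intervals of positions of a recording word along which the columns increase. They
are the runs of every word with this recording word. -/
def recordingRuns (s : List ℕ) : List (List ℕ) :=
  splitWhen (fun i j ↦ decide (columnAt s j ≤ columnAt s i)) (range s.length)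

/-- The lowest row, counted from `1`, receiving a cell at one of the positions in `b`. -/
def lowestRow (s b : List ℕ) : ℤ := (((b.map fun i ↦ s.getD i 0 + 1).min?.getD 0 : ℕ) : ℤ)

/-- The weak descent composition read off a recording word: that of every word recorded by it, and,
up to trailing zeros, that of the corresponding standard key tableau. -/
def desRecording (s : List ℕ) : Option (List ℕ) :=
  desFromBlocks ((recordingRuns s).map (lowestRow s)) ((recordingRuns s).map length)

theorem flatten_recordingRuns (s : List ℕ) : (recordingRuns s).flatten = range s.length := by
  rw [recordingRuns, splitWhen_eq_splitBy, flatten_splitBy]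

theorem ne_nil_of_mem_recordingRuns {s b : List ℕ} (hb : b ∈ recordingRuns s) : b ≠ [] := by
  rw [recordingRuns, splitWhen_eq_splitBy] at hb
  exact ne_nil_of_mem_splitBy hb

theorem lt_length_of_mem_recordingRuns {s b : List ℕ} {i : ℕ} (hb : b ∈ recordingRuns s)
    (hi : i ∈ b) : i < s.length := by
  rw [← mem_range, ← flatten_recordingRuns]
  exact mem_flatten_of_mem hb hi

theorem isChain_range_length (s : List ℕ) :
    (range s.length).IsChain fun i j ↦ j = i + 1 ∧ j < s.length :=
  (isChain_range _ _).2 fun _ _ ↦ by omega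

theorem lowestRow_le_iff {s b : List ℕ} {z : ℤ} (hb : b ≠ []) :
    lowestRow s b ≤ z ↔ ∃ i ∈ b, (s.getD i 0 : ℤ) + 1 ≤ z := by
  rw [lowestRow]
  rcases hm : (b.map fun i ↦ s.getD i 0 + 1).min? with _ | m
  · simp [hb] at hm
  rw [min?_eq_some_iff] at hm
  obtain ⟨i, hi, him⟩ := mem_map.1 hm.1
  rw [Option.getD_some]
  refine ⟨fun h ↦ ⟨i, hi, by omega⟩, fun ⟨j, hj, h⟩ ↦ ?_⟩
  have := hm.2 _ (mem_map_of_mem (f := fun i ↦ s.getD i 0 + 1) hj)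
  omega

theorem sktRuns_fill {N : ℕ} {s : List ℕ} (hs : ∀ r ∈ s, r < N) :
    sktRuns (fill N s) = (recordingRuns s).map (map (s.length - ·)) := by
  have hlen : (fill N s).flatten.length = s.length := by
    rw [(flatten_fill_perm hs).length_eq, length_range']
  have hrange : (range' 1 s.length).reverse = (range s.length).map (s.length - ·) :=
    ext_getElem (by simp) fun i h₁ h₂ ↦ by simp at h₁ ⊢; omega
  rw [sktRuns, hlen, hrange, recordingRuns, splitWhen_eq_splitBy, splitBy_map,
    ← splitWhen_eq_splitBy fun i j ↦ _, splitWhen_congr]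
  refine (isChain_range_length s).imp ?_
  rintro i _ ⟨rfl, hi⟩
  rw [show s.length - (i + 1) + 1 = s.length - i by omega, colOf_fill hs hi,
    colOf_fill hs (by omega)]
  rfl

theorem desSKT_fill {N : ℕ} {s : List ℕ} (hs : ∀ r ∈ s, r < N) :
    desSKT (fill N s) = (desRecording s).map fun d ↦ d ++ replicate (N - d.length) 0 := by
  rw [desSKT, sktRuns_fill hs, desRecording, length_fill, map_map, map_map]
  congr 2
  · refine map_congr_left fun b hb ↦ ?_
    rw [Function.comp_apply, minRow, lowestRow, map_map]
    congr 3
    refine map_congr_left fun i hi ↦ ?_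
    rw [Function.comp_apply, rowOf_fill hs (lt_length_of_mem_recordingRuns hb hi)]
  · simp [Function.comp_def]

theorem take_recording (ρ : List ℤ) (p : ℕ) : (recording ρ).take p = recording (ρ.take p) := by
  rw [recording, recording, ← map_take, take_range, length_take]
  refine map_congr_left fun i hi ↦ ?_
  rw [mem_range, lt_min_iff] at hi
  rw [take_take, min_eq_left hi.1.le]
  grind

theorem take_succ_eq_append_getD {ρ : List ℤ} {i : ℕ} (hi : i < ρ.length) :
    ρ.take (i + 1) = ρ.take i ++ [ρ.getD i 0] := by
  rw [getD_eq_getElem _ _ hi, take_append_getElem]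

theorem PosAdmissible.take {ρ : List ℤ} (h : PosAdmissible ρ) (i : ℕ) :
    PosAdmissible (ρ.take i) :=
  PosAdmissible.left (q := ρ.drop i) (by rwa [take_append_drop])

theorem PosAdmissible.columnAt_recording {ρ : List ℤ} (h : PosAdmissible ρ) {i : ℕ}
    (hi : i < ρ.length) : columnAt (recording ρ) i = level (ρ.take i) (ρ.getD i 0) := by
  have h := h.take (i + 1)
  rw [take_succ_eq_append_getD hi] at h
  rw [h.level_eq_count, columnAt, take_recording]
  simp [recording, hi]

theorem PosAdmissible.columnAt_le_iff {ρ : List ℤ} (h : PosAdmissible ρ) {i : ℕ}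
    (hi : i + 1 < ρ.length) :
    columnAt (recording ρ) (i + 1) ≤ columnAt (recording ρ) i ↔
      ρ.getD (i + 1) 0 ≤ ρ.getD i 0 := by
  have hadm := (h.take (i + 2)).admissible
  rw [take_succ_eq_append_getD hi, take_succ_eq_append_getD (by omega)] at hadm
  rw [h.columnAt_recording hi, h.columnAt_recording (by omega), take_succ_eq_append_getD (by omega)]
  rcases lt_or_gt_of_ne hadm.ne_of_append with hlt | hlt
  · have := level_lt_level_append (ρ := ρ.take i) hlt
    omega
  · have := level_append_le_level (ρ := ρ.take i) hlt
    omega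

theorem PosAdmissible.exists_le_iff {ρ : List ℤ} (h : PosAdmissible ρ) (z : ℤ) :
    (∃ x ∈ ρ, x ≤ z) ↔ ∃ r ∈ recording ρ, (r : ℤ) + 1 ≤ z := by
  constructor
  · rintro ⟨x, hx, hxz⟩
    obtain ⟨r, hrx, hr⟩ := h.admissible.exists_rowLength_pos_le hx
    obtain ⟨k, rfl⟩ : ∃ k : ℕ, r = (k : ℤ) + 1 :=
      ⟨(r - 1).toNat, by have := h.one_le r (h.admissible.mem_of_rowLength_pos hr); omega⟩
    rw [← h.count_recording] at hr
    exact ⟨k, count_pos_iff.1 hr, by omega⟩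
  · rintro ⟨r, hr, hrz⟩
    rw [← count_pos_iff, h.count_recording] at hr
    exact ⟨_, h.admissible.mem_of_rowLength_pos hr, hrz⟩

theorem runs_eq_map_recordingRuns {σ : List ℕ} (h : PosAdmissible (toInts σ)) :
    runs σ = (recordingRuns (recording (toInts σ))).map (map fun i ↦ σ.getD i 0) := by
  have hlen : (recording (toInts σ)).length = σ.length := by simp [length_recording, toInts]
  have hget (i : ℕ) : (toInts σ).getD i 0 = ((σ.getD i 0 : ℕ) : ℤ) := by
    simp [toInts, getD_eq_getElem?_getD]
    grind
  rw [runs]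
  conv_lhs => rw [← take_length (l := σ), ← map_getD_range le_rfl]
  rw [splitWhen_eq_splitBy, splitBy_map, ← splitWhen_eq_splitBy fun i j ↦ _, recordingRuns, hlen,
    splitWhen_congr]
  rw [← hlen]
  refine (isChain_range_length _).imp ?_
  rintro i _ ⟨rfl, hi⟩
  rw [length_recording] at hi
  simp only [h.columnAt_le_iff hi, hget, Nat.cast_le]

theorem headD_le_iff {r : List ℕ} {z : ℤ} (hne : r ≠ []) (hr : r.IsChain (· < ·)) :
    (r.headD 0 : ℤ) ≤ z ↔ ∃ x ∈ r, (x : ℤ) ≤ z := by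
  obtain ⟨x, r, rfl⟩ := exists_cons_of_ne_nil hne
  have hr := (pairwise_cons.1 (isChain_iff_pairwise.1 hr)).1
  simp only [headD_cons, mem_cons]
  grind

theorem desWord_eq_desRecording {σ : List ℕ} (h : PosAdmissible (toInts σ)) :
    desWord σ = desRecording (recording (toInts σ)) := by
  have hlen : (recording (toInts σ)).length = σ.length := by simp [length_recording, toInts]
  have hruns := runs_eq_map_recordingRuns h
  have hinc : ∀ r ∈ runs σ, r.IsChain (· < ·) := fun r hr ↦ by
    rw [runs, splitWhen_eq_splitBy] at hr
    simpa using isChain_of_mem_splitBy hr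
  have hmins : hatMins ((runs σ).map fun r ↦ ((r.headD 0 : ℕ) : ℤ)) =
      hatMins ((recordingRuns (recording (toInts σ))).map (lowestRow (recording (toInts σ)))) := by
    rw [hruns, map_map]
    refine hatMins_map_congr fun B hB z ↦ ?_
    obtain ⟨p, hp, hflat⟩ : ∃ p ≤ σ.length, B.flatten = range p := by
      have := hB.flatten
      rw [flatten_recordingRuns, prefix_iff_eq_take, take_range, hlen] at this
      exact ⟨_, min_le_right _ _, this⟩
    have hmem {b} (hb : b ∈ B) : b ∈ recordingRuns (recording (toInts σ)) := hB.subset hb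
    have hsplit (P : ℕ → Prop) : (∃ b ∈ B, ∃ i ∈ b, P i) ↔ ∃ i < p, P i := by
      simp only [← mem_range, ← hflat, mem_flatten]
      grind
    calc (∃ b ∈ B, (((b.map fun i ↦ σ.getD i 0).headD 0 : ℕ) : ℤ) ≤ z)
      _ ↔ ∃ b ∈ B, ∃ i ∈ b, (σ.getD i 0 : ℤ) ≤ z := by
        refine exists_congr fun b ↦ and_congr_right fun hb ↦ ?_
        rw [headD_le_iff (by simpa using ne_nil_of_mem_recordingRuns (hmem hb))
          (hinc _ (hruns ▸ mem_map_of_mem (hmem hb)))]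
        simp
      _ ↔ ∃ x ∈ (toInts σ).take p, x ≤ z := by
        rw [hsplit, toInts, ← map_take, ← map_getD_range hp]
        simp
      _ ↔ ∃ r ∈ (recording (toInts σ)).take p, (r : ℤ) + 1 ≤ z := by
        rw [take_recording, (h.take p).exists_le_iff]
      _ ↔ ∃ b ∈ B, lowestRow (recording (toInts σ)) b ≤ z := by
        rw [← map_getD_range (hlen ▸ hp), exists_congr fun b ↦ and_congr_right fun hb ↦
          lowestRow_le_iff (ne_nil_of_mem_recordingRuns (hmem hb)), hsplit]
        simp
  rw [desWord, desFromBlocks, hmins, desRecording, desFromBlocks, hruns, map_map]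
  simp [Function.comp_def]

theorem pairwise_hatMins (L : List ℤ) : (hatMins L).Pairwise (· > ·) := by
  induction L using List.reverseRecOn with
  | nil => exact Pairwise.nil
  | append_singleton L r ih =>
    rw [hatMins_append_singleton, pairwise_append]
    refine ⟨ih, pairwise_singleton _ _, fun x hx y hy ↦ ?_⟩
    have hne := ne_nil_of_mem hx
    have hle := (ih.imp le_of_lt).rel_getLast hx
    rw [getLast?_eq_some_getLast hne, Option.elim_some, mem_singleton] at hy
    omega

theorem forall₂_hatMins_le (L : List ℤ) : Forall₂ (· ≤ ·) (hatMins L) L := by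
  induction L using List.reverseRecOn with
  | nil => exact Forall₂.nil
  | append_singleton L r ih =>
    rw [hatMins_append_singleton]
    refine rel_append ih (Forall₂.cons ?_ Forall₂.nil)
    rcases (hatMins L).getLast? with _ | p <;> simp

theorem hatMins_eq_self {L : List ℤ} (h : L.Pairwise (· > ·)) : hatMins L = L := by
  induction L using List.reverseRecOn with
  | nil => rfl
  | append_singleton L r ih =>
    obtain ⟨hL, -, hr⟩ := pairwise_append.1 h
    rw [hatMins_append_singleton, ih hL]
    rcases hlast : L.getLast? with _ | p
    · rfl
    · have := hr p (mem_of_getLast? hlast) r (mem_singleton_self r)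
      rw [Option.elim_some, min_eq_left (by omega)]

theorem find?_fst_eq {Z : List (ℤ × ℕ)} (hZ : Z.Pairwise fun q q' ↦ q.1 > q'.1) (p : ℤ) :
    (match Z.find? fun q ↦ decide (q.1 = p) with
      | some q => q.2
      | none => 0) = (Z.map fun q ↦ if q.1 = p then q.2 else 0).sum := by
  induction Z with
  | nil => rfl
  | cons q Z ih =>
    obtain ⟨hq, hZ⟩ := pairwise_cons.1 hZ
    rw [find?_cons, map_cons, sum_cons]
    by_cases h : q.1 = p
    · have hrest : (Z.map fun q ↦ if q.1 = p then q.2 else 0).sum = 0 :=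
        sum_eq_zero (by grind)
      simp [h, hrest]
    · simpa [h] using ih hZ

theorem sum_range_ite {x : ℤ} (hx : 1 ≤ x) (c m : ℕ) :
    ((range m).map fun p : ℕ ↦ if x = (p : ℤ) + 1 then c else 0).sum =
      if x ≤ (m : ℤ) then c else 0 := by
  induction m with
  | zero => simp; omega
  | succ m ih =>
    rw [range_succ, map_append, sum_append, ih, map_singleton, sum_singleton]
    grind

theorem sum_take_buildWeakComp {Z : List (ℤ × ℕ)} (hZ : Z.Pairwise fun q q' ↦ q.1 > q'.1)
    (hpos : ∀ q ∈ Z, 1 ≤ q.1) (k : ℕ) :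
    ((buildWeakComp (Z.map Prod.fst) (Z.map Prod.snd)).take k).sum =
      (Z.map fun q ↦ if q.1 ≤ (k : ℤ) then q.2 else 0).sum := by
  have hsum (m : ℕ) : ((range m).map fun p : ℕ ↦
      (Z.map fun q ↦ if q.1 = (p : ℤ) + 1 then q.2 else 0).sum).sum =
      (Z.map fun q ↦ if q.1 ≤ (m : ℤ) then q.2 else 0).sum := by
    clear hZ
    induction Z with
    | nil => simp
    | cons q Z ih =>
      simp only [map_cons, sum_cons, sum_map_add]
      rw [ih fun q hq ↦ hpos q (mem_cons_of_mem _ hq), sum_range_ite (hpos q mem_cons_self)]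
  have hcast (l : List ℕ) : (do let p ← l; pure (p : ℤ)) = l.map fun p : ℕ ↦ (p : ℤ) := by
    induction l with
    | nil => rfl
    | cons a l ih => rw [map_cons, ← ih]; rfl
  have hhead : ∀ q ∈ Z, q.1 ≤ (Z.map Prod.fst).headD 0 := by
    rcases Z with _ | ⟨q, Z⟩
    · simp
    · exact forall_mem_cons.2 ⟨le_rfl, fun q' hq' ↦ (rel_of_pairwise_cons hZ hq').le⟩
  simp only [buildWeakComp]
  rw [hcast, map_map, ← zip_of_prod rfl rfl, ← map_take, take_range]
  refine (congrArg sum (map_congr_left fun (p : ℕ) _ ↦ find?_fst_eq hZ (p + 1))).trans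
    ((hsum _).trans ?_)
  refine congrArg sum (map_congr_left fun q hq ↦ ?_)
  have := hhead q hq
  congr 1
  simp only [eq_iff_iff]
  omega

theorem exists_desFromBlocks {mins : List ℤ} (h : ∀ x ∈ hatMins mins, 1 ≤ x) (lens : List ℕ) :
    ∃ d, desFromBlocks mins lens = some d := by
  rw [desFromBlocks]
  rcases eq_nil_or_concat' (hatMins mins) with hnil | ⟨L, x, hL⟩
  · simp [hnil]
  · have := h x (by simp [hL])
    simp [hL]
    omega

theorem desFromBlocks_eq_some {mins : List ℤ} {lens d : List ℕ} (hlen : mins.length = lens.length)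
    (h : desFromBlocks mins lens = some d) : (∀ x ∈ hatMins mins, 1 ≤ x) ∧ ∀ k : ℕ,
      (d.take k).sum =
        (((hatMins mins).zip lens).map fun q ↦ if q.1 ≤ (k : ℤ) then q.2 else 0).sum := by
  have hlen' : (hatMins mins).length = lens.length := (length_hatMins mins).trans hlen
  have hanti := pairwise_hatMins mins
  have hfst : ((hatMins mins).zip lens).map Prod.fst = hatMins mins := map_fst_zip hlen'.le
  have hsnd : ((hatMins mins).zip lens).map Prod.snd = lens := map_snd_zip hlen'.ge
  rw [desFromBlocks] at h
  split_ifs at h with hnil hvirtual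
  · cases h
    simp [hnil]
  · obtain rfl := Option.some_injective _ h
    have hpos : ∀ x ∈ hatMins mins, 1 ≤ x := fun x hx ↦ by
      have := (hanti.imp le_of_lt).rel_getLast hx
      rw [getLastD_eq_getLast?, getLast?_eq_some_getLast hnil, Option.getD_some] at hvirtual
      omega
    refine ⟨hpos, fun k ↦ ?_⟩
    have hZ : ((hatMins mins).zip lens).Pairwise fun q q' ↦ q.1 > q'.1 := by
      rwa [← pairwise_map, hfst]
    rw [← sum_take_buildWeakComp hZ (fun q hq ↦ hpos _ (of_mem_zip hq).1), hfst, hsnd]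

/-- The runs of a recording word paired with the positions `r̂` of the corresponding parts of its
weak descent composition. -/
def hatBlocks (s : List ℕ) : List (ℤ × List ℕ) :=
  (hatMins ((recordingRuns s).map (lowestRow s))).zip (recordingRuns s)

theorem map_fst_hatBlocks (s : List ℕ) :
    (hatBlocks s).map Prod.fst = hatMins ((recordingRuns s).map (lowestRow s)) :=
  map_fst_zip (by rw [length_hatMins, length_map])

theorem map_snd_hatBlocks (s : List ℕ) : (hatBlocks s).map Prod.snd = recordingRuns s :=
  map_snd_zip (by rw [length_hatMins, length_map])

theorem pairwise_hatBlocks (s : List ℕ) : (hatBlocks s).Pairwise fun q q' ↦ q.1 > q'.1 := by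
  rw [← pairwise_map, map_fst_hatBlocks]
  exact pairwise_hatMins _

theorem fst_le_of_mem_hatBlocks {s : List ℕ} {q : ℤ × List ℕ} {i : ℕ} (hq : q ∈ hatBlocks s)
    (hi : i ∈ q.2) : q.1 ≤ (s.getD i 0 : ℤ) + 1 := by
  have hle : q.1 ≤ lowestRow s q.2 :=
    (forall₂_iff_zip.1 (forall₂_map_right_iff.1 (forall₂_hatMins_le _))).2 hq
  exact hle.trans ((lowestRow_le_iff (ne_nil_of_mem hi)).2 ⟨i, hi, le_rfl⟩)

theorem sum_take_desRecording {s d : List ℕ} (h : desRecording s = some d) :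
    (∀ q ∈ hatBlocks s, 1 ≤ q.1) ∧ ∀ k : ℕ,
      (d.take k).sum =
        ((hatBlocks s).map fun q ↦ if q.1 ≤ (k : ℤ) then q.2.length else 0).sum := by
  obtain ⟨hpos, hsum⟩ := desFromBlocks_eq_some (by simp) h
  refine ⟨fun q hq ↦ hpos _ (of_mem_zip hq).1, fun k ↦ ?_⟩
  rw [hsum, zip_map_right, map_map]
  rfl

theorem countP_lt_eq_sum_hatBlocks (s : List ℕ) (k : ℕ) :
    countP (· < k) s = ((hatBlocks s).map fun q ↦ countP (fun i ↦ s.getD i 0 < k) q.2).sum := by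
  conv_lhs => rw [← s.take_length, ← map_getD_range le_rfl, countP_map, ← flatten_recordingRuns,
    countP_flatten, ← map_snd_hatBlocks, map_map]
  rfl

theorem countP_le_of_mem_hatBlocks {s : List ℕ} {q : ℤ × List ℕ} (hq : q ∈ hatBlocks s) (k : ℕ) :
    countP (fun i ↦ s.getD i 0 < k) q.2 ≤ if q.1 ≤ (k : ℤ) then q.2.length else 0 := by
  split_ifs with hk
  · exact countP_le_length
  · refine (countP_eq_zero.2 fun i hi ↦ ?_).le
    have := fst_le_of_mem_hatBlocks hq hi
    simp only [decide_eq_true_eq]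
    omega

theorem countP_lt_le_sum_take {s d : List ℕ} (h : desRecording s = some d) (k : ℕ) :
    countP (· < k) s ≤ (d.take k).sum := by
  rw [(sum_take_desRecording h).2, countP_lt_eq_sum_hatBlocks]
  exact sum_le_sum fun q hq ↦ countP_le_of_mem_hatBlocks hq k

theorem getD_add_one_eq_fst {s d : List ℕ} (h : desRecording s = some d)
    (heq : ∀ k, countP (· < k) s = (d.take k).sum) {q : ℤ × List ℕ} (hq : q ∈ hatBlocks s) {i : ℕ}
    (hi : i ∈ q.2) : (s.getD i 0 : ℤ) + 1 = q.1 := by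
  obtain ⟨hpos, hsum⟩ := sum_take_desRecording h
  refine le_antisymm ?_ (fst_le_of_mem_hatBlocks hq hi)
  have hq_pos := hpos q hq
  by_contra hlt
  refine (heq q.1.toNat).not_lt ?_
  rw [hsum, countP_lt_eq_sum_hatBlocks]
  refine sum_lt_sum _ _ (fun q' hq' ↦ countP_le_of_mem_hatBlocks hq' _) ⟨q, hq, ?_⟩
  rw [if_pos (by omega)]
  refine lt_of_le_of_ne countP_le_length fun hall ↦ ?_
  have := countP_eq_length.1 hall i hi
  simp only [decide_eq_true_eq] at this
  omega

theorem pairwise_ge_of_countP_eq {s d : List ℕ} (h : desRecording s = some d)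
    (heq : ∀ k, countP (· < k) s = (d.take k).sum) : s.Pairwise (· ≥ ·) := by
  have hrow {q : ℤ × List ℕ} (hq : q ∈ hatBlocks s) {i : ℕ} (hi : i ∈ q.2) :=
    getD_add_one_eq_fst h heq hq hi
  rw [← s.take_length, ← map_getD_range le_rfl, ← flatten_recordingRuns, ← map_snd_hatBlocks,
    pairwise_map, pairwise_flatten, pairwise_map]
  constructor
  · refine forall_mem_map.2 fun q hq ↦ pairwise_of_forall_mem_list fun i hi j hj ↦ ?_
    have := hrow hq hi
    have := hrow hq hj
    omega
  · refine (pairwise_hatBlocks s).imp_of_mem fun {q q'} hq hq' hlt i hi j hj ↦ ?_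
    have := hrow hq hi
    have := hrow hq' hj
    omega

theorem keyLattice_of_pairwise_ge {s : List ℕ} (h : s.Pairwise (· ≥ ·)) : KeyLattice s := by
  rintro p r q rfl r' hr' hcount
  have hmem : r' ∈ p := count_pos_iff.1 (by omega)
  have := (pairwise_append.1 h).2.2 r' hmem r mem_cons_self
  omega

theorem getD_succ_le_of_pairwise_ge {s : List ℕ} (h : s.Pairwise (· ≥ ·)) {i : ℕ}
    (hi : i + 1 < s.length) : s.getD (i + 1) 0 ≤ s.getD i 0 := by
  rw [getD_eq_getElem _ _ hi, getD_eq_getElem _ _ (by omega)]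
  exact pairwise_iff_getElem.1 h i (i + 1) (by omega) hi (by omega)

theorem columnAt_succ_le_iff {s : List ℕ} (h : s.Pairwise (· ≥ ·)) {i : ℕ}
    (hi : i + 1 < s.length) :
    columnAt s (i + 1) ≤ columnAt s i ↔ s.getD (i + 1) 0 ≠ s.getD i 0 := by
  have htake : s.take (i + 1) = s.take i ++ [s.getD i 0] := by
    rw [getD_eq_getElem _ _ (by omega), take_append_getElem]
  rw [columnAt, columnAt, htake, count_append]
  refine ⟨fun hle heq ↦ by
    rw [heq, count_singleton_self] at hle
    omega, fun hne ↦ ?_⟩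
  have hlt := (getD_succ_le_of_pairwise_ge h hi).lt_of_ne hne
  have hnot : s.getD (i + 1) 0 ∉ s.take i := fun hmem ↦ by
    have hs : s = s.take (i + 1) ++ s.drop (i + 1) := (take_append_drop _ _).symm
    rw [htake, append_assoc] at hs
    rw [hs] at h
    have := (pairwise_append.1 h).2.2 _ hmem (s.getD i 0) (by simp)
    omega
  rw [count_eq_zero_of_not_mem hnot, count_singleton, if_neg (by simpa using hne.symm)]
  exact Nat.zero_le _

theorem getD_eq_of_mem_recordingRuns {s b : List ℕ} (h : s.Pairwise (· ≥ ·))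
    (hb : b ∈ recordingRuns s) {i j : ℕ} (hi : i ∈ b) (hj : j ∈ b) : s.getD i 0 = s.getD j 0 := by
  have hchain : b.IsChain fun x y ↦ s.getD x 0 = s.getD y 0 := by
    refine (isChain_of_mem_splitWhen (isChain_range_length s) hb).imp ?_
    rintro x _ ⟨⟨rfl, hx⟩, hbrk⟩
    rw [decide_eq_false_iff_not, columnAt_succ_le_iff h hx, not_not] at hbrk
    exact hbrk.symm
  have : IsTrans ℕ fun x y ↦ s.getD x 0 = s.getD y 0 := ⟨fun _ _ _ ↦ Eq.trans⟩
  have : Std.Symm fun x y ↦ s.getD x 0 = s.getD y 0 := ⟨fun _ _ ↦ Eq.symm⟩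
  exact Pairwise.forall_of_forall (R := fun x y ↦ s.getD x 0 = s.getD y 0) (fun _ _ ↦ rfl)
    (isChain_iff_pairwise.1 hchain) hi hj

theorem lowestRow_eq {s b : List ℕ} (h : s.Pairwise (· ≥ ·)) (hb : b ∈ recordingRuns s) {i : ℕ}
    (hi : i ∈ b) : lowestRow s b = (s.getD i 0 : ℤ) + 1 := by
  have hne := ne_nil_of_mem hi
  obtain ⟨j, hj, hle⟩ := (lowestRow_le_iff hne).1 (le_refl (lowestRow s b))
  refine le_antisymm ((lowestRow_le_iff hne).2 ⟨i, hi, le_rfl⟩) ?_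
  rwa [getD_eq_of_mem_recordingRuns h hb hi hj]

theorem pairwise_lowestRow {s : List ℕ} (h : s.Pairwise (· ≥ ·)) :
    ((recordingRuns s).map (lowestRow s)).Pairwise (· > ·) := by
  rw [← isChain_iff_pairwise, isChain_map]
  refine (isChain_splitWhen (isChain_range_length s)).imp_of_mem_imp ?_
  rintro b b' hb hb' ⟨x, hx, _, hy, ⟨rfl, hlt⟩, hbrk⟩
  rw [decide_eq_true_eq, columnAt_succ_le_iff h hlt] at hbrk
  have := getD_succ_le_of_pairwise_ge h hlt
  rw [lowestRow_eq h hb hx, lowestRow_eq h hb' hy]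
  omega

theorem fst_eq_of_mem_hatBlocks {s : List ℕ} (h : s.Pairwise (· ≥ ·)) {q : ℤ × List ℕ}
    (hq : q ∈ hatBlocks s) {i : ℕ} (hi : i ∈ q.2) : q.1 = (s.getD i 0 : ℤ) + 1 := by
  rw [hatBlocks, hatMins_eq_self (pairwise_lowestRow h), ← map_id (recordingRuns s),
    map_map, zip_map'] at hq
  obtain ⟨b, hb, rfl⟩ := mem_map.1 hq
  exact lowestRow_eq h hb hi

theorem exists_desRecording_of_pairwise_ge {s : List ℕ} (h : s.Pairwise (· ≥ ·)) :
    ∃ d, desRecording s = some d ∧ ∀ k, countP (· < k) s = (d.take k).sum := by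
  have hpos : ∀ x ∈ hatMins ((recordingRuns s).map (lowestRow s)), 1 ≤ x := by
    rw [hatMins_eq_self (pairwise_lowestRow h)]
    refine forall_mem_map.2 fun b hb ↦ ?_
    obtain ⟨i, hi⟩ := exists_mem_of_ne_nil b (ne_nil_of_mem_recordingRuns hb)
    rw [lowestRow_eq h hb hi]
    omega
  obtain ⟨d, hd⟩ := exists_desFromBlocks hpos ((recordingRuns s).map length)
  refine ⟨d, hd, fun k ↦ ?_⟩
  rw [(sum_take_desRecording hd).2, countP_lt_eq_sum_hatBlocks]
  refine congrArg sum (map_congr_left fun q hq ↦ ?_)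
  have hrow {i : ℕ} (hi : i ∈ q.2) := fst_eq_of_mem_hatBlocks h hq hi
  split_ifs with hk
  · refine countP_eq_length.2 fun i hi ↦ ?_
    have := hrow hi
    simp only [decide_eq_true_eq]
    omega
  · refine countP_eq_zero.2 fun i hi ↦ ?_
    have := hrow hi
    simp only [decide_eq_true_eq]
    omega

theorem countP_lt_succ (s : List ℕ) (k : ℕ) :
    countP (· < k + 1) s = countP (· < k) s + count k s := by
  induction s with
  | nil => rfl
  | cons a s ih => grind

theorem sum_take_succ_getD (d : List ℕ) (k : ℕ) :
    (d.take (k + 1)).sum = (d.take k).sum + d.getD k 0 := by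
  rcases lt_or_ge k d.length with h | h
  · rw [getD_eq_getElem _ _ h, ← take_append_getElem h, sum_append, sum_singleton]
  · rw [take_of_length_le (by omega), take_of_length_le h, getD_eq_default _ _ h, add_zero]

theorem count_eq_getD {s d : List ℕ} (h : ∀ k, countP (· < k) s = (d.take k).sum) (i : ℕ) :
    count i s = d.getD i 0 := by
  have hsucc := h (i + 1)
  rw [countP_lt_succ, sum_take_succ_getD, h i] at hsucc
  exact Nat.add_left_cancel hsucc

/-! ## Trailing zeros of slide polynomials -/

theorem sum_filter_ne_zero (l : List ℕ) : (l.filter fun x ↦ decide (x ≠ 0)).sum = l.sum := by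
  induction l with
  | nil => rfl
  | cons a l ih => rcases eq_or_ne a 0 with rfl | ha <;> simp_all

theorem Refines.sum_eq {β α : List ℕ} (h : Refines β α) : β.sum = α.sum := by
  obtain ⟨blocks, rfl, h⟩ := h
  induction h with
  | nil => rfl
  | cons hsum _ ih => rw [flatten_cons, sum_append, sum_cons, ih, hsum]

theorem sum_flatOf (b : ℕ →₀ ℕ) : (flatOf b).sum = ∑ i ∈ b.support, b i := by
  rw [flatOf, sum_filter_ne_zero]
  have hsub : b.support ⊆ Finset.range (b.support.sup id + 1) := fun i hi ↦
    Finset.mem_range_succ_iff.2 (Finset.le_sup (f := id) hi)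
  exact (Finset.sum_subset hsub fun i _ hi ↦ Finsupp.notMem_support_iff.1 hi).symm

theorem eq_zero_of_sum_flatOf_le {b : ℕ →₀ ℕ} {k i : ℕ}
    (h : (flatOf b).sum ≤ ∑ j ∈ Finset.range k, b j) (hi : k ≤ i) : b i = 0 := by
  by_contra hne
  rw [sum_flatOf] at h
  have hsub : ∑ j ∈ insert i (Finset.range k), b j ≤ ∑ j ∈ b.support, b j :=
    Finset.sum_le_sum_of_ne_zero fun j _ hj ↦ Finsupp.mem_support_iff.2 hj
  rw [Finset.sum_insert (by simpa using hi)] at hsub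
  omega

theorem sum_take_append_replicate_zero (d : List ℕ) (m k : ℕ) :
    ((d ++ replicate m 0).take k).sum = (d.take k).sum := by
  simp [take_append]

theorem FSlide_append_replicate_zero (d : List ℕ) (m : ℕ) :
    FSlide (d ++ replicate m 0) = FSlide d := by
  classical
  funext b
  have hfilter : (d ++ replicate m 0).filter (fun x ↦ decide (x ≠ 0)) =
      d.filter fun x ↦ decide (x ≠ 0) := by
    simp
  refine if_congr ?_ rfl rfl
  simp only [hfilter, sum_take_append_replicate_zero]
  refine ⟨fun ⟨_, hdom, href⟩ ↦ ⟨fun i hi ↦ eq_zero_of_sum_flatOf_le ?_ hi, hdom, href⟩,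
    fun ⟨hzero, hdom, href⟩ ↦ ⟨fun i hi ↦ hzero i ?_, hdom, href⟩⟩
  · rw [href.sum_eq, sum_filter_ne_zero]
    simpa using hdom d.length
  · rw [length_append] at hi
    omega

theorem FSlideO_desSKT_fill {N : ℕ} {s : List ℕ} (hs : ∀ r ∈ s, r < N) :
    FSlideO (desSKT (fill N s)) = FSlideO (desRecording s) := by
  rw [desSKT_fill hs]
  rcases desRecording s with _ | d
  · rfl
  · exact FSlide_append_replicate_zero _ _

/-! ## Yamanouchi words in a Coxeter–Knuth class -/

theorem toInts_injective : Function.Injective toInts :=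
  Function.LeftInverse.injective toNats_toInts

theorem IsReducedWord.desWord_eq {σ : List ℕ} (h : IsReducedWord σ) :
    desWord σ = desRecording (recording (toInts σ)) :=
  desWord_eq_desRecording h.posAdmissible

theorem IsReducedWord.count_recording_eq {ρ σ : List ℕ} (h : IsReducedWord ρ)
    (hck : CK (toInts ρ) (toInts σ)) (i : ℕ) :
    count i (recording (toInts σ)) = count i (recording (toInts ρ)) := by
  rw [h.posAdmissible.count_recording, (h.of_ck hck).posAdmissible.count_recording,
    hck.rowLength_eq h.posAdmissible.admissible]

theorem ReducedWordFor.bijOn_recording {ρ : List ℕ} {w : Equiv.Perm ℕ} (h : ReducedWordFor ρ w) :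
    Set.BijOn (fun σ ↦ recording (toInts σ))
      {σ | ReducedWordFor σ w ∧ CK (toInts ρ) (toInts σ)}
      {s | KeyLattice s ∧ ∀ i, count i s = count i (recording (toInts ρ))} := by
  refine ⟨fun σ hσ ↦ ⟨hσ.1.1.posAdmissible.keyLattice_recording, h.1.count_recording_eq hσ.2⟩,
    fun σ hσ σ' hσ' heq ↦ ?_, fun s hs ↦ ?_⟩
  · exact toInts_injective
      (hσ.1.1.posAdmissible.eq_of_recording_eq (hσ.2.symm.trans hσ'.2) heq)
  · obtain ⟨σ, hck, hrec⟩ := h.1.posAdmissible.exists_recording_eq hs.1 hs.2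
    obtain ⟨hσ, hred⟩ := h.toNats_of_ck hck
    exact ⟨toNats σ, ⟨hred, by rwa [hσ]⟩, by simpa only [hσ] using hrec⟩

theorem IsReducedWord.isYam {σ : List ℕ} (h : IsReducedWord σ)
    (hsorted : (recording (toInts σ)).Pairwise (· ≥ ·)) : IsYam σ := by
  obtain ⟨d, hd, hcount⟩ := exists_desRecording_of_pairwise_ge hsorted
  refine ⟨h, d, h.desWord_eq.trans hd, fun τ e hτ he k ↦ ?_⟩
  rw [h.ckEquiv_iff] at hτ
  rw [(h.of_ck hτ).desWord_eq] at he
  rw [← hcount, (perm_iff_count.2 fun i ↦ (h.count_recording_eq hτ i).symm).countP_eq]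
  exact countP_lt_le_sum_take he k

theorem ReducedWordFor.exists_ck_pairwise_ge {τ : List ℕ} {w : Equiv.Perm ℕ}
    (h : ReducedWordFor τ w) : ∃ σ, ReducedWordFor σ w ∧ CK (toInts τ) (toInts σ) ∧
      (recording (toInts σ)).Pairwise (· ≥ ·) := by
  set s := (recording (toInts τ)).insertionSort (· ≥ ·)
  have hs : s.Pairwise (· ≥ ·) := pairwise_insertionSort _ _
  obtain ⟨σ, ⟨hσ, hck⟩, hrec⟩ := h.bijOn_recording.surjOn
    ⟨keyLattice_of_pairwise_ge hs, fun i ↦ (perm_insertionSort (· ≥ ·) _).count_eq i⟩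
  exact ⟨σ, hσ, hck, by simpa only [hrec] using hs⟩

theorem IsYam.exists_desWord_eq {ρ : List ℕ} (h : IsYam ρ) : ∃ d, desWord ρ = some d ∧
    (recording (toInts ρ)).Pairwise (· ≥ ·) ∧
      ∀ i, count i (recording (toInts ρ)) = d.getD i 0 := by
  obtain ⟨hρ, d, hd, hmin⟩ := h
  obtain ⟨σ, hσ, hck, hsorted⟩ := ReducedWordFor.exists_ck_pairwise_ge ⟨hρ, rfl⟩
  obtain ⟨e, he, hcount⟩ := exists_desRecording_of_pairwise_ge hsorted
  have hdom := hmin σ e (hρ.ckEquiv_iff.2 hck) (hσ.1.desWord_eq.trans he)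
  have hd' : desRecording (recording (toInts ρ)) = some d := hρ.desWord_eq.symm.trans hd
  have heq (k : ℕ) : countP (· < k) (recording (toInts ρ)) = (d.take k).sum := by
    refine (countP_lt_le_sum_take hd' k).antisymm ?_
    rw [← (perm_iff_count.2 (hρ.count_recording_eq hck)).countP_eq, hcount]
    exact hdom k
  exact ⟨d, hd, pairwise_ge_of_countP_eq hd' heq, count_eq_getD heq⟩

theorem IsYam.eq_of_ck {ρ σ : List ℕ} (hρ : IsYam ρ) (hσ : IsYam σ)
    (hck : CK (toInts ρ) (toInts σ)) : ρ = σ := by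
  obtain ⟨-, -, hsorted, -⟩ := hρ.exists_desWord_eq
  obtain ⟨-, -, hsorted', -⟩ := hσ.exists_desWord_eq
  have hperm := perm_iff_count.2 fun i ↦ (hρ.1.count_recording_eq hck i).symm
  exact toInts_injective (hρ.1.posAdmissible.eq_of_recording_eq hck
    (hperm.eq_of_pairwise (fun _ _ _ _ ↦ ge_antisymm) hsorted hsorted'))

theorem IsYam.finsum_mem_class_eq {ρ : List ℕ} {w : Equiv.Perm ℕ} (h : IsYam ρ)
    (hw : toPerm ρ = w) :
    ∑ᶠ σ ∈ {σ | ReducedWordFor σ w ∧ CK (toInts ρ) (toInts σ)}, FSlideO (desWord σ) =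
      KeyPolyO (desWord ρ) := by
  obtain ⟨d, hd, -, hcount⟩ := h.exists_desWord_eq
  have hrec := ReducedWordFor.bijOn_recording ⟨h.1, hw⟩
  simp only [hcount] at hrec
  rw [hd, KeyPolyO, KeyPoly]
  refine finsum_mem_eq_of_bijOn _ ((bijOn_fill_isSKT d).comp hrec) fun σ hσ ↦ ?_
  rw [Function.comp_apply, FSlideO_desSKT_fill, hσ.1.1.desWord_eq]
  intro r hr
  by_contra hlen
  refine count_eq_zero.1 ?_ hr
  rw [(hrec.mapsTo hσ).2, getD_eq_default _ _ (not_lt.1 hlen)]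

/-! ## Finiteness of the set of reduced words -/

theorem toPerm_cons_apply (a : ℕ) (ρ : List ℕ) (j : ℕ) :
    toPerm (a :: ρ) j = Equiv.swap a (a + 1) (toPerm ρ j) := by
  simp [toPerm]

/-- The increasing bijection from `ℕ` to `ℕ \ {p}`. -/
def skip (p j : ℕ) : ℕ := if j < p then j else j + 1

/-- The word obtained by removing from the wiring diagram of a word the strand starting at `q`:
the crossings of that strand disappear and the letters above it are shifted down. -/
def deleteStrand (q : ℕ) : List ℕ → List ℕ
  | [] => []
  | a :: ρ =>
    if a = toPerm ρ q ∨ a + 1 = toPerm ρ q then deleteStrand q ρ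
    else if a < toPerm ρ q then a :: deleteStrand q ρ else (a - 1) :: deleteStrand q ρ

theorem toPerm_apply_zero {ρ : List ℕ} (h : ∀ i ∈ ρ, 1 ≤ i) : toPerm ρ 0 = 0 := by
  induction ρ with
  | nil => rfl
  | cons a ρ ih =>
    obtain ⟨ha, hρ⟩ := forall_mem_cons.1 h
    rw [toPerm_cons_apply, ih hρ, Equiv.swap_apply_of_ne_of_ne] <;> omega

theorem one_le_toPerm_apply {ρ : List ℕ} (h : ∀ i ∈ ρ, 1 ≤ i) {q : ℕ} (hq : 1 ≤ q) :
    1 ≤ toPerm ρ q := by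
  have hne : toPerm ρ q ≠ toPerm ρ 0 := (toPerm ρ).injective.ne (by omega)
  rw [toPerm_apply_zero h] at hne
  omega

theorem toPerm_skip {ρ : List ℕ} (h : ∀ i ∈ ρ, 1 ≤ i) {q : ℕ} (hq : 1 ≤ q) (j : ℕ) :
    toPerm ρ (skip q j) = skip (toPerm ρ q) (toPerm (deleteStrand q ρ) j) := by
  induction ρ with
  | nil => rfl
  | cons a ρ ih =>
    obtain ⟨ha, hρ⟩ := forall_mem_cons.1 h
    have := one_le_toPerm_apply hρ hq
    rw [toPerm_cons_apply, toPerm_cons_apply, ih hρ, deleteStrand]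
    split_ifs <;> simp only [toPerm_cons_apply, Equiv.swap_apply_def, skip] <;> grind

theorem one_le_of_mem_deleteStrand {ρ : List ℕ} (h : ∀ i ∈ ρ, 1 ≤ i) {q : ℕ} (hq : 1 ≤ q) :
    ∀ i ∈ deleteStrand q ρ, 1 ≤ i := by
  induction ρ with
  | nil => simp [deleteStrand]
  | cons a ρ ih =>
    obtain ⟨ha, hρ⟩ := forall_mem_cons.1 h
    have hpos := one_le_toPerm_apply hρ hq
    rw [deleteStrand]
    split_ifs with hcross hlow
    · exact ih hρ
    · exact forall_mem_cons.2 ⟨ha, ih hρ⟩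
    · exact forall_mem_cons.2 ⟨by omega, ih hρ⟩

theorem length_deleteStrand_le (q : ℕ) (ρ : List ℕ) : (deleteStrand q ρ).length ≤ ρ.length := by
  induction ρ with
  | nil => exact le_rfl
  | cons a ρ ih => grind [deleteStrand]

theorem eq_and_ne_of_length_le_deleteStrand {q : ℕ} {ρ : List ℕ}
    (h : ρ.length ≤ (deleteStrand q ρ).length) : toPerm ρ q = q ∧ ∀ i ∈ ρ, i + 1 ≠ q := by
  induction ρ with
  | nil => exact ⟨rfl, by simp⟩
  | cons a ρ ih =>
    have := length_deleteStrand_le q ρ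
    rw [deleteStrand] at h
    rw [toPerm_cons_apply, Equiv.swap_apply_def]
    grind

theorem toPerm_deleteStrand_eq {ρ : List ℕ} (h : ∀ i ∈ ρ, 1 ≤ i) {m q : ℕ} (hq : 1 ≤ q)
    (hmq : m ≤ q) (hfix : ∀ j, m ≤ j → toPerm ρ j = j) : toPerm (deleteStrand q ρ) = toPerm ρ := by
  ext j
  have hskip := toPerm_skip h hq j
  rw [hfix q hmq] at hskip
  rcases lt_or_ge j q with hj | hj
  · have hlt : toPerm ρ j < q := by
      by_contra hge
      have := (toPerm ρ).injective (hfix (toPerm ρ j) (by omega))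
      omega
    grind [skip]
  · rw [skip, if_neg (by omega), hfix _ (by omega)] at hskip
    rw [hfix j (by omega)]
    grind [skip]

theorem IsReducedWord.lt_of_mem {ρ : List ℕ} (h : IsReducedWord ρ) {m : ℕ}
    (hfix : ∀ j, m ≤ j → toPerm ρ j = j) : ∀ i ∈ ρ, i < m := by
  intro i hi
  by_contra hmi
  have heq := toPerm_deleteStrand_eq h.1 (Nat.le_add_left 1 i) (by omega) hfix
  have hle := h.2 _ (one_le_of_mem_deleteStrand h.1 (Nat.le_add_left 1 i)) heq
  exact (eq_and_ne_of_length_le_deleteStrand hle).2 i hi rfl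

theorem exists_forall_toPerm_apply_eq (ρ : List ℕ) : ∃ m, ∀ j, m ≤ j → toPerm ρ j = j := by
  induction ρ with
  | nil => exact ⟨0, fun _ _ ↦ rfl⟩
  | cons a ρ ih =>
    obtain ⟨m, hm⟩ := ih
    refine ⟨m + a + 2, fun j hj ↦ ?_⟩
    rw [toPerm_cons_apply, hm j (by omega), Equiv.swap_apply_of_ne_of_ne] <;> omega

theorem finite_reducedWordFor (w : Equiv.Perm ℕ) : {ρ : List ℕ | ReducedWordFor ρ w}.Finite := by
  rcases Set.eq_empty_or_nonempty {ρ : List ℕ | ReducedWordFor ρ w} with hempty | ⟨ρ₀, h₀⟩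
  · exact hempty ▸ Set.finite_empty
  obtain ⟨m, hm⟩ := exists_forall_toPerm_apply_eq ρ₀
  refine ((List.finite_length_le (Fin m) ρ₀.length).image (map Fin.val)).subset fun ρ hρ ↦ ?_
  have hperm : toPerm ρ = toPerm ρ₀ := hρ.2.trans h₀.2.symm
  have hlt := hρ.1.lt_of_mem (hperm ▸ hm)
  refine ⟨ρ.pmap (fun i hi ↦ ⟨i, hi⟩) hlt, ?_, by simp [map_pmap]⟩
  simpa using hρ.1.2 _ h₀.1.1 hperm.symm

/-! ## The expansion -/

theorem setOf_reducedWordFor_eq_biUnion (w : Equiv.Perm ℕ) :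
    {ρ | ReducedWordFor ρ w} = ⋃ ρ ∈ {ρ | ReducedWordFor ρ w ∧ IsYam ρ},
      {σ | ReducedWordFor σ w ∧ CK (toInts ρ) (toInts σ)} := by
  ext τ
  simp only [Set.mem_iUnion, Set.mem_ofPred_eq, exists_prop]
  refine ⟨fun hτ ↦ ?_, fun ⟨_, _, hτ, _⟩ ↦ hτ⟩
  obtain ⟨σ, hσ, hck, hsorted⟩ := hτ.exists_ck_pairwise_ge
  exact ⟨σ, ⟨hσ, hσ.1.isYam hsorted⟩, hτ, hck.symm⟩

theorem pairwiseDisjoint_setOf_ck (w : Equiv.Perm ℕ) :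
    {ρ | ReducedWordFor ρ w ∧ IsYam ρ}.PairwiseDisjoint
      fun ρ ↦ {σ | ReducedWordFor σ w ∧ CK (toInts ρ) (toInts σ)} :=
  fun _ hρ _ hρ' hne ↦ Set.disjoint_left.2 fun _ hσ hσ' ↦
    hne (hρ.2.eq_of_ck hρ'.2 (hσ.2.trans hσ'.2.symm))

/-- For any permutation `w`, the Schubert polynomial satisfies
`𝔖_w = Σ_{ρ ∈ YR(w)} κ_{des(ρ)}`, where `YR(w)` is the set of Yamanouchi reduced
words for `w`. -/
theorem schubert_demazure_expansion (w : Equiv.Perm ℕ) :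
    Schubert w =
      ∑ᶠ ρ ∈ {ρ : List ℕ | ReducedWordFor ρ w ∧ IsYam ρ}, KeyPolyO (desWord ρ) := by
  have hfin := finite_reducedWordFor w
  rw [Schubert, setOf_reducedWordFor_eq_biUnion, finsum_mem_biUnion (pairwiseDisjoint_setOf_ck w)
    (hfin.subset fun _ h ↦ h.1) fun _ _ ↦ hfin.subset fun _ h ↦ h.1]
  exact finsum_mem_congr rfl fun ρ hρ ↦ hρ.2.finsum_mem_class_eq hρ.1.2

end EG
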